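/- arXiv:2601.07817 — 2 statements merged into one kernel-verified Lean document; each statement's English description precedes it below -/
import Mathlib

section
/- For every fixed ε > 0 there is a constant C(ε) such that for all nonzero integers a, b, c and all real B ≥ 2, the number ρ(B; a, b, c) of integer solutions (x, y, z) of a x³ + b y³ + c z³ = 0 with gcd(x, y, z) = 1 and max(|x|, |y|, |z|) ≤ B satisfies ρ(B; a, b, c) ≤ C(ε) · B^ε; in particular the bound is uniform in a, b, c. -/
/-!
A solution with `z ≠ 0` gives a point on the elliptic curve `E : Y² + mY = X³`, `m = abc`, whose
`Y / m` is `a x³ / (c z³)`; this determines the solution up to sign. Over `ℚ(ω)`, with `ω` a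
primitive cube root of unity, `E` has the `3`-isogeny `φ = ω² - ω`, and one counts points of height
at most `A` for the height `H` of the function `Y / m`.

Three estimates are needed. Kummer theory embeds `E / φE`, up to boundedly many cosets, into a
Selmer group of rank controlled by the number of primes dividing `m`, so the index of `φᵏE` is
`O(|m|^δ)` for all `δ > 0`. The chord through two points gives `H(P - Q) ≤ C A²³`, and
`H(R)³ ≤ C H(φR)`; in both, `C` does not depend on `m`, because `m` cancels from the formulas in
the coordinate `Y / m`. Hence points in one coset of `φᵏE` differ from a fixed one among them by
some `φᵏR` with `H(R)` at most a constant times `A ^ (23 / 3ᵏ)`, and there are few such `R`.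

This bounds the count by `C (|abc| B)^ε`. If there are two independent solutions, the coefficients
are proportional to the cross product of their vectors of cubes, so they may be taken to be `O(B⁶)`.
-/

namespace DiagonalCubic

open WeierstrassCurve WeierstrassCurve.Affine Height NumberField IsDedekindDomain HeightOneSpectrum

section CubeRoot

variable {F : Type*} [Field F] {ω : F}

lemma sq_add_self_add_one (hω : IsPrimitiveRoot ω 3) : ω ^ 2 + ω + 1 = 0 := by
  have h := hω.geom_sum_eq_zero (by norm_num)
  simp only [Finset.sum_range_succ, Finset.sum_range_zero] at h
  linear_combination h

lemma sub_sq_sq (hω : IsPrimitiveRoot ω 3) : (ω - ω ^ 2) ^ 2 = -3 := by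
  linear_combination (ω ^ 2 - 3 * ω + 3) * sq_add_self_add_one hω

lemma sub_sq_ne_zero [NeZero (3 : F)] (hω : IsPrimitiveRoot ω 3) : ω - ω ^ 2 ≠ 0 := fun h ↦
  neg_ne_zero.2 (NeZero.ne (3 : F)) (by rw [← sub_sq_sq hω, h]; ring)

end CubeRoot

section Curve

variable {F : Type*} [Field F]

/-- The elliptic curve `Y² + mY = X³`, which has `j`-invariant `0`. For `m = abc` the plane
cubic `aX³ + bY³ + cZ³ = 0` maps to it by `(x : y : z) ↦ (-abxy / z², a²bx³ / z³)`. -/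
def curve (m : F) : WeierstrassCurve.Affine F :=
  { a₁ := 0, a₂ := 0, a₃ := m, a₄ := 0, a₆ := 0 }

instance (m : F) [NeZero m] [NeZero (3 : F)] : (curve m).IsElliptic where
  isUnit := by
    have hΔ : (curve m).Δ = -(3 ^ 3 * m ^ 4) := by
      simp only [curve, WeierstrassCurve.Δ, WeierstrassCurve.b₂, WeierstrassCurve.b₄,
        WeierstrassCurve.b₆, WeierstrassCurve.b₈]
      ring
    rw [hΔ]
    exact (neg_ne_zero.2 (mul_ne_zero (pow_ne_zero _ (NeZero.ne _))
      (pow_ne_zero _ (NeZero.ne _)))).isUnit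

variable {m x y x₁ y₁ x₂ y₂ : F}

lemma nonsingular_iff [NeZero m] [NeZero (3 : F)] :
    (curve m).Nonsingular x y ↔ y ^ 2 + m * y = x ^ 3 := by
  rw [← equation_iff_nonsingular, equation_iff]
  simp [curve]

lemma equation_of_nonsingular (h : (curve m).Nonsingular x y) : y ^ 2 + m * y = x ^ 3 := by
  simpa [curve] using (equation_iff x y).1 h.1

lemma y_ne_zero (h : (curve m).Nonsingular x y) (hx : x ≠ 0) : y ≠ 0 := by
  rintro rfl
  exact pow_ne_zero 3 hx (by rw [← equation_of_nonsingular h]; ring)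

lemma y_add_ne_zero (h : (curve m).Nonsingular x y) (hx : x ≠ 0) : y + m ≠ 0 := fun h0 ↦
  pow_ne_zero 3 hx (by rw [← equation_of_nonsingular h]; linear_combination y * h0)

lemma negY_eq : (curve m).negY x y = -m - y := by
  simp only [curve, negY]
  ring

lemma neg_some_eq (h : (curve m).Nonsingular x y) :
    ∃ h', -Point.some x y h = Point.some (W' := curve m) x (-m - y) h' := by
  refine ⟨negY_eq (m := m) ▸ (nonsingular_neg _ _).2 h, ?_⟩
  simp only [Point.neg_some, negY_eq]

lemma nonsingular_mul_left [NeZero m] [NeZero (3 : F)] {ω : F}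
    (hω : IsPrimitiveRoot ω 3) (h : (curve m).Nonsingular x y) :
    (curve m).Nonsingular (ω * x) y := by
  rw [nonsingular_iff] at h ⊢
  rw [h, mul_pow, hω.pow_eq_one, one_mul]

lemma line_mul_mul {l n : F} (h₁ : (curve m).Nonsingular x₁ y₁)
    (h₂ : (curve m).Nonsingular x₂ y₂) (hx : x₁ ≠ x₂) (hl₁ : y₁ = l * x₁ + n)
    (hl₂ : y₂ = l * x₂ + n) :
    y₁ * y₂ * (l * (l ^ 2 - x₁ - x₂) + n) = n ^ 3 ∧
      (y₁ + m) * (y₂ + m) * (l * (l ^ 2 - x₁ - x₂) + n + m) = (n + m) ^ 3 ∧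
      x₁ * x₂ * (l ^ 2 - x₁ - x₂) = n * (n + m) := by
  have e₁ := equation_of_nonsingular h₁
  have e₂ := equation_of_nonsingular h₂
  subst hl₁ hl₂
  have esymm_two : x₁ * x₂ + (x₁ + x₂) * (l ^ 2 - x₁ - x₂) = -(2 * l * n + m * l) :=
    mul_left_cancel₀ (sub_ne_zero.2 hx) (by linear_combination e₁ - e₂)
  have esymm_three : x₁ * x₂ * (l ^ 2 - x₁ - x₂) = n * (n + m) := by
    linear_combination x₁ * esymm_two - e₁
  refine ⟨?_, ?_, esymm_three⟩
  · linear_combination l ^ 3 * esymm_three + l ^ 2 * n * esymm_two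
  · linear_combination l ^ 3 * esymm_three + l ^ 2 * (n + m) * esymm_two

variable [DecidableEq F]

lemma neg_add_eq_some_of_line {l n : F} (h₁ : (curve m).Nonsingular x₁ y₁)
    (h₂ : (curve m).Nonsingular x₂ y₂) (hx : x₁ ≠ x₂) (hl₁ : y₁ = l * x₁ + n)
    (hl₂ : y₂ = l * x₂ + n) :
    ∃ h, -(Point.some x₁ y₁ h₁ + Point.some x₂ y₂ h₂) =
      Point.some (W' := curve m) (l ^ 2 - x₁ - x₂) (l * (l ^ 2 - x₁ - x₂) + n) h := by
  have hslope : (curve m).slope x₁ x₂ y₁ y₂ = l := by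
    rw [slope_of_X_ne hx, div_eq_iff (sub_ne_zero.2 hx), hl₁, hl₂]
    ring
  have hX : (curve m).addX x₁ x₂ l = l ^ 2 - x₁ - x₂ := by
    simp only [addX, curve]
    ring
  have hY : (curve m).negY ((curve m).addX x₁ x₂ l) ((curve m).addY x₁ x₂ y₁ l) =
      l * (l ^ 2 - x₁ - x₂) + n := by
    rw [addY, negAddY, hX, negY_eq, negY_eq, hl₁]
    ring
  have hadd := nonsingular_add h₁ h₂ fun h ↦ hx h.1
  rw [hslope] at hadd
  refine ⟨by rw [← hY, ← hX]; exact (nonsingular_neg _ _).2 hadd, ?_⟩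
  simp only [Point.add_of_X_ne hx, Point.neg_some, Point.some.injEq, hslope]
  exact ⟨hX, hY⟩

end Curve

section Endomorphism

variable {F : Type*} [Field F] [DecidableEq F] {m x y x₁ y₁ x₂ y₂ ω : F}

lemma slope_mul_left (hω : IsPrimitiveRoot ω 3)
    (h : ¬(x₁ = x₂ ∧ y₁ = (curve m).negY x₂ y₂)) :
    (curve m).slope (ω * x₁) (ω * x₂) y₁ y₂ = ω ^ 2 * (curve m).slope x₁ x₂ y₁ y₂ := by
  have hω₀ : ω ≠ 0 := hω.ne_zero (by norm_num)
  rw [negY_eq] at h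
  by_cases hx : x₁ = x₂
  · have hy : y₁ ≠ -m - y₂ := fun hy ↦ h ⟨hx, hy⟩
    rw [slope_of_Y_ne hx (by rwa [negY_eq]), slope_of_Y_ne (by rw [hx]) (by rwa [negY_eq]),
      negY_eq, negY_eq]
    simp only [curve]
    ring
  · rw [slope_of_X_ne hx, slope_of_X_ne fun h ↦ hx (mul_left_cancel₀ hω₀ h), ← mul_sub,
      div_eq_iff (mul_ne_zero hω₀ (sub_ne_zero.2 hx))]
    have hx' := sub_ne_zero.2 hx
    field_simp
    linear_combination (y₂ - y₁) * hω.pow_eq_one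

variable [NeZero m] [NeZero (3 : F)]

/-- The automorphism `(X, Y) ↦ (ωX, Y)` of `Y² + mY = X³` attached to a primitive cube root of
unity `ω`, on points. -/
def rotate (hω : IsPrimitiveRoot ω 3) : (curve m).Point → (curve m).Point
  | .zero => .zero
  | .some x y h => .some (ω * x) y (nonsingular_mul_left hω h)

lemma rotate_add (hω : IsPrimitiveRoot ω 3) (P Q : (curve m).Point) :
    rotate hω (P + Q) = rotate hω P + rotate hω Q := by
  rcases P with _ | ⟨x₁, y₁, h₁⟩
  · exact (congrArg _ (zero_add Q)).trans (zero_add _).symm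
  rcases Q with _ | ⟨x₂, y₂, h₂⟩
  · exact (congrArg _ (add_zero (Point.some x₁ y₁ h₁))).trans (add_zero _).symm
  by_cases hxy : x₁ = x₂ ∧ y₁ = (curve m).negY x₂ y₂
  · rw [Point.add_of_Y_eq hxy.1 hxy.2]
    exact (Point.add_of_Y_eq (by rw [hxy.1]) (by rw [hxy.2, negY_eq, negY_eq])).symm
  have hxy' : ¬(ω * x₁ = ω * x₂ ∧ y₁ = (curve m).negY (ω * x₂) y₂) := fun h ↦
    hxy ⟨mul_left_cancel₀ (hω.ne_zero (by norm_num)) h.1, by rw [h.2, negY_eq, negY_eq]⟩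
  rw [Point.add_some hxy]
  refine Eq.trans ?_ (Point.add_some (h₁ := nonsingular_mul_left hω h₁)
    (h₂ := nonsingular_mul_left hω h₂) hxy').symm
  simp only [rotate, Point.some.injEq, slope_mul_left hω hxy, addY, negAddY, negY_eq]
  generalize (curve m).slope x₁ x₂ y₁ y₂ = s
  have hX : (curve m).addX (ω * x₁) (ω * x₂) (ω ^ 2 * s) = ω * (curve m).addX x₁ x₂ s := by
    simp only [addX, curve]
    linear_combination ω * s ^ 2 * hω.pow_eq_one
  rw [hX]
  exact ⟨rfl, by linear_combination s * ((curve m).addX x₁ x₂ s - x₁) * hω.pow_eq_one⟩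

/-- The endomorphism `[ω²] - [ω]` of `Y² + mY = X³`, an isogeny of degree `3`. -/
def phi (hω : IsPrimitiveRoot ω 3) : AddMonoid.End (curve m).Point :=
  let ρ : (curve m).Point →+ (curve m).Point := AddMonoidHom.mk' (rotate hω) (rotate_add hω)
  ρ.comp ρ - ρ

lemma phi_apply (hω : IsPrimitiveRoot ω 3) (P : (curve m).Point) :
    phi hω P = rotate hω (rotate hω P) - rotate hω P := rfl

-- The line through `ωP` and `-ω²P` has slope `(2y + m)/((ω - ω²)x)` and `Y`-intercept
-- `(y - ωm)/(ω - ω²)`.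
lemma phi_some (hω : IsPrimitiveRoot ω 3) (h : (curve m).Nonsingular x y) (hx : x ≠ 0) :
    ∃ h', phi hω (.some x y h) = .some (-(x ^ 3 + m ^ 2) / (3 * x ^ 2))
      ((y - ω * m) ^ 3 / (3 * (ω - ω ^ 2) * x ^ 3)) h' := by
  have h3 : (3 : F) ≠ 0 := NeZero.ne 3
  have hω' := sq_add_self_add_one hω
  have hθ := sub_sq_sq hω
  have hθ₀ := sub_sq_ne_zero hω
  have heq := equation_of_nonsingular h
  have h₁ := nonsingular_mul_left hω h
  obtain ⟨h₂, hneg⟩ := neg_some_eq (nonsingular_mul_left hω h₁)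
  have hphi : phi hω (.some x y h) = -(Point.some _ _ h₁ + Point.some _ _ h₂) := by
    rw [← hneg, phi_apply]
    simp only [rotate]
    abel
  have hne : ω * x ≠ ω * (ω * x) := fun h0 ↦
    mul_ne_zero hθ₀ hx (by linear_combination h0)
  obtain ⟨l, hl⟩ : ∃ l, l * ((ω - ω ^ 2) * x) = 2 * y + m :=
    ⟨_, div_mul_cancel₀ _ (mul_ne_zero hθ₀ hx)⟩
  have hl₁ : y = l * (ω * x) + (y - l * (ω * x)) := by ring
  have hl₂ : -m - y = l * (ω * (ω * x)) + (y - l * (ω * x)) := by linear_combination hl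
  obtain ⟨h₃, hsum⟩ := neg_add_eq_some_of_line h₁ h₂ hne hl₁ hl₂
  have hprod := (line_mul_mul h₁ h₂ hne hl₁ hl₂).1
  have hn : (ω - ω ^ 2) * (y - l * (ω * x)) = y - ω * m := by
    linear_combination (-ω) * hl - y * hω'
  have hX : l ^ 2 - ω * x - ω * (ω * x) = -(x ^ 3 + m ^ 2) / (3 * x ^ 2) := by
    rw [eq_div_iff (mul_ne_zero h3 (pow_ne_zero 2 hx))]
    linear_combination -(l * ((ω - ω ^ 2) * x) + 2 * y + m) * hl + l ^ 2 * x ^ 2 * hθ - 4 * heq -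
      3 * x ^ 3 * hω'
  have hY : l * (l ^ 2 - ω * x - ω * (ω * x)) + (y - l * (ω * x)) =
      (y - ω * m) ^ 3 / (3 * (ω - ω ^ 2) * x ^ 3) := by
    rw [eq_div_iff (mul_ne_zero (mul_ne_zero h3 hθ₀) (pow_ne_zero 3 hx)), ← hn, mul_pow, ← hprod]
    set Y := l * (l ^ 2 - ω * x - ω * (ω * x)) + (y - l * (ω * x))
    linear_combination (-(y * (-m - y) * Y * (ω - ω ^ 2))) * hθ - 3 * (ω - ω ^ 2) * Y * heq
  refine ⟨by rwa [← hX, ← hY], ?_⟩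
  rw [hphi, hsum]
  simp only [Point.some.injEq]
  exact ⟨hX, hY⟩

lemma phi_some_zero (hω : IsPrimitiveRoot ω 3) (h : (curve m).Nonsingular 0 y) :
    phi hω (.some 0 y h) = 0 := by
  simp only [phi_apply, rotate, mul_zero, sub_self]

lemma mem_phi_range_of_eq_cube (hω : IsPrimitiveRoot ω 3) {r s : F} (h : (curve m).Nonsingular x y)
    (hs : y = s ^ 3) (hr : y + m = r ^ 3) (hx : x = r * s) :
    Point.some x y h ∈ (phi hω).range := by
  have hθ := sub_sq_sq hω
  have hden : 3 * (ω - ω ^ 2) ≠ 0 := mul_ne_zero (NeZero.ne 3) (sub_sq_ne_zero hω)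
  obtain ⟨q, hq⟩ : ∃ q, q = r ^ 2 + r * s + s ^ 2 := ⟨_, rfl⟩
  have hm : m = (r - s) * q := by linear_combination hr - hs + (s - r) * hq
  have hq₀ : -q ≠ 0 := fun h0 ↦ NeZero.ne m (by rw [hm, ← neg_neg q, h0]; ring)
  have hR : (curve m).Nonsingular (-q) (q * (ω * r - ω ^ 2 * s)) := by
    rw [nonsingular_iff]
    have : (ω * r - ω ^ 2 * s) ^ 2 + (r - s) * (ω * r - ω ^ 2 * s) = -q := by
      rw [hq]
      linear_combination (r ^ 2 - 2 * ω * r * s + ω ^ 2 * s ^ 2 - ω * s ^ 2 + s ^ 2 + r * s) *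
        sq_add_self_add_one hω
    linear_combination q ^ 2 * this + (q * (ω * r - ω ^ 2 * s)) * hm
  obtain ⟨_, hphi⟩ := phi_some hω hR hq₀
  refine ⟨_, hphi.trans ?_⟩
  simp only [Point.some.injEq]
  constructor
  · rw [div_eq_iff (mul_ne_zero (NeZero.ne 3) (pow_ne_zero 2 hq₀)), hx, hm, hq]
    ring
  · rw [div_eq_iff (mul_ne_zero hden (pow_ne_zero 3 hq₀)), hs, hm]
    linear_combination (q ^ 3 * s ^ 3 * (ω - ω ^ 2)) * hθ

lemma add_mem_phi_range_of_eq_mul_cube (hω : IsPrimitiveRoot ω 3) {t : F}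
    (h₁ : (curve m).Nonsingular x₁ y₁) (h₂ : (curve m).Nonsingular x₂ y₂) (hx₁ : x₁ ≠ 0)
    (hx₂ : x₂ ≠ 0) (hx : x₁ ≠ x₂) (ht : y₁ = t ^ 3 * (-m - y₂)) :
    Point.some x₁ y₁ h₁ + Point.some x₂ y₂ h₂ ∈ (phi hω).range := by
  have e₁ := equation_of_nonsingular h₁
  have e₂ := equation_of_nonsingular h₂
  have ht₀ : t ≠ 0 := by
    rintro rfl
    exact y_ne_zero h₁ hx₁ (by rw [ht]; ring)
  obtain ⟨l, hl⟩ : ∃ l, l * (x₁ - x₂) = y₁ - y₂ := ⟨_, div_mul_cancel₀ _ (sub_ne_zero.2 hx)⟩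
  obtain ⟨n, hn⟩ : ∃ n, y₁ = l * x₁ + n := ⟨y₁ - l * x₁, by ring⟩
  have hn₂ : y₂ = l * x₂ + n := by linear_combination hn + hl
  obtain ⟨h₃, hsum⟩ := neg_add_eq_some_of_line h₁ h₂ hx hn hn₂
  obtain ⟨hy, hy', hx₃⟩ := line_mul_mul h₁ h₂ hx hn hn₂
  rw [← neg_mem_iff, hsum]
  generalize l ^ 2 - x₁ - x₂ = x₃ at *
  generalize l * x₃ + n = y₃ at *
  have hs : y₃ = (-n / (t * x₂)) ^ 3 := by
    rw [div_pow, eq_div_iff (pow_ne_zero 3 (mul_ne_zero ht₀ hx₂))]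
    linear_combination -hy + y₂ * y₃ * ht - t ^ 3 * y₃ * e₂
  have hr : y₃ + m = (-(n + m) * t / x₁) ^ 3 := by
    rw [div_pow, eq_div_iff (pow_ne_zero 3 hx₁)]
    linear_combination -(y₃ + m) * e₁ + (y₁ + m) * (y₃ + m) * ht - t ^ 3 * hy'
  refine mem_phi_range_of_eq_cube hω h₃ hs hr ?_
  field_simp
  linear_combination hx₃

lemma mem_phi_range_of_eq_mul_cube (hω : IsPrimitiveRoot ω 3) {t : F}
    (h : (curve m).Nonsingular x y) (hx : x ≠ 0) (ht : y = t ^ 3 * (-m - y)) :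
    Point.some x y h ∈ (phi hω).range := by
  have e := equation_of_nonsingular h
  have hy := y_ne_zero h hx
  have ht₀ : t ≠ 0 := by
    rintro rfl
    exact hy (by rw [ht]; ring)
  have hs : y = (-y / (t * x)) ^ 3 := by
    rw [div_pow, eq_div_iff (pow_ne_zero 3 (mul_ne_zero ht₀ hx))]
    linear_combination y ^ 2 * ht - t ^ 3 * y * e
  have hr : y + m = (-(t * x ^ 2) / y) ^ 3 := by
    rw [div_pow, eq_div_iff (pow_ne_zero 3 hy)]
    linear_combination (y * (y + m)) * y * ht - t ^ 3 * (y ^ 2 + m * y + x ^ 3) * e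
  refine mem_phi_range_of_eq_cube hω h hs hr ?_
  field_simp

-- Kummer theory for `φ`: on the points with `x ≠ 0`, the map `y ↦ y (Fˣ)³` separates the cosets
-- of the image of `φ`.
lemma sub_mem_phi_range_of_eq_mul_cube (hω : IsPrimitiveRoot ω 3) {t : F}
    (h₁ : (curve m).Nonsingular x₁ y₁) (h₂ : (curve m).Nonsingular x₂ y₂) (hx₁ : x₁ ≠ 0)
    (hx₂ : x₂ ≠ 0) (ht : y₁ = t ^ 3 * y₂) :
    Point.some x₁ y₁ h₁ - Point.some x₂ y₂ h₂ ∈ (phi hω).range := by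
  obtain ⟨h₂', hneg⟩ := neg_some_eq h₂
  have ht' : y₁ = t ^ 3 * (-m - (-m - y₂)) := by rw [ht]; ring
  rw [sub_eq_add_neg, hneg]
  by_cases hx : x₁ = x₂
  · subst hx
    have hy : (y₁ - y₂) * (y₁ - (-m - y₂)) = 0 := by
      linear_combination equation_of_nonsingular h₁ - equation_of_nonsingular h₂
    rcases mul_eq_zero.1 hy with hy | hy
    · obtain rfl := sub_eq_zero.1 hy
      rw [← hneg, add_neg_cancel]
      exact zero_mem _
    · obtain rfl := (sub_eq_zero.1 hy).symm
      have := mem_phi_range_of_eq_mul_cube hω h₁ hx₁ ht'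
      exact add_mem this this
  · exact add_mem_phi_range_of_eq_mul_cube hω h₁ h₂' hx₁ hx₂ hx ht'

end Endomorphism

section Index

variable {G : Type*} [AddCommGroup G]

lemma index_range_pow_dvd (φ : AddMonoid.End G) (k : ℕ) :
    (AddMonoidHom.range (φ ^ k)).index ∣ (AddMonoidHom.range φ).index ^ k := by
  induction k with
  | zero => exact (AddSubgroup.index_eq_one.2 (AddMonoidHom.range_eq_top.2 fun x ↦ ⟨x, rfl⟩)).dvd
  | succ k ih =>
    have hmap : AddMonoidHom.range (φ ^ (k + 1)) =
        (AddMonoidHom.range (φ ^ k)).map (φ : G →+ G) := by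
      rw [pow_succ']
      exact AddMonoidHom.range_comp φ (φ ^ k)
    have hindex := (AddMonoidHom.range (φ ^ k)).index_map (φ : G →+ G)
    rw [hmap, hindex, pow_succ]
    exact mul_dvd_mul_right ((AddSubgroup.index_dvd_of_le le_sup_left).trans ih) _

lemma index_le_of_sub_mem {C : Type*} [Finite C] (H : AddSubgroup G) {T : Set G} (hT : T.Finite)
    (κ : G → C) (hκ : ∀ P ∉ T, ∀ Q ∉ T, κ P = κ Q → P - Q ∈ H) :
    H.FiniteIndex ∧ H.index ≤ T.ncard + Nat.card C := by
  classical
  have := hT.to_subtype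
  let f : T ⊕ C → G ⧸ H := Sum.elim (fun P ↦ (P : G)) fun c ↦
    if h : ∃ P ∉ T, κ P = c then (h.choose : G) else 0
  have hf : Function.Surjective f := by
    intro q
    obtain ⟨P, rfl⟩ := QuotientAddGroup.mk_surjective q
    by_cases hP : P ∈ T
    · exact ⟨.inl ⟨P, hP⟩, rfl⟩
    · have h : ∃ Q ∉ T, κ Q = κ P := ⟨P, hP, rfl⟩
      refine ⟨.inr (κ P), ?_⟩
      simp only [f, Sum.elim_inr, dif_pos h]
      rw [QuotientAddGroup.eq, neg_add_eq_sub]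
      exact hκ P hP _ h.choose_spec.1 h.choose_spec.2.symm
  have := Finite.of_surjective f hf
  refine ⟨AddSubgroup.finiteIndex_of_finite_quotient, ?_⟩
  rw [AddSubgroup.index_eq_card, ← Nat.card_coe_set_eq, ← Nat.card_sum]
  exact Nat.card_le_card_of_surjective f hf

lemma card_le_index_mul (H : AddSubgroup G) [H.FiniteIndex] (S : Finset G) {T : Set G}
    (hT : T.Finite)
    (h : ∀ P ∈ S, ∀ Q ∈ S, P - Q ∈ H → P ≠ Q → P ≠ -Q → P - Q ∈ T) :
    S.card ≤ H.index * (2 + T.ncard) := by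
  classical
  have hfiber : ∀ q ∈ S.image ((↑) : G → G ⧸ H),
      (S.filter fun P : G ↦ (P : G ⧸ H) = q).card ≤ 2 + T.ncard := by
    intro q hq
    obtain ⟨Q, hQ, rfl⟩ := Finset.mem_image.1 hq
    calc (S.filter fun P : G ↦ (P : G ⧸ H) = Q).card
        ≤ ({Q, -Q} ∪ hT.toFinset.image (· + Q)).card := by
          refine Finset.card_le_card fun P hP ↦ ?_
          obtain ⟨hP, hPQ⟩ := Finset.mem_filter.1 hP
          have hsub : P - Q ∈ H := by
            rw [← neg_add_eq_sub, ← QuotientAddGroup.eq, hPQ]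
          simp only [Finset.mem_union, Finset.mem_insert, Finset.mem_singleton, Finset.mem_image,
            Set.Finite.mem_toFinset]
          by_cases h₁ : P = Q
          · exact .inl (.inl h₁)
          by_cases h₂ : P = -Q
          · exact .inl (.inr h₂)
          exact .inr ⟨P - Q, h P hP Q hQ hsub h₁ h₂, sub_add_cancel P Q⟩
      _ ≤ 2 + T.ncard := by
          refine (Finset.card_union_le _ _).trans (Nat.add_le_add Finset.card_le_two ?_)
          rw [Set.ncard_eq_toFinset_card T hT]
          exact Finset.card_image_le
  have := H.fintypeQuotientOfFiniteIndex
  calc S.card ≤ (2 + T.ncard) * (S.image ((↑) : G → G ⧸ H)).card :=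
        Finset.card_le_mul_card_image S _ hfiber
    _ ≤ (2 + T.ncard) * H.index := by
        rw [AddSubgroup.index_eq_card, Nat.card_eq_fintype_card]
        exact Nat.mul_le_mul_left _ (Finset.card_le_univ _)
    _ = H.index * (2 + T.ncard) := mul_comm _ _

end Index

section Selmer

variable {R : Type*} [CommRing R] [IsDedekindDomain R] {K : Type*} [Field K] [Algebra R K]
  [IsFractionRing R K]

lemma valuation_eq_exp_toAdd (v : HeightOneSpectrum R) (x : Kˣ) :
    v.valuation K (x : K) = WithZero.exp (v.valuationOfNeZero x).toAdd :=
  (v.valuationOfNeZero_eq x).symm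

lemma valuationOfNeZeroMod_eq_one_iff (v : HeightOneSpectrum R) (n : ℕ) (x : Kˣ) :
    v.valuationOfNeZeroMod n (QuotientGroup.mk x) = 1 ↔
      (n : ℤ) ∣ (v.valuationOfNeZero x).toAdd := by
  rw [← Int.mem_zmultiples_iff, ← QuotientAddGroup.eq_zero_iff,
    ← (Int.quotientZMultiplesNatEquivZMod n).map_eq_zero_iff]
  rfl

lemma exists_eq_unit_mul_pow_of_integral [IsPrincipalIdealRing R] {n : ℕ} {a : R} (x : Kˣ)
    (hxa : (x : K) = algebraMap R K a)
    (h : ∀ v : HeightOneSpectrum R, (n : ℤ) ∣ (v.valuationOfNeZero x).toAdd) :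
    ∃ (u : Rˣ) (d : R), a = u * d ^ n := by
  classical
  have ha : a ≠ 0 := by
    rintro rfl
    exact x.ne_zero (hxa.trans (map_zero _))
  have hspan : Associates.mk (Ideal.span {a}) ≠ 0 := by simpa using ha
  obtain ⟨J, hJ⟩ : ∃ J, Associates.mk (Ideal.span {a}) = J ^ n := by
    refine Associates.is_pow_of_dvd_count hspan fun p hp ↦ ?_
    obtain ⟨I, rfl⟩ := Associates.mk_surjective p
    have hI : Prime I := (Associates.irreducible_mk.1 hp).prime
    let v : HeightOneSpectrum R := ⟨I, Ideal.isPrime_of_prime hI, hI.ne_zero⟩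
    have hcount := (valuation_eq_exp_toAdd v x).symm
    rw [hxa, valuation_of_algebraMap, v.intValuation_if_neg ha] at hcount
    have hdvd := h v
    rw [WithZero.exp_injective hcount, dvd_neg] at hdvd
    exact Int.natCast_dvd_natCast.1 hdvd
  obtain ⟨J, rfl⟩ := Associates.mk_surjective J
  obtain ⟨d, rfl⟩ := (IsPrincipalIdealRing.principal J).principal
  rw [← Associates.mk_pow, Associates.mk_eq_mk_iff_associated, associated_iff_eq,
    Ideal.submodule_span_eq, Ideal.span_singleton_pow, Ideal.span_singleton_eq_span_singleton] at hJ
  obtain ⟨u, hu⟩ := hJ.symm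
  exact ⟨u, d, by rw [← hu, mul_comm]⟩

lemma exists_eq_unit_mul_pow [IsPrincipalIdealRing R] {n : ℕ} [NeZero n] (x : Kˣ)
    (h : ∀ v : HeightOneSpectrum R, (n : ℤ) ∣ (v.valuationOfNeZero x).toAdd) :
    ∃ (u : Rˣ) (y : Kˣ), x = Units.map (algebraMap R K).toMonoidHom u * y ^ n := by
  obtain ⟨a, b, hb, hab⟩ := IsFractionRing.div_surjective (A := R) (x : K)
  have hbK : algebraMap R K b ≠ 0 := IsFractionRing.to_map_ne_zero_of_mem_nonZeroDivisors hb
  obtain ⟨k, hk⟩ := Nat.exists_eq_succ_of_ne_zero (NeZero.ne n)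
  have hint : ((x * Units.mk0 _ hbK ^ n : Kˣ) : K) = algebraMap R K (a * b ^ k) := by
    rw [Units.val_mul, ← hab, Units.val_pow_eq_pow_val, Units.val_mk0, map_mul, map_pow, hk,
      pow_succ]
    field_simp
  obtain ⟨u, d, hd⟩ := exists_eq_unit_mul_pow_of_integral _ hint fun v ↦ by
    simp only [map_mul, map_pow, toAdd_mul, toAdd_pow]
    exact dvd_add (h v) (dvd_mul_right _ _)
  have hx : (x : K) = algebraMap R K u * (algebraMap R K d / algebraMap R K b) ^ n := by
    rw [hd, Units.val_mul, Units.val_pow_eq_pow_val, Units.val_mk0, map_mul, map_pow] at hint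
    rw [div_pow, ← mul_div_assoc, ← hint, mul_div_cancel_right₀ _ (pow_ne_zero n hbK)]
  have hy : algebraMap R K d / algebraMap R K b ≠ 0 := fun h0 ↦
    x.ne_zero (by rw [hx, h0, zero_pow (NeZero.ne n), mul_zero])
  exact ⟨u, Units.mk0 _ hy, Units.ext hx⟩

lemma fromUnit_surjective [IsPrincipalIdealRing R] {n : ℕ} [NeZero n] :
    Function.Surjective (selmerGroup.fromUnit (R := R) (K := K) (n := n)) := by
  rintro ⟨x, hx⟩
  obtain ⟨x, rfl⟩ := QuotientGroup.mk_surjective x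
  obtain ⟨u, y, rfl⟩ := exists_eq_unit_mul_pow x fun v ↦
    (valuationOfNeZeroMod_eq_one_iff v n x).1 (hx v (Set.notMem_empty v))
  refine ⟨u, Subtype.ext (QuotientGroup.eq.2 ⟨y, ?_⟩)⟩
  simp

lemma finite_and_card_selmerGroup_le [IsPrincipalIdealRing R] [Finite Rˣ] {n : ℕ} [NeZero n]
    {S : Set (HeightOneSpectrum R)} (hS : S.Finite) :
    Finite (selmerGroup (K := K) (S := S) (n := n)) ∧
      Nat.card (selmerGroup (K := K) (S := S) (n := n)) ≤ Nat.card Rˣ * n ^ S.ncard := by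
  have := hS.to_subtype
  let val := selmerGroup.valuation (R := R) (K := K) (S := S) (n := n)
  let e : val.ker ≃ selmerGroup (R := R) (K := K) (S := ∅) (n := n) :=
    (Equiv.subtypeEquivRight fun x ↦ by rw [selmerGroup.valuation_ker_eq]).trans
      (Subgroup.subgroupOfEquivOfLe (selmerGroup.monotone (Set.empty_subset S))).toEquiv
  have hfin : Finite val.ker :=
    have := Finite.of_surjective _ (fromUnit_surjective (R := R) (K := K) (n := n))
    Finite.of_equiv _ e.symm
  have hker : Nat.card val.ker ≤ Nat.card Rˣ := by
    rw [Nat.card_congr e]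
    exact Nat.card_le_card_of_surjective _ fromUnit_surjective
  have hindex : val.ker.index ≤ n ^ S.ncard := by
    have : Nat.card (S → Multiplicative (ZMod n)) = n ^ S.ncard := by
      rw [Nat.card_fun, Nat.card_coe_set_eq, Nat.card_congr Multiplicative.toAdd, Nat.card_zmod]
    rw [Subgroup.index_ker, ← this]
    exact Nat.card_le_card_of_injective _ Subtype.val_injective
  have hcard : Nat.card (selmerGroup (R := R) (K := K) (S := S) (n := n)) =
      Nat.card val.ker * val.ker.index := (val.ker.card_mul_index).symm
  have hindex₀ : val.ker.index ≠ 0 := by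
    rw [Subgroup.index_ker]
    exact Nat.card_pos.ne'
  refine ⟨Nat.finite_of_card_ne_zero ?_, hcard ▸ Nat.mul_le_mul hker hindex⟩
  rw [hcard]
  exact mul_ne_zero Nat.card_pos.ne' hindex₀

end Selmer

section Kernel

variable {F : Type*} [Field F] [DecidableEq F] {m ω : F} [NeZero m] [NeZero (3 : F)]

lemma eq_some_of_notMem_ker_phi (hω : IsPrimitiveRoot ω 3) {P : (curve m).Point}
    (hP : P ∉ (phi hω).ker) : ∃ x y h, x ≠ 0 ∧ P = Point.some (W' := curve m) x y h := by
  rcases P with _ | ⟨x, y, h⟩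
  · exact absurd (zero_mem _) hP
  · refine ⟨x, y, h, ?_, rfl⟩
    rintro rfl
    exact hP (phi_some_zero hω h)

lemma x_eq_zero_of_mem_ker_phi (hω : IsPrimitiveRoot ω 3) {x y : F}
    {h : (curve m).Nonsingular x y} (hP : Point.some x y h ∈ (phi hω).ker) : x = 0 := by
  by_contra hx
  obtain ⟨h', hphi⟩ := phi_some hω h hx
  exact Point.some_ne_zero h' (hphi.symm.trans hP)

lemma finite_and_ncard_ker_phi_le (hω : IsPrimitiveRoot ω 3) :
    ((phi (m := m) hω).ker : Set (curve m).Point).Finite ∧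
      ((phi (m := m) hω).ker : Set (curve m).Point).ncard ≤ 3 := by
  have h₀ : (curve m).Nonsingular 0 0 := nonsingular_iff.2 (by ring)
  have h₁ : (curve m).Nonsingular 0 (-m) := nonsingular_iff.2 (by ring)
  have hsub : ((phi (m := m) hω).ker : Set (curve m).Point) ⊆
      ({0, Point.some 0 0 h₀, Point.some 0 (-m) h₁} : Finset (curve m).Point) := by
    rintro (_ | ⟨x, y, h⟩) hP
    · simp [Point.zero_def]
    obtain rfl := x_eq_zero_of_mem_ker_phi hω hP
    have hy : y * (y + m) = 0 := by linear_combination equation_of_nonsingular h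
    rcases mul_eq_zero.1 hy with rfl | hy
    · simp
    · obtain rfl := eq_neg_of_add_eq_zero_left hy
      simp
  refine ⟨(Finset.finite_toSet _).subset hsub, ?_⟩
  exact (Set.ncard_le_ncard hsub).trans ((Set.ncard_coe_finset _).trans_le Finset.card_le_three)

end Kernel

section Kummer

variable {R : Type*} [CommRing R] [IsDedekindDomain R] {K : Type*} [Field K] [Algebra R K]
  [IsFractionRing R K]

lemma three_dvd_valuation_y (v : HeightOneSpectrum R) {m : R} (hm : m ∉ v.asIdeal) {x : K} {y : Kˣ}
    (h : (y : K) ^ 2 + algebraMap R K m * y = x ^ 3) (hx : x ≠ 0) :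
    (3 : ℤ) ∣ (v.valuationOfNeZero y).toAdd := by
  have hvm : v.valuation K (algebraMap R K m) = 1 := v.valuation_eq_one_iff_notMem.2 hm
  have hy' : (y : K) + algebraMap R K m ≠ 0 := fun h0 ↦
    pow_ne_zero 3 hx (by rw [← h]; linear_combination (y : K) * h0)
  have hmul : y * Units.mk0 _ hy' = Units.mk0 x hx ^ 3 := by
    ext
    simp only [Units.val_mul, Units.val_mk0, Units.val_pow_eq_pow_val]
    linear_combination h
  have hsum := congrArg (fun z ↦ (v.valuationOfNeZero z).toAdd) hmul
  simp only [map_mul, map_pow, toAdd_mul, toAdd_pow, nsmul_eq_mul] at hsum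
  have hval := valuation_eq_exp_toAdd v (Units.mk0 _ hy')
  rw [Units.val_mk0] at hval
  rcases lt_trichotomy (v.valuation K y) 1 with hlt | heq | hgt
  · rw [Valuation.map_add_eq_of_lt_right _ (by rwa [hvm]), hvm, ← WithZero.exp_zero] at hval
    have := WithZero.exp_injective hval
    omega
  · rw [valuation_eq_exp_toAdd, ← WithZero.exp_zero] at heq
    have := WithZero.exp_injective heq
    omega
  · rw [Valuation.map_add_eq_of_lt_left _ (by rwa [hvm]), valuation_eq_exp_toAdd] at hval
    have := WithZero.exp_injective hval
    omega

lemma exists_kummer_class {m : R} (P : (curve (algebraMap R K m)).Point) :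
    ∃ c : selmerGroup (R := R) (K := K) (S := {v | m ∈ v.asIdeal}) (n := 3),
      ∀ x y h, x ≠ 0 → P = .some x y h → ∃ u : Kˣ, (u : K) = y ∧ c.1 = QuotientGroup.mk u := by
  rcases P with _ | ⟨x, y, h⟩
  · exact ⟨1, fun x y h _ hP ↦ absurd hP.symm (Point.some_ne_zero h)⟩
  by_cases hx : x = 0
  · refine ⟨1, fun x' y' h' hx' hP ↦ ?_⟩
    rw [Point.some.injEq] at hP
    exact absurd (hP.1.symm.trans hx) hx'
  · refine ⟨⟨QuotientGroup.mk (Units.mk0 y (y_ne_zero h hx)), fun v hv ↦ ?_⟩, ?_⟩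
    · rw [valuationOfNeZeroMod_eq_one_iff]
      exact three_dvd_valuation_y v hv (equation_of_nonsingular h) hx
    · intro x' y' h' _ hP
      rw [Point.some.injEq] at hP
      exact ⟨_, hP.2, rfl⟩

lemma finiteIndex_and_index_phi_range_le [DecidableEq K] [IsPrincipalIdealRing R] [Finite Rˣ]
    {m : R} [NeZero (algebraMap R K m)] [NeZero (3 : K)] {ω : K} (hω : IsPrimitiveRoot ω 3)
    (hm : {v : HeightOneSpectrum R | m ∈ v.asIdeal}.Finite) :
    (phi (m := algebraMap R K m) hω).range.FiniteIndex ∧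
      (phi (m := algebraMap R K m) hω).range.index ≤
        3 + Nat.card Rˣ * 3 ^ {v : HeightOneSpectrum R | m ∈ v.asIdeal}.ncard := by
  obtain ⟨_, hcard⟩ := finite_and_card_selmerGroup_le (K := K) (n := 3) hm
  obtain ⟨hker, hker₃⟩ := finite_and_ncard_ker_phi_le (m := algebraMap R K m) hω
  choose κ hκ using exists_kummer_class (K := K) (m := m)
  obtain ⟨hfin, hindex⟩ := index_le_of_sub_mem (phi hω).range hker κ fun P hP Q hQ hPQ ↦ by
    obtain ⟨x₁, y₁, h₁, hx₁, rfl⟩ := eq_some_of_notMem_ker_phi hω hP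
    obtain ⟨x₂, y₂, h₂, hx₂, rfl⟩ := eq_some_of_notMem_ker_phi hω hQ
    obtain ⟨u₁, rfl, hu₁⟩ := hκ _ x₁ _ h₁ hx₁ rfl
    obtain ⟨u₂, rfl, hu₂⟩ := hκ _ x₂ _ h₂ hx₂ rfl
    obtain ⟨t, ht⟩ := QuotientGroup.eq.1 (hu₂.symm.trans ((congrArg _ hPQ.symm).trans hu₁))
    refine sub_mem_phi_range_of_eq_mul_cube hω (t := t) h₁ h₂ hx₁ hx₂ ?_
    rw [powMonoidHom_apply, eq_inv_mul_iff_mul_eq] at ht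
    rw [← ht, mul_comm]
    rfl
  exact ⟨hfin, hindex.trans (Nat.add_le_add hker₃ hcard)⟩

end Kummer

section PrimeDivisors

variable {K : Type*} [Field K] [NumberField K]

lemma prod_absNorm_le_absNorm {I : Ideal (𝓞 K)} (hI : I ≠ 0)
    {s : Finset (HeightOneSpectrum (𝓞 K))} (hs : ∀ v ∈ s, v.asIdeal ∣ I) :
    ∏ v ∈ s, Ideal.absNorm v.asIdeal ≤ Ideal.absNorm I := by
  classical
  have hinj : Set.InjOn (fun v : HeightOneSpectrum (𝓞 K) ↦ v.asIdeal) s :=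
    fun _ _ _ _ ↦ HeightOneSpectrum.ext
  have hdvd : ∏ J ∈ s.image (fun v ↦ v.asIdeal), J ∣ I := by
    refine Finset.prod_primes_dvd _ (fun J hJ ↦ ?_) fun J hJ ↦ ?_ <;>
      obtain ⟨v, hv, rfl⟩ := Finset.mem_image.1 hJ
    · exact v.prime
    · exact hs v hv
  rw [Finset.prod_image hinj] at hdvd
  rw [← map_prod]
  exact Nat.le_of_dvd (Nat.pos_of_ne_zero (Ideal.absNorm_eq_zero_iff.not.2 hI))
    (map_dvd Ideal.absNorm hdvd)

open Classical in
lemma exists_finset_le_absNorm_rpow {b : ℝ} (hb : 1 ≤ b) {η : ℝ} (hη : 0 < η) :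
    ∃ t : Finset (HeightOneSpectrum (𝓞 K)), ∀ v : HeightOneSpectrum (𝓞 K),
      b ≤ (if v ∈ t then b else 1) * (Ideal.absNorm v.asIdeal : ℝ) ^ η := by
  obtain ⟨N, hN⟩ := exists_nat_ge (b ^ (1 / η))
  have hsmall : {v : HeightOneSpectrum (𝓞 K) | Ideal.absNorm v.asIdeal ≤ N}.Finite :=
    Set.Finite.of_finite_image (f := fun v ↦ v.asIdeal)
      ((Ideal.finite_setOfPred_absNorm_le N).subset (by rintro _ ⟨v, hv, rfl⟩; exact hv))
      fun _ _ _ _ ↦ HeightOneSpectrum.ext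
  refine ⟨hsmall.toFinset, fun v ↦ ?_⟩
  split_ifs with hv
  · have : (1 : ℝ) ≤ Ideal.absNorm v.asIdeal := by
      exact_mod_cast Nat.one_le_iff_ne_zero.2 (Ideal.absNorm_eq_zero_iff.not.2 v.ne_bot)
    exact le_mul_of_one_le_right (by linarith) (Real.one_le_rpow this hη.le)
  · have hv : N < Ideal.absNorm v.asIdeal := by simpa using hv
    calc b = (b ^ (1 / η)) ^ η := by
          rw [← Real.rpow_mul (by linarith), one_div_mul_cancel hη.ne', Real.rpow_one]
      _ ≤ (Ideal.absNorm v.asIdeal : ℝ) ^ η :=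
          Real.rpow_le_rpow (by positivity) (hN.trans (by exact_mod_cast hv.le)) hη.le
      _ = 1 * (Ideal.absNorm v.asIdeal : ℝ) ^ η := (one_mul _).symm

lemma exists_pow_ncard_prime_divisors_le {b : ℝ} (hb : 1 ≤ b) {η : ℝ} (hη : 0 < η) :
    ∃ C : ℝ, 0 < C ∧ ∀ I : Ideal (𝓞 K), I ≠ 0 →
      b ^ {v : HeightOneSpectrum (𝓞 K) | v.asIdeal ∣ I}.ncard ≤ C * (Ideal.absNorm I : ℝ) ^ η := by
  classical
  obtain ⟨t, ht⟩ := exists_finset_le_absNorm_rpow (K := K) hb hη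
  refine ⟨b ^ t.card, by positivity, fun I hI ↦ ?_⟩
  obtain ⟨s, hs⟩ := (Ideal.finite_factors hI).exists_finset_coe
  calc b ^ {v : HeightOneSpectrum (𝓞 K) | v.asIdeal ∣ I}.ncard = ∏ _v ∈ s, b := by
        rw [← hs, Set.ncard_coe_finset, Finset.prod_const]
    _ ≤ ∏ v ∈ s, ((if v ∈ t then b else 1) * (Ideal.absNorm v.asIdeal : ℝ) ^ η) :=
        Finset.prod_le_prod (fun _ _ ↦ by linarith) fun v _ ↦ ht v
    _ = b ^ (s.filter (· ∈ t)).card * (∏ v ∈ s, (Ideal.absNorm v.asIdeal : ℝ)) ^ η := by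
        rw [Finset.prod_mul_distrib, Real.finsetProd_rpow _ _ fun _ _ ↦ Nat.cast_nonneg _,
          ← Finset.prod_filter, Finset.prod_const]
    _ ≤ b ^ t.card * (Ideal.absNorm I : ℝ) ^ η := by
        have hcard : (s.filter (· ∈ t)).card ≤ t.card :=
          Finset.card_le_card fun v hv ↦ (Finset.mem_filter.1 hv).2
        have hnorm : ∏ v ∈ s, (Ideal.absNorm v.asIdeal : ℝ) ≤ Ideal.absNorm I := by
          rw [← Nat.cast_prod]
          exact Nat.cast_le.2 (prod_absNorm_le_absNorm hI fun v hv ↦ hs.subset hv)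
        have hprod : 0 ≤ ∏ v ∈ s, (Ideal.absNorm v.asIdeal : ℝ) :=
          Finset.prod_nonneg fun _ _ ↦ Nat.cast_nonneg _
        exact mul_le_mul (pow_le_pow_right₀ hb hcard) (Real.rpow_le_rpow hprod hnorm hη.le)
          (Real.rpow_nonneg hprod η) (by positivity)

end PrimeDivisors

section Height

variable {F : Type*} [Field F]

-- In the coordinate `g = (f - ω) / (f - ω²)` the relation reads `g³ = f' / (f' + 1)`: up to Möbius
-- transformations, `f ↦ f'` is cubing.
lemma exists_cube_eq_one_sub_inv [NeZero (3 : F)] {ω f f' : F} (hω : IsPrimitiveRoot ω 3)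
    (hf : f * (f + 1) ≠ 0) (h : f' * (3 * (ω - ω ^ 2) * (f * (f + 1))) = (f - ω) ^ 3)
    (hfω : f - ω ^ 2 ≠ 0) :
    ∃ g, g ^ 3 = 1 - (f' + 1)⁻¹ ∧ f = ω ^ 2 + (ω ^ 2 - ω) * (g - 1)⁻¹ := by
  have hθ := sub_sq_ne_zero hω
  have hcube : (f - ω ^ 2) ^ 3 = (f - ω) ^ 3 + 3 * (ω - ω ^ 2) * (f * (f + 1)) := by
    linear_combination (3 * ω * f - ω ^ 3) * hω.pow_eq_one
  have hden : f' + 1 = (f - ω ^ 2) ^ 3 / (3 * (ω - ω ^ 2) * (f * (f + 1))) := by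
    rw [eq_div_iff (mul_ne_zero (mul_ne_zero (NeZero.ne 3) hθ) hf)]
    linear_combination h - hcube
  refine ⟨(f - ω) / (f - ω ^ 2), ?_, ?_⟩
  · rw [hden, inv_div, div_pow, eq_sub_iff_add_eq, ← add_div, ← hcube,
      div_self (pow_ne_zero 3 hfω)]
  · have hsub : f - ω - (f - ω ^ 2) = ω ^ 2 - ω := by ring
    rw [div_sub_one hfω, inv_div, hsub,
      mul_div_cancel₀ _ (sub_ne_zero.2 (sub_ne_zero.1 hθ).symm)]
    ring

variable [AdmissibleAbsValues F]

lemma mulHeight₁_eq_one_of_pow_eq_one {x : F} {n : ℕ} (hn : n ≠ 0) (hx : x ^ n = 1) :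
    mulHeight₁ x = 1 :=
  (pow_eq_one_iff_of_nonneg (mulHeight₁_nonneg x) hn).1 (by
    rw [← mulHeight₁_pow, hx, mulHeight₁_one])

lemma mulHeight₁_pow_three_le [NeZero (3 : F)] {ω f f' : F} (hω : IsPrimitiveRoot ω 3)
    (hf : f * (f + 1) ≠ 0) (h : f' * (3 * (ω - ω ^ 2) * (f * (f + 1))) = (f - ω) ^ 3) :
    mulHeight₁ f ^ 3 ≤ (2 ^ totalWeight F) ^ 11 * mulHeight₁ f' := by
  obtain ⟨D, hD⟩ : ∃ D : ℝ, D = 2 ^ totalWeight F := ⟨_, rfl⟩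
  have hD₁ : 1 ≤ D := hD ▸ one_le_pow₀ one_le_two
  have hωH : mulHeight₁ ω = 1 := mulHeight₁_eq_one_of_pow_eq_one three_ne_zero hω.pow_eq_one
  have hω₂H : mulHeight₁ (ω ^ 2) = 1 := by rw [mulHeight₁_pow, hωH, one_pow]
  rw [← hD]
  by_cases hfω : f - ω ^ 2 = 0
  · rw [sub_eq_zero.1 hfω, hω₂H, one_pow]
    exact one_le_mul_of_one_le_of_one_le (one_le_pow₀ hD₁) (one_le_mulHeight₁ f')
  obtain ⟨g, hg, hfg⟩ := exists_cube_eq_one_sub_inv hω hf h hfω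
  have hgH : mulHeight₁ g ^ 3 ≤ D * (D * mulHeight₁ f') := by
    have h₁ := mulHeight₁_sub_le 1 (f' + 1)⁻¹
    have h₂ := mulHeight₁_add_le f' 1
    simp only [mulHeight₁_one, mul_one, mulHeight₁_inv, ← hD] at h₁ h₂
    rw [← mulHeight₁_pow, hg]
    exact h₁.trans (by gcongr)
  have hfH : mulHeight₁ f ≤ D * (D * (D * mulHeight₁ g)) := by
    have h₁ := mulHeight₁_add_le (ω ^ 2) ((ω ^ 2 - ω) * (g - 1)⁻¹)
    have h₂ := mulHeight₁_mul_le (ω ^ 2 - ω) (g - 1)⁻¹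
    have h₃ := mulHeight₁_sub_le (ω ^ 2) ω
    have h₄ := mulHeight₁_sub_le g 1
    simp only [mulHeight₁_one, mul_one, mulHeight₁_inv, hωH, hω₂H, ← hD] at h₁ h₂ h₃ h₄
    rw [← hfg] at h₁
    refine h₁.trans (mul_le_mul_of_nonneg_left (h₂.trans ?_) (by positivity))
    exact mul_le_mul h₃ h₄ (mulHeight₁_nonneg _) (by positivity)
  calc mulHeight₁ f ^ 3 ≤ (D * (D * (D * mulHeight₁ g))) ^ 3 :=
        pow_le_pow_left₀ (mulHeight₁_nonneg f) hfH 3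
    _ = D ^ 9 * mulHeight₁ g ^ 3 := by ring
    _ ≤ D ^ 9 * (D * (D * mulHeight₁ f')) := by gcongr
    _ = D ^ 11 * mulHeight₁ f' := by ring

-- `r` is `x₂ / x₁` and `f`, `g` are `y₁ / m`, `y₂ / m`; the right-hand side is `n / m` for the
-- line `y = l x + n` through the two points.
lemma mulHeight₁_intercept_le {f g r : F}
    (hr : r ^ 3 = g * (g + 1) / (f * (f + 1))) :
    mulHeight₁ (f - (f - g) / (1 - r)) ≤
      (2 ^ totalWeight F) ^ 5 * mulHeight₁ f ^ 4 * mulHeight₁ g ^ 3 := by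
  obtain ⟨D, hD⟩ : ∃ D : ℝ, D = 2 ^ totalWeight F := ⟨_, rfl⟩
  have hD₀ : 0 ≤ D := hD ▸ pow_nonneg zero_le_two _
  have hsucc (z : F) : mulHeight₁ (z * (z + 1)) ≤ D * mulHeight₁ z ^ 2 := by
    have hz := mulHeight₁_add_le z 1
    rw [mulHeight₁_one, mul_one, ← hD] at hz
    calc _ ≤ mulHeight₁ z * (D * mulHeight₁ z) := (mulHeight₁_mul_le _ _).trans (by gcongr)
      _ = _ := by ring
  have hrH : mulHeight₁ r ≤ D ^ 2 * (mulHeight₁ f * mulHeight₁ g) ^ 2 :=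
    calc mulHeight₁ r ≤ mulHeight₁ r ^ 3 := le_self_pow₀ (one_le_mulHeight₁ r) three_ne_zero
      _ = mulHeight₁ (g * (g + 1) * (f * (f + 1))⁻¹) := by
          rw [← mulHeight₁_pow, hr, div_eq_mul_inv]
      _ ≤ mulHeight₁ (g * (g + 1)) * mulHeight₁ (f * (f + 1)) := by
          rw [← mulHeight₁_inv (f * (f + 1))]
          exact mulHeight₁_mul_le _ _
      _ ≤ (D * mulHeight₁ g ^ 2) * (D * mulHeight₁ f ^ 2) := by
          gcongr <;> exact hsucc _
      _ = _ := by ring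
  calc mulHeight₁ (f - (f - g) / (1 - r))
      ≤ D * mulHeight₁ f * mulHeight₁ ((f - g) / (1 - r)) := hD ▸ mulHeight₁_sub_le _ _
    _ ≤ D * mulHeight₁ f * (mulHeight₁ (f - g) * mulHeight₁ (1 - r)) := by
        rw [← mulHeight₁_inv (1 - r), div_eq_mul_inv]
        gcongr
        exact mulHeight₁_mul_le _ _
    _ ≤ D * mulHeight₁ f * ((D * mulHeight₁ f * mulHeight₁ g) * (D * mulHeight₁ r)) := by
        have h₁ := mulHeight₁_sub_le 1 r
        rw [mulHeight₁_one, mul_one, ← hD] at h₁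
        gcongr
        exact hD ▸ mulHeight₁_sub_le f g
    _ ≤ D * mulHeight₁ f * ((D * mulHeight₁ f * mulHeight₁ g) *
          (D * (D ^ 2 * (mulHeight₁ f * mulHeight₁ g) ^ 2))) := by gcongr
    _ = (2 ^ totalWeight F) ^ 5 * mulHeight₁ f ^ 4 * mulHeight₁ g ^ 3 := by rw [← hD]; ring

end Height

section CurveHeight

variable {F : Type*} [Field F] {m : F}

/-- The function `Y / m` on `Y² + mY = X³`, with the value `0` at infinity. Scaling by `m`
makes the relations between its values at `P`, `Q`, `P - Q` and at `P`, `φP` independent of `m`. -/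
def yRatio : (curve m).Point → F
  | .zero => 0
  | .some _ y _ => y / m

variable [AdmissibleAbsValues F]

/-- The multiplicative height of a point of `Y² + mY = X³` with respect to `Y / m`; being
invariant under `X ↦ ωX`, it does not see the cubic twist `m`. -/
noncomputable def yHeight (P : (curve m).Point) : ℝ := mulHeight₁ (yRatio P)

lemma one_le_yHeight (P : (curve m).Point) : 1 ≤ yHeight P := one_le_mulHeight₁ _

variable [NeZero m]

lemma yHeight_eq_one_of_x_eq_zero {y : F} (h : (curve m).Nonsingular 0 y) :
    yHeight (.some 0 y h) = 1 := by
  have hy : y * (y + m) = 0 := by linear_combination equation_of_nonsingular h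
  rcases mul_eq_zero.1 hy with rfl | hy
  · simp [yHeight, yRatio]
  · rw [yHeight, yRatio, eq_neg_of_add_eq_zero_left hy, neg_div, div_self (NeZero.ne m),
      mulHeight₁_neg, mulHeight₁_one]

lemma yHeight_neg_le (P : (curve m).Point) :
    yHeight (-P) ≤ 2 ^ totalWeight F * yHeight P := by
  rcases P with _ | ⟨x, y, h⟩
  · exact le_mul_of_one_le_left (mulHeight₁_nonneg _) (one_le_pow₀ one_le_two)
  · obtain ⟨h', hneg⟩ := neg_some_eq h
    have := mulHeight₁_sub_le (-1) (y / m)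
    rw [mulHeight₁_neg, mulHeight₁_one, mul_one] at this
    rwa [hneg, yHeight, yRatio, sub_div, neg_div, div_self (NeZero.ne m)]

variable [DecidableEq F]

lemma yHeight_neg_add_le {x₁ y₁ x₂ y₂ : F} (h₁ : (curve m).Nonsingular x₁ y₁)
    (h₂ : (curve m).Nonsingular x₂ y₂) (hx₁ : x₁ ≠ 0) (hx₂ : x₂ ≠ 0) (hx : x₁ ≠ x₂) :
    yHeight (-(Point.some x₁ y₁ h₁ + Point.some x₂ y₂ h₂)) ≤ (2 ^ totalWeight F) ^ 15 *
      yHeight (.some x₁ y₁ h₁) ^ 13 * yHeight (.some x₂ y₂ h₂) ^ 10 := by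
  have hm := NeZero.ne m
  have hy₁ := y_ne_zero h₁ hx₁
  have hy₁' := y_add_ne_zero h₁ hx₁
  have hy₂ := y_ne_zero h₂ hx₂
  have hr : (x₂ / x₁) ^ 3 = y₂ / m * (y₂ / m + 1) / (y₁ / m * (y₁ / m + 1)) := by
    rw [div_pow, ← equation_of_nonsingular h₁, ← equation_of_nonsingular h₂]
    field_simp
  obtain ⟨l, hl⟩ : ∃ l, l * (x₁ - x₂) = y₁ - y₂ := ⟨_, div_mul_cancel₀ _ (sub_ne_zero.2 hx)⟩
  obtain ⟨n, hn⟩ : ∃ n, y₁ = l * x₁ + n := ⟨y₁ - l * x₁, by ring⟩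
  have hn₂ : y₂ = l * x₂ + n := by linear_combination hn + hl
  obtain ⟨h₃, hsum⟩ := neg_add_eq_some_of_line h₁ h₂ hx hn hn₂
  have hy := (line_mul_mul h₁ h₂ hx hn hn₂).1
  have hnm : n / m = y₁ / m - (y₁ / m - y₂ / m) / (1 - x₂ / x₁) := by
    have hx' := sub_ne_zero.2 hx
    rw [← sub_div, ← hl, one_sub_div hx₁]
    field_simp
    linear_combination -hn
  have hnH := mulHeight₁_intercept_le hr
  rw [← hnm] at hnH
  have hy₃ : (l * (l ^ 2 - x₁ - x₂) + n) / m = (n / m) ^ 3 * (y₁ / m * (y₂ / m))⁻¹ := by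
    rw [div_pow, ← hy]
    field_simp
  rw [hsum]
  simp only [yHeight, yRatio]
  calc mulHeight₁ ((l * (l ^ 2 - x₁ - x₂) + n) / m)
      ≤ mulHeight₁ (n / m) ^ 3 * (mulHeight₁ (y₁ / m) * mulHeight₁ (y₂ / m)) := by
        rw [hy₃, ← mulHeight₁_pow]
        refine (mulHeight₁_mul_le _ _).trans ?_
        rw [mulHeight₁_inv]
        gcongr
        exact mulHeight₁_mul_le _ _
    _ ≤ ((2 ^ totalWeight F) ^ 5 * mulHeight₁ (y₁ / m) ^ 4 * mulHeight₁ (y₂ / m) ^ 3) ^ 3 *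
          (mulHeight₁ (y₁ / m) * mulHeight₁ (y₂ / m)) := by gcongr
    _ = _ := by ring

variable [NeZero (3 : F)]

lemma yHeight_pow_three_le {ω : F} (hω : IsPrimitiveRoot ω 3) (P : (curve m).Point) :
    yHeight P ^ 3 ≤ (2 ^ totalWeight F) ^ 11 * yHeight (phi hω P) := by
  have hD : (1 : ℝ) ≤ (2 ^ totalWeight F) ^ 11 := one_le_pow₀ (one_le_pow₀ one_le_two)
  have hm := NeZero.ne m
  by_cases hP : P ∈ (phi hω).ker
  · have hH : yHeight P = 1 := by
      rcases P with _ | ⟨x, y, h⟩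
      · exact mulHeight₁_zero
      · obtain rfl := x_eq_zero_of_mem_ker_phi hω hP
        exact yHeight_eq_one_of_x_eq_zero h
    rw [hH, one_pow]
    exact one_le_mul_of_one_le_of_one_le hD (one_le_yHeight _)
  · obtain ⟨x, y, h, hx, rfl⟩ := eq_some_of_notMem_ker_phi hω hP
    have heq := equation_of_nonsingular h
    obtain ⟨h', hphi⟩ := phi_some hω h hx
    have hcube : y / m * (y / m + 1) = x ^ 3 / m ^ 2 := by
      rw [← heq]
      field_simp
    rw [hphi, yHeight, yHeight]
    simp only [yRatio]
    refine mulHeight₁_pow_three_le hω ?_ ?_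
    · rw [hcube]
      exact div_ne_zero (pow_ne_zero 3 hx) (pow_ne_zero 2 hm)
    · rw [hcube]
      have hθ := sub_sq_ne_zero hω
      have h3 : (3 : F) ≠ 0 := NeZero.ne 3
      generalize ω - ω ^ 2 = θ at hθ ⊢
      field_simp

lemma yHeight_pow_three_pow_le {ω : F} (hω : IsPrimitiveRoot ω 3) (k : ℕ)
    (P : (curve m).Point) :
    yHeight P ^ 3 ^ k ≤ ((2 ^ totalWeight F) ^ 11) ^ 3 ^ k * yHeight ((phi hω ^ k) P) := by
  obtain ⟨D, hD⟩ : ∃ D : ℝ, D = (2 ^ totalWeight F) ^ 11 := ⟨_, rfl⟩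
  have hD₁ : 1 ≤ D := hD ▸ one_le_pow₀ (one_le_pow₀ one_le_two)
  rw [← hD]
  induction k generalizing P with
  | zero => simpa using le_mul_of_one_le_left (zero_le_one.trans (one_le_yHeight P)) hD₁
  | succ k ih =>
    obtain ⟨H, hH⟩ : ∃ H, H = yHeight ((phi hω ^ (k + 1)) P) := ⟨_, rfl⟩
    have ih' : yHeight (phi hω P) ^ 3 ^ k ≤ D ^ 3 ^ k * H := by
      rw [hH, pow_succ]
      exact ih (phi hω P)
    have hH₀ : 0 ≤ H := hH ▸ zero_le_one.trans (one_le_yHeight _)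
    have hP₀ : 0 ≤ yHeight P := zero_le_one.trans (one_le_yHeight P)
    rw [← hH]
    calc yHeight P ^ 3 ^ (k + 1) = (yHeight P ^ 3) ^ 3 ^ k := by rw [pow_succ', pow_mul]
      _ ≤ (D * yHeight (phi hω P)) ^ 3 ^ k :=
          pow_le_pow_left₀ (by positivity) (hD ▸ yHeight_pow_three_le hω P) _
      _ = D ^ 3 ^ k * yHeight (phi hω P) ^ 3 ^ k := mul_pow _ _ _
      _ ≤ D ^ 3 ^ k * (D ^ 3 ^ k * H) := by gcongr
      _ = D ^ (3 ^ k + 3 ^ k) * H := by ring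
      _ ≤ D ^ 3 ^ (k + 1) * H := by
          gcongr
          rw [pow_succ]
          omega

lemma yHeight_sub_le {ω : F} (hω : IsPrimitiveRoot ω 3) {P Q : (curve m).Point}
    (hP : P ∉ (phi hω).ker) (hQ : Q ∉ (phi hω).ker) (hPQ : P ≠ Q) (hPQ' : P ≠ -Q) {A : ℝ}
    (hPA : yHeight P ≤ A) (hQA : yHeight Q ≤ A) :
    yHeight (P - Q) ≤ (2 ^ totalWeight F) ^ 25 * A ^ 23 := by
  have hP₀ := zero_le_one.trans (one_le_yHeight P)
  have hA : 0 ≤ A := hP₀.trans hPA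
  obtain ⟨x₁, y₁, h₁, hx₁, hP'⟩ := eq_some_of_notMem_ker_phi hω (neg_mem_iff.not.2 hP)
  obtain ⟨x₂, y₂, h₂, hx₂, hQ'⟩ := eq_some_of_notMem_ker_phi hω hQ
  have hx : x₂ ≠ x₁ := by
    rintro rfl
    obtain ⟨h₁', hneg⟩ := neg_some_eq h₁
    have hy : (y₁ - y₂) * (-m - y₁ - y₂) = 0 := by
      linear_combination equation_of_nonsingular h₂ - equation_of_nonsingular h₁
    rcases mul_eq_zero.1 hy with hy | hy <;> obtain rfl := sub_eq_zero.1 hy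
    · exact hPQ' (by rw [hQ', ← hP', neg_neg])
    · exact hPQ (by rw [hQ', ← hneg, ← hP', neg_neg])
  have hle := yHeight_neg_add_le h₂ h₁ hx₂ hx₁ hx
  have hneg : yHeight (-P) ≤ 2 ^ totalWeight F * A :=
    (yHeight_neg_le P).trans (by gcongr)
  rw [← hP', ← hQ', neg_add_rev, neg_neg, ← sub_eq_add_neg] at hle
  calc yHeight (P - Q) ≤ _ := hle
    _ ≤ (2 ^ totalWeight F) ^ 15 * A ^ 13 * (2 ^ totalWeight F * A) ^ 10 := by
        have := zero_le_one.trans (one_le_yHeight (-P))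
        have := zero_le_one.trans (one_le_yHeight Q)
        gcongr
    _ = _ := by ring

end CurveHeight

section CountHeight

variable (K : Type*) [Field K] [NumberField K]

lemma finite_setOf_absNorm_le (T : ℝ) :
    {I : Ideal (𝓞 K) | (Ideal.absNorm I : ℝ) ≤ T}.Finite := by
  obtain ⟨N, hN⟩ := exists_nat_ge T
  exact (Ideal.finite_setOfPred_absNorm_le N).subset fun I hI ↦
    Nat.cast_le.1 (le_trans hI.out hN)

lemma exists_ncard_absNorm_le_le :
    ∃ C : ℝ, 0 < C ∧ ∀ T : ℝ, 1 ≤ T →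
      ({I : Ideal (𝓞 K) | (Ideal.absNorm I : ℝ) ≤ T}.ncard : ℝ) ≤ C * T := by
  obtain ⟨c, hc⟩ := (Ideal.tendsto_norm_le_div_atTop K).isBoundedUnder_le
  obtain ⟨T₀, hT₀⟩ := Filter.eventually_atTop.1 (Filter.eventually_map.1 hc)
  obtain ⟨M, hM⟩ : ∃ M : ℕ, M = {I : Ideal (𝓞 K) | (Ideal.absNorm I : ℝ) ≤ T₀}.ncard := ⟨_, rfl⟩
  refine ⟨max c (M + 1), lt_max_of_lt_right (by positivity), fun T hT ↦ ?_⟩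
  rcases le_total T₀ T with h | h
  · have := (div_le_iff₀ (zero_lt_one.trans_le hT)).1 (hT₀ T h)
    rw [← Nat.card_coe_set_eq]
    exact this.trans (mul_le_mul_of_nonneg_right (le_max_left _ _) (by linarith))
  · have hle : {I : Ideal (𝓞 K) | (Ideal.absNorm I : ℝ) ≤ T}.ncard ≤ M :=
      hM ▸ Set.ncard_le_ncard (fun I hI ↦ le_trans hI h) (finite_setOf_absNorm_le K T₀)
    calc _ ≤ (M : ℝ) := Nat.cast_le.2 hle
      _ ≤ (M + 1) * T := by nlinarith [M.cast_nonneg (α := ℝ)]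
      _ ≤ max c (M + 1) * T := by gcongr; exact le_max_right _ _

variable {K}

lemma absNorm_le_absNorm_mul_mulHeight {ι : Type*} [Finite ι] {x : ι → 𝓞 K} (hx : x ≠ 0) (i : ι) :
    (Ideal.absNorm (Ideal.span {x i}) : ℝ) ≤
      Ideal.absNorm (Ideal.span (Set.range x)) * mulHeight fun j ↦ (x j : K) := by
  have hx' : (fun j ↦ (x j : K)) ≠ 0 := fun h ↦ hx (funext fun j ↦
    RingOfIntegers.coe_injective (congrFun h j))
  rw [NumberField.mulHeight_eq hx', mul_left_comm, absNorm_mul_finprod_finitePlace_eq_one hx,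
    mul_one]
  calc (Ideal.absNorm (Ideal.span {x i}) : ℝ) = ∏ v : InfinitePlace K, v (x i) ^ v.mult := by
        rw [InfinitePlace.prod_eq_abs_norm, ← Algebra.coe_norm_int, Ideal.absNorm_span_singleton,
          Nat.cast_natAbs]
        push_cast
        rfl
    _ ≤ _ := by
        gcongr with v
        exact le_ciSup (f := fun j ↦ v (x j : K)) (Set.finite_range _).bddAbove i

variable [IsPrincipalIdealRing (𝓞 K)]

lemma exists_div_eq_and_absNorm_le (f : K) :
    ∃ p q : 𝓞 K, (p : K) / q = f ∧ (Ideal.absNorm (Ideal.span {p}) : ℝ) ≤ mulHeight₁ f ∧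
      (Ideal.absNorm (Ideal.span {q}) : ℝ) ≤ mulHeight₁ f := by
  obtain ⟨p, q, hpq, rfl⟩ := IsFractionRing.exists_reduced_fraction (A := 𝓞 K) f
  have hq : (q : 𝓞 K) ≠ 0 := nonZeroDivisors.coe_ne_zero q
  have hx : ![p, q] ≠ 0 := fun h ↦ hq (congrFun h 1)
  have hspan : Ideal.span (Set.range ![p, (q : 𝓞 K)]) = ⊤ := by
    rw [Matrix.range_cons_cons_empty, Ideal.span_insert]
    exact Ideal.isCoprime_iff_sup_eq.1 ((Ideal.isCoprime_span_singleton_iff _ _).2 hpq.isCoprime)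
  have hle := absNorm_le_absNorm_mul_mulHeight hx
  rw [hspan, Ideal.absNorm_top, Nat.cast_one, one_mul] at hle
  have hH : mulHeight₁ (IsLocalization.mk' K p q) =
      mulHeight fun j ↦ ((![p, (q : 𝓞 K)] j : 𝓞 K) : K) := by
    rw [IsFractionRing.mk'_eq_div, mulHeight₁_div_eq_mulHeight]
    congr 1
    ext j
    fin_cases j <;> rfl
  rw [hH]
  exact ⟨p, q, (IsFractionRing.mk'_eq_div q).symm, hle 0, hle 1⟩

variable (K) [Finite (𝓞 K)ˣ]

lemma exists_ncard_absNorm_span_le_le :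
    ∃ C : ℝ, 0 < C ∧ ∀ T : ℝ, 1 ≤ T →
      {p : 𝓞 K | (Ideal.absNorm (Ideal.span {p}) : ℝ) ≤ T}.Finite ∧
        ({p : 𝓞 K | (Ideal.absNorm (Ideal.span {p}) : ℝ) ≤ T}.ncard : ℝ) ≤ C * T := by
  obtain ⟨c, hc, hcard⟩ := exists_ncard_absNorm_le_le K
  have hunits : 0 < Nat.card (𝓞 K)ˣ := Nat.card_pos
  refine ⟨Nat.card (𝓞 K)ˣ * c, by positivity, fun T hT ↦ ?_⟩
  obtain ⟨S, hS⟩ : ∃ S : Set (Ideal (𝓞 K)), S = {I | (Ideal.absNorm I : ℝ) ≤ T} := ⟨_, rfl⟩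
  have hfin : ((Set.univ : Set (𝓞 K)ˣ) ×ˢ S).Finite :=
    Set.finite_univ.prod (hS ▸ finite_setOf_absNorm_le K T)
  let f (z : (𝓞 K)ˣ × Ideal (𝓞 K)) : 𝓞 K := Submodule.IsPrincipal.generator z.2 * z.1
  have hsub : {p : 𝓞 K | (Ideal.absNorm (Ideal.span {p}) : ℝ) ≤ T} ⊆ f '' (Set.univ ×ˢ S) := by
    intro p hp
    obtain ⟨u, hu⟩ := Submodule.IsPrincipal.associated_generator_span_self p
    exact ⟨(u, Ideal.span {p}), ⟨Set.mem_univ u, hS ▸ hp⟩, hu⟩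
  refine ⟨(hfin.image f).subset hsub, ?_⟩
  calc _ ≤ (((Set.univ : Set (𝓞 K)ˣ) ×ˢ S).ncard : ℝ) :=
        Nat.cast_le.2 ((Set.ncard_le_ncard hsub (hfin.image f)).trans (Set.ncard_image_le hfin))
    _ = Nat.card (𝓞 K)ˣ * S.ncard := by rw [Set.ncard_prod, Set.ncard_univ, Nat.cast_mul]
    _ ≤ Nat.card (𝓞 K)ˣ * (c * T) := by
        gcongr
        exact hS ▸ hcard T hT
    _ = Nat.card (𝓞 K)ˣ * c * T := (mul_assoc _ _ _).symm

lemma exists_ncard_mulHeight₁_le_le :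
    ∃ C : ℝ, 0 < C ∧ ∀ T : ℝ, 1 ≤ T →
      ({f : K | mulHeight₁ f ≤ T}.ncard : ℝ) ≤ C * T ^ 2 := by
  obtain ⟨c, hc, hcard⟩ := exists_ncard_absNorm_span_le_le K
  refine ⟨c ^ 2, by positivity, fun T hT ↦ ?_⟩
  obtain ⟨hfin, hle⟩ := hcard T hT
  obtain ⟨S, hS⟩ : ∃ S : Set (𝓞 K), S = {p | (Ideal.absNorm (Ideal.span {p}) : ℝ) ≤ T} := ⟨_, rfl⟩
  rw [← hS] at hfin hle
  let f (z : 𝓞 K × 𝓞 K) : K := z.1 / z.2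
  have hsub : {f : K | mulHeight₁ f ≤ T} ⊆ f '' (S ×ˢ S) := by
    intro x hx
    obtain ⟨p, q, hpq, hp, hq⟩ := exists_div_eq_and_absNorm_le x
    exact ⟨(p, q), ⟨hS ▸ hp.trans hx, hS ▸ hq.trans hx⟩, hpq⟩
  have hfin' := hfin.prod hfin
  calc ({f : K | mulHeight₁ f ≤ T}.ncard : ℝ) ≤ ((S ×ˢ S).ncard : ℝ) :=
        Nat.cast_le.2 ((Set.ncard_le_ncard hsub (hfin'.image f)).trans (Set.ncard_image_le hfin'))
    _ = S.ncard * S.ncard := by rw [Set.ncard_prod, Nat.cast_mul]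
    _ ≤ (c * T) * (c * T) := by gcongr
    _ = c ^ 2 * T ^ 2 := by ring

end CountHeight

section CountPoints

lemma ncard_le_mul_ncard_of_mapsTo {α β : Type*} {f : α → β} {s : Set α} {t : Set β}
    (hs : s.Finite) (ht : t.Finite) (hf : Set.MapsTo f s t) {n : ℕ}
    (hn : ∀ y ∈ t, {x ∈ s | f x = y}.ncard ≤ n) : s.ncard ≤ n * t.ncard := by
  classical
  rw [Set.ncard_eq_toFinset_card s hs, Set.ncard_eq_toFinset_card t ht]
  refine Finset.card_le_mul_card_image_of_maps_to (f := f)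
    (fun x hx ↦ ht.mem_toFinset.2 (hf (hs.mem_toFinset.1 hx))) n fun y hy ↦ ?_
  rw [← Set.ncard_coe_finset, Finset.coe_filter]
  simpa only [Set.Finite.mem_toFinset] using hn y (ht.mem_toFinset.1 hy)

variable {F : Type*} [Field F] {m : F} [NeZero m]

lemma finite_and_ncard_setOf_yRatio_eq_le (f : F) :
    {P : (curve m).Point | yRatio P = f}.Finite ∧
      {P : (curve m).Point | yRatio P = f}.ncard ≤ 4 := by
  classical
  let s : Finset F := (Polynomial.nthRoots 3 ((m * f) ^ 2 + m * (m * f))).toFinset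
  let g (x : F) : (curve m).Point := if h : (curve m).Nonsingular x (m * f) then .some x _ h else 0
  have hsub : {P : (curve m).Point | yRatio P = f} ⊆ (insert 0 (s.image g) : Finset _) := by
    rintro (_ | ⟨x, y, h⟩) hP
    · exact Finset.mem_insert_self _ _
    · obtain rfl : y = m * f := by
        rw [← hP.out, yRatio, mul_div_cancel₀ _ (NeZero.ne m)]
      refine Finset.mem_insert_of_mem (Finset.mem_image.2 ⟨x, ?_, dif_pos h⟩)
      rw [Multiset.mem_toFinset, Polynomial.mem_nthRoots three_pos]
      exact (equation_of_nonsingular h).symm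
  refine ⟨(Finset.finite_toSet _).subset hsub, ?_⟩
  calc _ ≤ (insert 0 (s.image g) : Finset _).card :=
        (Set.ncard_le_ncard hsub (Finset.finite_toSet _)).trans_eq (Set.ncard_coe_finset _)
    _ ≤ s.card + 1 :=
        (Finset.card_insert_le _ _).trans (Nat.add_le_add_right Finset.card_image_le 1)
    _ ≤ 4 :=
        Nat.add_le_add_right ((Multiset.toFinset_card_le _).trans (Polynomial.card_nthRoots 3 _)) 1

variable [NumberField F]

lemma finite_and_ncard_setOf_yHeight_le (T : ℝ) :
    {P : (curve m).Point | yHeight P ≤ T}.Finite ∧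
      {P : (curve m).Point | yHeight P ≤ T}.ncard ≤ 4 * {f : F | mulHeight₁ f ≤ T}.ncard := by
  have hN : {f : F | mulHeight₁ f ≤ T}.Finite := NumberField.finite_setOfPred_mulHeight₁_le F T
  have hfin : {P : (curve m).Point | yHeight P ≤ T}.Finite :=
    hN.preimage' fun f _ ↦ (finite_and_ncard_setOf_yRatio_eq_le f).1
  refine ⟨hfin, ncard_le_mul_ncard_of_mapsTo hfin hN (fun P hP ↦ hP) fun f _ ↦ ?_⟩
  obtain ⟨hfiber, hcard⟩ := finite_and_ncard_setOf_yRatio_eq_le (m := m) f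
  exact (Set.ncard_le_ncard (fun P hP ↦ hP.2) hfiber).trans hcard

end CountPoints

section CurveCount

lemma mul_pow_le_rpow_div_pow {D A : ℝ} (hD : 1 ≤ D) (hA : 1 ≤ A) (k : ℕ) :
    (D ^ 11) ^ 3 ^ k * (D ^ 25 * A ^ 23) ≤ (D ^ 36 * A ^ (23 / 3 ^ k : ℝ)) ^ 3 ^ k := by
  have hAk : (A ^ (23 / 3 ^ k : ℝ)) ^ 3 ^ k = A ^ 23 := by
    rw [← Real.rpow_natCast, ← Real.rpow_mul (by positivity)]
    push_cast
    rw [div_mul_cancel₀ _ (by positivity)]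
    norm_cast
  rw [mul_pow, hAk, ← mul_assoc, show D ^ 36 = D ^ 11 * D ^ 25 by ring, mul_pow]
  gcongr
  exact le_self_pow₀ (one_le_pow₀ hD) (by positivity)

variable {K : Type*} [Field K] [NumberField K] {ω : K}

section

variable [DecidableEq K] (hω : IsPrimitiveRoot ω 3) {m : K} [NeZero m]

lemma sub_mem_image_of_mem_range {k : ℕ} {A T : ℝ} (hT₀ : 0 ≤ T)
    (hT : ((2 ^ totalWeight K) ^ 11) ^ 3 ^ k * ((2 ^ totalWeight K) ^ 25 * A ^ 23) ≤ T ^ 3 ^ k)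
    {P Q : (curve m).Point} (hP : P ∉ (phi hω).ker) (hQ : Q ∉ (phi hω).ker)
    (hPA : yHeight P ≤ A) (hQA : yHeight Q ≤ A)
    (hmem : P - Q ∈ AddMonoidHom.range (phi hω ^ k)) (hPQ : P ≠ Q) (hPQ' : P ≠ -Q) :
    P - Q ∈ (phi hω ^ k) '' {R | yHeight R ≤ T} := by
  obtain ⟨R, hR⟩ := hmem
  refine ⟨R, le_of_pow_le_pow_left₀ (pow_ne_zero k three_ne_zero) hT₀ ?_, hR⟩
  calc yHeight R ^ 3 ^ k
      ≤ ((2 ^ totalWeight K) ^ 11) ^ 3 ^ k * yHeight ((phi hω ^ k) R) :=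
        yHeight_pow_three_pow_le hω k R
    _ ≤ ((2 ^ totalWeight K) ^ 11) ^ 3 ^ k * ((2 ^ totalWeight K) ^ 25 * A ^ 23) := by
        gcongr
        exact hR ▸ yHeight_sub_le hω hP hQ hPQ hPQ' hPA hQA
    _ ≤ T ^ 3 ^ k := hT

lemma ncard_setOf_yHeight_le_le_index_mul {k : ℕ}
    (hfin : (AddMonoidHom.range (phi (m := m) hω ^ k)).FiniteIndex) {A T : ℝ} (hT₀ : 0 ≤ T)
    (hT : ((2 ^ totalWeight K) ^ 11) ^ 3 ^ k * ((2 ^ totalWeight K) ^ 25 * A ^ 23) ≤ T ^ 3 ^ k) :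
    {P : (curve m).Point | yHeight P ≤ A}.ncard ≤
      3 + (AddMonoidHom.range (phi (m := m) hω ^ k)).index *
        (2 + 4 * {f : K | mulHeight₁ f ≤ T}.ncard) := by
  obtain ⟨hker, hker₃⟩ := finite_and_ncard_ker_phi_le (m := m) hω
  obtain ⟨hA, -⟩ := finite_and_ncard_setOf_yHeight_le (m := m) A
  obtain ⟨hR, hR₄⟩ := finite_and_ncard_setOf_yHeight_le (m := m) T
  have hS := hA.sdiff (t := (phi (m := m) hω).ker)
  calc _ ≤ ((phi (m := m) hω).ker : Set (curve m).Point).ncard + hS.toFinset.card := by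
        rw [← Set.ncard_eq_toFinset_card _ hS]
        exact (Set.ncard_le_ncard (fun P hP ↦ by
          by_cases h : P ∈ (phi hω).ker
          exacts [.inl h, .inr ⟨hP, h⟩]) (hker.union hS)).trans (Set.ncard_union_le _ _)
    _ ≤ 3 + (AddMonoidHom.range (phi (m := m) hω ^ k)).index *
        (2 + ((phi (m := m) hω ^ k) '' {R | yHeight R ≤ T}).ncard) := by
        refine Nat.add_le_add hker₃ (card_le_index_mul _ _ (hR.image _) fun P hP Q hQ ↦ ?_)
        rw [Set.Finite.mem_toFinset] at hP hQ
        exact sub_mem_image_of_mem_range hω hT₀ hT hP.2 hQ.2 hP.1 hQ.1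
    _ ≤ _ := by
        gcongr
        exact (Set.ncard_image_le hR).trans hR₄

end

variable [IsPrincipalIdealRing (𝓞 K)] [Finite (𝓞 K)ˣ]

section

variable [DecidableEq K] (hω : IsPrimitiveRoot ω 3)

lemma exists_ncard_setOf_yHeight_le_le_index_mul {ε : ℝ} (hε : 0 < ε) :
    ∃ (k : ℕ) (C : ℝ), 0 < C ∧ ∀ m : K, ∀ [NeZero m],
      (AddMonoidHom.range (phi (m := m) hω ^ k)).FiniteIndex → ∀ A : ℝ, 1 ≤ A →
        ({P : (curve m).Point | yHeight P ≤ A}.ncard : ℝ) ≤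
          3 + (AddMonoidHom.range (phi (m := m) hω ^ k)).index * (2 + C * A ^ ε) := by
  obtain ⟨k, hk⟩ : ∃ k : ℕ, 46 / ε < (3 : ℝ) ^ k := pow_unbounded_of_one_lt _ (by norm_num)
  obtain ⟨c, hc, hheight⟩ := exists_ncard_mulHeight₁_le_le K
  have hD : (1 : ℝ) ≤ 2 ^ totalWeight K := one_le_pow₀ one_le_two
  refine ⟨k, 4 * (c * (2 ^ totalWeight K) ^ 72), by positivity, fun m _ hfin A hA ↦ ?_⟩
  obtain ⟨T, hT⟩ : ∃ T : ℝ, T = (2 ^ totalWeight K) ^ 36 * A ^ (23 / 3 ^ k : ℝ) := ⟨_, rfl⟩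
  have hT₁ : 1 ≤ T := hT ▸ one_le_mul_of_one_le_of_one_le (one_le_pow₀ hD)
    (Real.one_le_rpow hA (by positivity))
  have hTsq : T ^ 2 ≤ (2 ^ totalWeight K) ^ 72 * A ^ ε := by
    rw [hT, mul_pow, ← pow_mul, ← Real.rpow_natCast (A ^ _), ← Real.rpow_mul (by positivity)]
    refine mul_le_mul_of_nonneg_left (Real.rpow_le_rpow_of_exponent_le hA ?_) (by positivity)
    rw [div_lt_comm₀ hε (by positivity)] at hk
    calc (23 / 3 ^ k * (2 : ℕ) : ℝ) = 46 / 3 ^ k := by push_cast; ring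
      _ ≤ ε := hk.le
  calc _ ≤ 3 + ((AddMonoidHom.range (phi (m := m) hω ^ k)).index : ℝ) *
        (2 + 4 * ({f : K | mulHeight₁ f ≤ T}.ncard : ℝ)) := mod_cast
        ncard_setOf_yHeight_le_le_index_mul hω hfin (zero_le_one.trans hT₁)
          (hT ▸ mul_pow_le_rpow_div_pow hD hA k)
    _ ≤ _ := by
        rw [mul_assoc 4, mul_assoc c]
        gcongr
        exact (hheight T hT₁).trans (by gcongr)

lemma exists_index_range_phi_pow_le (k : ℕ) {η : ℝ} (hη : 0 < η) :
    ∃ C : ℝ, 0 < C ∧ ∀ m : 𝓞 K, ∀ [NeZero (m : K)],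
      (AddMonoidHom.range (phi (m := (m : K)) hω ^ k)).FiniteIndex ∧
        ((AddMonoidHom.range (phi (m := (m : K)) hω ^ k)).index : ℝ) ≤
          C * (Ideal.absNorm (Ideal.span {m}) : ℝ) ^ η := by
  obtain ⟨c, hc, hprimes⟩ := exists_pow_ncard_prime_divisors_le (K := K) (b := 3 ^ k)
    (one_le_pow₀ (by norm_num)) hη
  refine ⟨(3 + Nat.card (𝓞 K)ˣ) ^ k * c, by positivity, fun m _ ↦ ?_⟩
  have hm : Ideal.span {m} ≠ ⊥ := by
    rw [Ne, Ideal.span_singleton_eq_bot]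
    rintro rfl
    exact NeZero.ne ((0 : 𝓞 K) : K) (map_zero _)
  have hset : {v : HeightOneSpectrum (𝓞 K) | m ∈ v.asIdeal} =
      {v | v.asIdeal ∣ Ideal.span {m}} := by
    simp only [Ideal.dvd_span_singleton]
  obtain ⟨hfin, hindex⟩ := finiteIndex_and_index_phi_range_le hω (hset ▸ Ideal.finite_factors hm)
  obtain ⟨s, hs⟩ : ∃ s, s = {v : HeightOneSpectrum (𝓞 K) | m ∈ v.asIdeal}.ncard := ⟨_, rfl⟩
  have hdvd := index_range_pow_dvd (phi (m := (m : K)) hω) k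
  have hpos : (phi (m := (m : K)) hω).range.index ^ k ≠ 0 := pow_ne_zero _ hfin.index_ne_zero
  refine ⟨⟨ne_zero_of_dvd_ne_zero hpos hdvd⟩, ?_⟩
  calc _ ≤ (((phi (m := (m : K)) hω).range.index ^ k : ℕ) : ℝ) :=
        Nat.cast_le.2 (Nat.le_of_dvd (Nat.pos_of_ne_zero hpos) hdvd)
    _ ≤ (((3 + Nat.card (𝓞 K)ˣ) * 3 ^ s) ^ k : ℕ) := by
        refine Nat.cast_le.2 (Nat.pow_le_pow_left (hindex.trans ?_) k)
        rw [← hs, add_mul]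
        gcongr
        exact Nat.le_mul_of_pos_right 3 (by positivity)
    _ = (3 + Nat.card (𝓞 K)ˣ) ^ k * (3 ^ k) ^ s := by
        push_cast
        rw [mul_pow, pow_right_comm]
    _ ≤ _ := by
        rw [mul_assoc, hs, hset]
        gcongr
        exact hprimes _ hm

end

lemma exists_ncard_setOf_yHeight_le_le (hω : IsPrimitiveRoot ω 3) {ε : ℝ} (hε : 0 < ε) :
    ∃ C : ℝ, 0 < C ∧ ∀ m : 𝓞 K, m ≠ 0 → ∀ A : ℝ, 1 ≤ A →
      ({P : (curve (m : K)).Point | yHeight P ≤ A}.ncard : ℝ) ≤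
        C * (Ideal.absNorm (Ideal.span {m}) * A) ^ ε := by
  classical
  obtain ⟨k, c₂, hc₂, hcount⟩ := exists_ncard_setOf_yHeight_le_le_index_mul hω hε
  obtain ⟨c₁, hc₁, hindex⟩ := exists_index_range_phi_pow_le hω k hε
  refine ⟨3 + c₁ * (2 + c₂), by positivity, fun m hm A hA ↦ ?_⟩
  have : NeZero (m : K) := ⟨RingOfIntegers.coe_ne_zero_iff.2 hm⟩
  obtain ⟨hfin, hindex⟩ := hindex m
  obtain ⟨N, hN⟩ : ∃ N : ℝ, N = Ideal.absNorm (Ideal.span {m}) := ⟨_, rfl⟩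
  have hN₁ : 1 ≤ N := by
    rw [hN, Nat.one_le_cast, Nat.one_le_iff_ne_zero, Ne, Ideal.absNorm_eq_zero_iff,
      Ideal.span_singleton_eq_bot]
    exact hm
  have hN' : 1 ≤ N ^ ε := Real.one_le_rpow hN₁ hε.le
  have hA' : 1 ≤ A ^ ε := Real.one_le_rpow hA hε.le
  rw [← hN] at hindex ⊢
  calc _ ≤ 3 + ((AddMonoidHom.range (phi (m := (m : K)) hω ^ k)).index : ℝ) *
        (2 + c₂ * A ^ ε) := hcount m hfin A hA
    _ ≤ 3 * (N ^ ε * A ^ ε) + c₁ * N ^ ε * (2 * A ^ ε + c₂ * A ^ ε) := by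
        gcongr
        · nlinarith
        · linarith
    _ = _ := by
        rw [Real.mul_rpow (by positivity) (by positivity)]
        ring

end CurveCount

section IntegerHeights

variable {K : Type*} [Field K] [NumberField K]

lemma absNorm_span_intCast (n : ℤ) :
    (Ideal.absNorm (Ideal.span {(n : 𝓞 K)}) : ℝ) = |(n : ℝ)| ^ Module.finrank ℚ K := by
  have hspan : Ideal.span {(n : 𝓞 K)} = Ideal.span {((n.natAbs : ℕ) : 𝓞 K)} := by
    rw [← Int.cast_natCast n.natAbs, Int.natCast_natAbs]
    rcases abs_choice n with h | h
    · rw [h]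
    · rw [h, Int.cast_neg, Ideal.span_singleton_neg]
  rw [hspan, Ideal.absNorm_span_natCast, RingOfIntegers.rank, Nat.cast_pow, Nat.cast_natAbs,
    Int.cast_abs]

lemma mulHeight₁_intCast_div_intCast_le {p q : ℤ} (hq₀ : q ≠ 0) {A : ℝ} (hp : |(p : ℝ)| ≤ A)
    (hq : |(q : ℝ)| ≤ A) : mulHeight₁ ((p : K) / q) ≤ A ^ Module.finrank ℚ K := by
  obtain ⟨x, hx⟩ : ∃ x : Fin 2 → 𝓞 K, x = ![(p : 𝓞 K), q] := ⟨_, rfl⟩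
  have hx₀ : x ≠ 0 := fun h ↦ hq₀ (by simpa [hx] using congrFun h 1)
  have hx₀' : (fun j ↦ (x j : K)) ≠ 0 := fun h ↦ hx₀ (funext fun j ↦
    RingOfIntegers.coe_injective (congrFun h j))
  have hheight : mulHeight₁ ((p : K) / q) = mulHeight fun j ↦ (x j : K) := by
    rw [mulHeight₁_div_eq_mulHeight]
    congr 1
    ext j
    fin_cases j <;> simp [hx]
  have hfin : ∏ᶠ v : FinitePlace K, ⨆ j, v (x j : K) ≤ 1 := by
    have hI : (1 : ℝ) ≤ Ideal.absNorm (Ideal.span (Set.range x)) := by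
      rw [Nat.one_le_cast, Nat.one_le_iff_ne_zero, Ne, Ideal.absNorm_eq_zero_iff,
        Ideal.span_eq_bot]
      exact fun h ↦ hx₀ (funext fun j ↦ h _ ⟨j, rfl⟩)
    rw [eq_inv_of_mul_eq_one_right (absNorm_mul_finprod_finitePlace_eq_one hx₀)]
    exact inv_le_one_of_one_le₀ hI
  have hinf : ∀ v : InfinitePlace K, ⨆ j, v (x j : K) ≤ A := by
    refine fun v ↦ ciSup_le fun j ↦ ?_
    fin_cases j <;> simpa [hx, ← InfinitePlace.norm_embedding_eq v]
  have hnonneg : ∀ v : InfinitePlace K, 0 ≤ (⨆ j, v (x j : K)) ^ v.mult := fun v ↦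
    pow_nonneg (Real.iSup_nonneg fun j ↦ apply_nonneg v _) _
  rw [hheight, NumberField.mulHeight_eq hx₀', ← totalWeight_eq_finrank, totalWeight_eq_sum_mult,
    ← Finset.prod_pow_eq_pow_sum]
  refine (mul_le_of_le_one_right (Finset.prod_nonneg fun v _ ↦ hnonneg v) hfin).trans
    (Finset.prod_le_prod (fun v _ ↦ hnonneg v) fun v _ ↦ ?_)
  exact pow_le_pow_left₀ (Real.iSup_nonneg fun j ↦ apply_nonneg v _) (hinf v) _

end IntegerHeights

section Solutions

/-- The primitive integer solutions of `a x³ + b y³ + c z³ = 0` in the box of side `B`. -/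
def solutions (a b c : ℤ) (B : ℝ) : Set (ℤ × ℤ × ℤ) :=
  {t | a * t.1 ^ 3 + b * t.2.1 ^ 3 + c * t.2.2 ^ 3 = 0 ∧
    Int.gcd t.1 (Int.gcd t.2.1 t.2.2) = 1 ∧
    (|t.1| : ℝ) ≤ B ∧ (|t.2.1| : ℝ) ≤ B ∧ (|t.2.2| : ℝ) ≤ B}

lemma finite_solutions (a b c : ℤ) (B : ℝ) : (solutions a b c B).Finite := by
  have hfin : {n : ℤ | (|n| : ℝ) ≤ B}.Finite :=
    (Set.finite_Icc (-⌊B⌋) ⌊B⌋).subset fun n hn ↦ by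
      rwa [Set.mem_Icc, ← abs_le, Int.le_floor, Int.cast_abs]
  exact (hfin.prod (hfin.prod hfin)).subset fun t ht ↦ ht.2.2

lemma eq_or_eq_neg_of_mul_eq_mul {x y z x' y' z' : ℤ} (h : Int.gcd x (Int.gcd y z) = 1)
    (h' : Int.gcd x' (Int.gcd y' z') = 1) (hxy : x * y' = x' * y) (hxz : x * z' = x' * z)
    (hyz : y * z' = y' * z) : (x', y', z') = (x, y, z) ∨ (x', y', z') = -(x, y, z) := by
  obtain ⟨u, v, w, huvw⟩ : ∃ u v w : ℤ, u * x + v * y + w * z = 1 := by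
    obtain ⟨p, q, hpq⟩ := Int.isCoprime_iff_gcd_eq_one.2 h
    exact ⟨p, q * Int.gcdA y z, q * Int.gcdB y z, by
      linear_combination hpq - q * Int.gcd_eq_gcd_ab y z⟩
  obtain ⟨l, hl⟩ : ∃ l, l = u * x' + v * y' + w * z' := ⟨_, rfl⟩
  have hx : x' = l * x := by linear_combination -x' * huvw - v * hxy - w * hxz - x * hl
  have hy : y' = l * y := by linear_combination -y' * huvw + u * hxy - w * hyz - y * hl
  have hz : z' = l * z := by linear_combination -z' * huvw + u * hxz + v * hyz - z * hl
  have hdvd : l ∣ (Int.gcd x' (Int.gcd y' z') : ℕ) :=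
    Int.dvd_coe_gcd ⟨x, hx⟩ (Int.dvd_coe_gcd ⟨y, hy⟩ ⟨z, hz⟩)
  rw [h', Nat.cast_one] at hdvd
  rcases Int.isUnit_iff.1 (isUnit_of_dvd_one hdvd) with rfl | rfl
  · exact .inl (by rw [hx, hy, hz]; simp only [one_mul])
  · exact .inr (by rw [hx, hy, hz]; simp only [neg_one_mul, Prod.neg_mk])

lemma eq_or_eq_neg_of_cube_mul_cube_eq {x y z x' y' z' : ℤ} (h : Int.gcd x (Int.gcd y z) = 1)
    (h' : Int.gcd x' (Int.gcd y' z') = 1) (hxy : x ^ 3 * y' ^ 3 = x' ^ 3 * y ^ 3)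
    (hxz : x ^ 3 * z' ^ 3 = x' ^ 3 * z ^ 3) (hyz : y ^ 3 * z' ^ 3 = y' ^ 3 * z ^ 3) :
    (x', y', z') = (x, y, z) ∨ (x', y', z') = -(x, y, z) := by
  have hodd : Odd 3 := by decide
  simp only [← mul_pow, hodd.pow_inj] at hxy hxz hyz
  exact eq_or_eq_neg_of_mul_eq_mul h h' hxy hxz hyz

lemma ncard_le_two_of_eq_or_eq_neg {α : Type*} [Neg α] {s : Set α}
    (h : ∀ t ∈ s, ∀ t' ∈ s, t' = t ∨ t' = -t) : s.ncard ≤ 2 := by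
  rcases s.eq_empty_or_nonempty with rfl | ⟨t, ht⟩
  · simp only [Set.ncard_empty, zero_le]
  · exact (Set.ncard_le_ncard (fun t' ht' ↦ h t ht t' ht') (Set.toFinite {t, -t})).trans
      ((Set.ncard_insert_le t {-t}).trans_eq (by rw [Set.ncard_singleton]))

variable {a b c : ℤ} {B : ℝ}

lemma ncard_solutions_third_eq_zero_le (ha : a ≠ 0) :
    {t ∈ solutions a b c B | t.2.2 = 0}.ncard ≤ 2 := by
  refine ncard_le_two_of_eq_or_eq_neg ?_
  rintro ⟨x, y, z⟩ ⟨⟨h, hg, -⟩, rfl : z = 0⟩ ⟨x', y', z'⟩ ⟨⟨h', hg', -⟩, rfl : z' = 0⟩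
  refine eq_or_eq_neg_of_cube_mul_cube_eq hg hg' (mul_left_cancel₀ ha ?_) (by ring) (by ring)
  linear_combination y' ^ 3 * h - y ^ 3 * h'

lemma solutions_subset_solutions {a' b' c' : ℤ} (ha : a ≠ 0) (hab : a * b' = b * a')
    (hac : a * c' = c * a') : solutions a b c B ⊆ solutions a' b' c' B := by
  rintro ⟨x, y, z⟩ ⟨h, hrest⟩
  exact ⟨mul_left_cancel₀ ha (by linear_combination a' * h + y ^ 3 * hab + z ^ 3 * hac), hrest⟩

lemma abs_cube_mul_cube_sub_le {x y z w : ℤ} (hx : (|x| : ℝ) ≤ B) (hy : (|y| : ℝ) ≤ B)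
    (hz : (|z| : ℝ) ≤ B) (hw : (|w| : ℝ) ≤ B) :
    |((x ^ 3 * y ^ 3 - z ^ 3 * w ^ 3 : ℤ) : ℝ)| ≤ 2 * B ^ 6 := by
  have hB : 0 ≤ B := (abs_nonneg _).trans hx
  push_cast
  calc _ ≤ |(x ^ 3 * y ^ 3 : ℝ)| + |(z ^ 3 * w ^ 3 : ℝ)| := abs_sub _ _
    _ = |(x : ℝ)| ^ 3 * |(y : ℝ)| ^ 3 + |(z : ℝ)| ^ 3 * |(w : ℝ)| ^ 3 := by
        simp only [abs_mul, abs_pow]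
    _ ≤ B ^ 3 * B ^ 3 + B ^ 3 * B ^ 3 := by gcongr
    _ = 2 * B ^ 6 := by ring

-- The coefficient vector is orthogonal to the vectors of cubes of two independent solutions, so it
-- may be replaced by their cross product.
lemma exists_coeff_le_and_solutions_subset (ha : a ≠ 0) (hb : b ≠ 0) (hc : c ≠ 0)
    {t t' : ℤ × ℤ × ℤ} (ht : t ∈ solutions a b c B) (ht' : t' ∈ solutions a b c B)
    (hne : ¬(t' = t ∨ t' = -t)) :
    ∃ a' b' c' : ℤ, a' ≠ 0 ∧ b' ≠ 0 ∧ c' ≠ 0 ∧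
      |(a' : ℝ)| ≤ 2 * B ^ 6 ∧ |(b' : ℝ)| ≤ 2 * B ^ 6 ∧ |(c' : ℝ)| ≤ 2 * B ^ 6 ∧
      solutions a b c B ⊆ solutions a' b' c' B := by
  obtain ⟨x, y, z⟩ := t
  obtain ⟨x', y', z'⟩ := t'
  obtain ⟨h, hg, hx, hy, hz⟩ := ht
  obtain ⟨h', hg', hx', hy', hz'⟩ := ht'
  obtain ⟨a', ha'⟩ : ∃ a', a' = y ^ 3 * z' ^ 3 - z ^ 3 * y' ^ 3 := ⟨_, rfl⟩
  obtain ⟨b', hb'⟩ : ∃ b', b' = z ^ 3 * x' ^ 3 - x ^ 3 * z' ^ 3 := ⟨_, rfl⟩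
  obtain ⟨c', hc'⟩ : ∃ c', c' = x ^ 3 * y' ^ 3 - y ^ 3 * x' ^ 3 := ⟨_, rfl⟩
  have hab : a * b' = b * a' := by
    rw [ha', hb']
    linear_combination z ^ 3 * h' - z' ^ 3 * h
  have hac : a * c' = c * a' := by
    rw [ha', hc']
    linear_combination y' ^ 3 * h - y ^ 3 * h'
  have ha'₀ : a' ≠ 0 := by
    intro h₀
    rw [h₀, mul_zero, mul_eq_zero_iff_left ha] at hab hac
    exact hne (eq_or_eq_neg_of_cube_mul_cube_eq hg hg' (by linear_combination hac - hc')
      (by linear_combination hb' - hab) (by linear_combination h₀ - ha'))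
  refine ⟨a', b', c', ha'₀, fun h₀ ↦ ?_, fun h₀ ↦ ?_, ha' ▸ abs_cube_mul_cube_sub_le hy hz' hz hy',
    hb' ▸ abs_cube_mul_cube_sub_le hz hx' hx hz', hc' ▸ abs_cube_mul_cube_sub_le hx hy' hy hx',
    solutions_subset_solutions ha hab hac⟩
  · exact mul_ne_zero hb ha'₀ (by rw [← hab, h₀, mul_zero])
  · exact mul_ne_zero hc ha'₀ (by rw [← hac, h₀, mul_zero])

variable {F : Type*} [Field F] [CharZero F]

lemma eq_or_eq_neg_of_div_eq_div (ha : a ≠ 0) (hb : b ≠ 0) (hc : c ≠ 0) {t t' : ℤ × ℤ × ℤ}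
    (ht : t ∈ solutions a b c B) (ht' : t' ∈ solutions a b c B) (hz : t.2.2 ≠ 0) (hz' : t'.2.2 ≠ 0)
    (heq : ((a * t.1 ^ 3 : ℤ) / (c * t.2.2 ^ 3 : ℤ) : F) =
      (a * t'.1 ^ 3 : ℤ) / (c * t'.2.2 ^ 3 : ℤ)) : t' = t ∨ t' = -t := by
  obtain ⟨x, y, z⟩ := t
  obtain ⟨x', y', z'⟩ := t'
  obtain ⟨h, hg, -⟩ := ht
  obtain ⟨h', hg', -⟩ := ht'
  rw [div_eq_div_iff (Int.cast_ne_zero.2 (mul_ne_zero hc (pow_ne_zero 3 hz)))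
    (Int.cast_ne_zero.2 (mul_ne_zero hc (pow_ne_zero 3 hz')))] at heq
  norm_cast at heq
  have hxz : x ^ 3 * z' ^ 3 = x' ^ 3 * z ^ 3 :=
    mul_left_cancel₀ (mul_ne_zero ha hc) (by linear_combination heq)
  refine eq_or_eq_neg_of_cube_mul_cube_eq hg hg' (mul_left_cancel₀ hb ?_) hxz
    (mul_left_cancel₀ hb ?_)
  · linear_combination x ^ 3 * h' - x' ^ 3 * h - c * hxz
  · linear_combination z' ^ 3 * h - z ^ 3 * h' - a * hxz

lemma exists_point_yRatio_eq (ha : a ≠ 0) (hb : b ≠ 0) (hc : c ≠ 0) {m : F} (hm : m = a * b * c)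
    {x y z : ℤ} (hz : z ≠ 0) (h : a * x ^ 3 + b * y ^ 3 + c * z ^ 3 = 0) :
    ∃ P : (curve m).Point, yRatio P = ((a * x ^ 3 : ℤ) / (c * z ^ 3 : ℤ) : F) := by
  have ha' : (a : F) ≠ 0 := Int.cast_ne_zero.2 ha
  have hb' : (b : F) ≠ 0 := Int.cast_ne_zero.2 hb
  have hc' : (c : F) ≠ 0 := Int.cast_ne_zero.2 hc
  have hz' : (z : F) ≠ 0 := Int.cast_ne_zero.2 hz
  have h' : (a * x ^ 3 + b * y ^ 3 + c * z ^ 3 : F) = 0 := mod_cast h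
  have : NeZero m := ⟨hm ▸ mul_ne_zero (mul_ne_zero ha' hb') hc'⟩
  refine ⟨.some (-(a * b * (x * y)) / z ^ 2) (a ^ 2 * b * x ^ 3 / z ^ 3)
    (nonsingular_iff.2 ?_), ?_⟩
  · rw [hm]
    field_simp
    linear_combination (x ^ 3 : F) * h'
  · rw [yRatio, hm]
    push_cast
    field_simp

end Solutions

section SolutionCount

variable {a b c : ℤ} {B H : ℝ} {K : Type*} [Field K] [NumberField K]

lemma ncard_solutions_third_ne_zero_le (ha : a ≠ 0) (hb : b ≠ 0) (hc : c ≠ 0) {m : K}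
    (hm : m = a * b * c) (haH : |(a : ℝ)| ≤ H) (hcH : |(c : ℝ)| ≤ H) :
    {t ∈ solutions a b c B | t.2.2 ≠ 0}.ncard ≤
      2 * {P : (curve m).Point | yHeight P ≤ (H * B ^ 3) ^ Module.finrank ℚ K}.ncard := by
  have : NeZero m := ⟨hm ▸ mul_ne_zero (mul_ne_zero (Int.cast_ne_zero.2 ha)
    (Int.cast_ne_zero.2 hb)) (Int.cast_ne_zero.2 hc)⟩
  have hH : 0 ≤ H := (abs_nonneg _).trans haH
  choose! P hP using fun t (ht : t ∈ {t ∈ solutions a b c B | t.2.2 ≠ 0}) ↦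
    exists_point_yRatio_eq ha hb hc hm ht.2 ht.1.1
  refine ncard_le_mul_ncard_of_mapsTo (f := P) ((finite_solutions a b c B).subset fun t ht ↦ ht.1)
    (finite_and_ncard_setOf_yHeight_le _).1 (fun t ht ↦ ?_) fun Q _ ↦
    ncard_le_two_of_eq_or_eq_neg fun t ht t' ht' ↦ ?_
  · obtain ⟨⟨-, -, hx, -, hz⟩, hz₀⟩ := id ht
    rw [Set.mem_ofPred_eq, yHeight, hP t ht]
    refine mulHeight₁_intCast_div_intCast_le (mul_ne_zero hc (pow_ne_zero 3 hz₀)) ?_ ?_ <;>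
    · push_cast
      rw [abs_mul, abs_pow]
      gcongr
  · exact eq_or_eq_neg_of_div_eq_div ha hb hc ht.1.1 ht'.1.1 ht.1.2 ht'.1.2
      (((hP t ht.1).symm.trans (congrArg yRatio (ht.2.trans ht'.2.symm))).trans (hP t' ht'.1))

lemma ncard_solutions_le (ha : a ≠ 0) (hb : b ≠ 0) (hc : c ≠ 0) {m : K} (hm : m = a * b * c)
    (haH : |(a : ℝ)| ≤ H) (hcH : |(c : ℝ)| ≤ H) :
    (solutions a b c B).ncard ≤
      2 + 2 * {P : (curve m).Point | yHeight P ≤ (H * B ^ 3) ^ Module.finrank ℚ K}.ncard := by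
  have hunion : solutions a b c B ⊆
      {t ∈ solutions a b c B | t.2.2 = 0} ∪ {t ∈ solutions a b c B | t.2.2 ≠ 0} :=
    fun t ht ↦ (em (t.2.2 = 0)).imp (⟨ht, ·⟩) (⟨ht, ·⟩)
  have hfin := (finite_solutions a b c B).subset
    (Set.union_subset (Set.sep_subset _ (·.2.2 = 0)) (Set.sep_subset _ (·.2.2 ≠ 0)))
  calc (solutions a b c B).ncard ≤ _ := Set.ncard_le_ncard hunion hfin
    _ ≤ _ := Set.ncard_union_le _ _
    _ ≤ _ := Nat.add_le_add (ncard_solutions_third_eq_zero_le ha)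
        (ncard_solutions_third_ne_zero_le ha hb hc hm haH hcH)

variable [IsPrincipalIdealRing (𝓞 K)] [Finite (𝓞 K)ˣ] {ω : K} {ε : ℝ}

lemma exists_ncard_solutions_le_of_abs_le (hω : IsPrimitiveRoot ω 3) (hε : 0 < ε) :
    ∃ C : ℝ, 0 < C ∧ ∀ a b c : ℤ, a ≠ 0 → b ≠ 0 → c ≠ 0 → ∀ H B : ℝ, 1 ≤ B →
      |(a : ℝ)| ≤ H → |(b : ℝ)| ≤ H → |(c : ℝ)| ≤ H →
      ((solutions a b c B).ncard : ℝ) ≤ C * (H ^ 4 * B ^ 3) ^ ε := by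
  obtain ⟨d, hd⟩ : ∃ d, d = Module.finrank ℚ K := ⟨_, rfl⟩
  have hd₀ : 0 < d := hd ▸ Module.finrank_pos
  obtain ⟨C, hC, hcount⟩ := exists_ncard_setOf_yHeight_le_le hω (ε := ε / d) (by positivity)
  refine ⟨2 + 2 * C, by positivity, fun a b c ha hb hc H B hB haH hbH hcH ↦ ?_⟩
  have hH : 1 ≤ H := le_trans (mod_cast Int.one_le_abs ha) haH
  have hHB : 1 ≤ H * B ^ 3 := one_le_mul_of_one_le_of_one_le hH (one_le_pow₀ hB)
  have hHB' : 1 ≤ H ^ 4 * B ^ 3 :=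
    one_le_mul_of_one_le_of_one_le (one_le_pow₀ hH) (one_le_pow₀ hB)
  have hm₀ : ((a * b * c : ℤ) : 𝓞 K) ≠ 0 := Int.cast_ne_zero.2 (mul_ne_zero (mul_ne_zero ha hb) hc)
  obtain ⟨A, hA⟩ : ∃ A : ℝ, A = (H * B ^ 3) ^ d := ⟨_, rfl⟩
  have hA₁ : 1 ≤ A := hA ▸ one_le_pow₀ hHB
  have hnorm : Ideal.absNorm (Ideal.span {((a * b * c : ℤ) : 𝓞 K)}) * A ≤ (H ^ 4 * B ^ 3) ^ d := by
    rw [absNorm_span_intCast, ← hd, hA, ← mul_pow]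
    push_cast
    rw [abs_mul, abs_mul]
    calc _ ≤ (H * H * H * (H * B ^ 3)) ^ d := by gcongr
      _ = _ := by ring
  have hpoints := ncard_solutions_le (B := B) (K := K) ha hb hc
    (m := (((a * b * c : ℤ) : 𝓞 K) : K)) (by push_cast; rfl) haH hcH
  rw [← hd, ← hA] at hpoints
  calc ((solutions a b c B).ncard : ℝ)
      ≤ 2 + 2 * ({P : (curve (((a * b * c : ℤ) : 𝓞 K) : K)).Point | yHeight P ≤ A}.ncard : ℝ) :=
        mod_cast hpoints
    _ ≤ 2 * (H ^ 4 * B ^ 3) ^ ε + 2 * (C * ((H ^ 4 * B ^ 3) ^ d) ^ (ε / d)) := by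
        gcongr
        · linarith [Real.one_le_rpow hHB' hε.le]
        · refine (hcount _ hm₀ A hA₁).trans ?_
          gcongr
    _ = (2 + 2 * C) * (H ^ 4 * B ^ 3) ^ ε := by
        rw [← Real.rpow_natCast (H ^ 4 * B ^ 3) d, ← Real.rpow_mul (by positivity),
          mul_div_cancel₀ _ (by positivity)]
        ring

lemma exists_ncard_solutions_le (hω : IsPrimitiveRoot ω 3) (hε : 0 < ε) :
    ∃ C : ℝ, 0 < C ∧ ∀ a b c : ℤ, a ≠ 0 → b ≠ 0 → c ≠ 0 → ∀ B : ℝ, 2 ≤ B →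
      ((solutions a b c B).ncard : ℝ) ≤ C * B ^ ε := by
  obtain ⟨C, hC, hcount⟩ := exists_ncard_solutions_le_of_abs_le hω (ε := ε / 31) (by positivity)
  refine ⟨2 + C, by positivity, fun a b c ha hb hc B hB ↦ ?_⟩
  have hBε : 1 ≤ B ^ ε := Real.one_le_rpow (by linarith) hε.le
  by_cases hpm : ∀ t ∈ solutions a b c B, ∀ t' ∈ solutions a b c B, t' = t ∨ t' = -t
  · calc ((solutions a b c B).ncard : ℝ) ≤ 2 := mod_cast ncard_le_two_of_eq_or_eq_neg hpm
      _ ≤ (2 + C) * B ^ ε := by nlinarith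
  · push Not at hpm
    obtain ⟨t, ht, t', ht', hne⟩ := hpm
    obtain ⟨a', b', c', ha', hb', hc', haB, hbB, hcB, hsub⟩ :=
      exists_coeff_le_and_solutions_subset ha hb hc ht ht' (not_or.2 hne)
    have hB₇ : 2 * B ^ 6 ≤ B ^ 7 := by
      rw [pow_succ' B 6]
      gcongr
    calc ((solutions a b c B).ncard : ℝ) ≤ (solutions a' b' c' B).ncard :=
          Nat.cast_le.2 (Set.ncard_le_ncard hsub (finite_solutions a' b' c' B))
      _ ≤ C * ((B ^ 7) ^ 4 * B ^ 3) ^ (ε / 31) := hcount a' b' c' ha' hb' hc' _ B (by linarith)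
          (haB.trans hB₇) (hbB.trans hB₇) (hcB.trans hB₇)
      _ = C * B ^ ε := by
          rw [← pow_mul, ← pow_add, ← Real.rpow_natCast, ← Real.rpow_mul (by positivity)]
          congr 2
          push_cast
          ring
      _ ≤ (2 + C) * B ^ ε := by
          gcongr
          linarith

end SolutionCount

lemma finite_units_of_isCyclotomicExtension_three (K : Type*) [Field K] [NumberField K]
    [IsCyclotomicExtension {3} ℚ K] : Finite (𝓞 K)ˣ :=
  Set.finite_univ_iff.1 ((List.finite_toSet _).subset fun u _ ↦
    IsCyclotomicExtension.Rat.Three.Units.mem (IsCyclotomicExtension.zeta_spec 3 ℚ K) u)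

-- Over `ℚ`, instance search finds `DivisionRing.toRatAlgebra`, whereas Mathlib's instance is stated
-- for `CyclotomicField.algebra`.
lemma isCyclotomicExtension_cyclotomicField_rat (n : ℕ) [NeZero n] :
    @IsCyclotomicExtension {n} ℚ (CyclotomicField n ℚ) _ _ DivisionRing.toRatAlgebra :=
  Subsingleton.elim (CyclotomicField.algebra n ℚ) DivisionRing.toRatAlgebra ▸
    CyclotomicField.isCyclotomicExtension n ℚ

end DiagonalCubic

/-- For every `ε > 0` there is a constant `C(ε)` such that for all nonzero integers `a, b, c`
and all real `B ≥ 2`, the number of integer triples `(x, y, z)` with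
`a x³ + b y³ + c z³ = 0`, `gcd(x, y, z) = 1` and `max(|x|, |y|, |z|) ≤ B` is at most
`C(ε) * B ^ ε`; in particular the bound is uniform in `a, b, c`. -/
theorem count_diagonal_cubic (ε : ℝ) (hε : 0 < ε) :
    ∃ C : ℝ, 0 < C ∧ ∀ a b c : ℤ, a ≠ 0 → b ≠ 0 → c ≠ 0 → ∀ B : ℝ, 2 ≤ B →
      (({t : ℤ × ℤ × ℤ |
          a * t.1 ^ 3 + b * t.2.1 ^ 3 + c * t.2.2 ^ 3 = 0 ∧
          Int.gcd t.1 (Int.gcd t.2.1 t.2.2) = 1 ∧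
          (|t.1| : ℝ) ≤ B ∧ (|t.2.1| : ℝ) ≤ B ∧ (|t.2.2| : ℝ) ≤ B}).ncard : ℝ) ≤
        C * B ^ (ε : ℝ) := by
  let K := CyclotomicField 3 ℚ
  have : IsCyclotomicExtension {3} ℚ K :=
    DiagonalCubic.isCyclotomicExtension_cyclotomicField_rat 3
  have : NumberField K := IsCyclotomicExtension.numberField {3} ℚ K
  have : IsPrincipalIdealRing (NumberField.RingOfIntegers K) :=
    IsCyclotomicExtension.Rat.three_pid K
  have := DiagonalCubic.finite_units_of_isCyclotomicExtension_three K
  exact DiagonalCubic.exists_ncard_solutions_le (IsCyclotomicExtension.zeta_spec 3 ℚ K) hε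
end

section
/- There is an absolute constant C such that for every cube-free positive integer M, the rank r(M) of the group of rational points of the elliptic curve E_M : Y² = X³ − 3M² satisfies r(M) ≤ C(ω(M) + 1), and moreover ω(M) + 1 ≤ C · log(3M)/log log(3M); in particular r(M) ≤ C² · log(3M)/log log(3M). -/
/-- The elliptic curve `E_M : Y² = X³ - 3M²` over `ℚ`, as a Weierstrass curve in affine form. -/
def EM (M : ℕ) : WeierstrassCurve.Affine ℚ :=
  { a₁ := 0, a₂ := 0, a₃ := 0, a₄ := 0, a₆ := -3 * (M : ℚ) ^ 2 }

/-!
The field `K = ℚ(ω)`, `ω² + ω + 1 = 0`, contains a square root `c` of `-3M²`, so over `K` the curve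
`E_M` reads `Y² = X³ + c²` and has the endomorphism `√-3 = ω - ω²`. The map `(X, Y) ↦ Y - c` is a
homomorphism `E_M(K) → Kˣ / (Kˣ)³` whose kernel is the image of `√-3`. As `(Y - c) (Y + c) = X³` and
the two factors differ by `2c`, its image consists of classes with valuation divisible by `3` at
every prime not dividing `(2c)² = -12M²`. The ring of integers of `K` is principal with six units,
so there are at most `6 · 3 ^ s` such classes, where `s` is the number of exceptional primes, and
`s ≤ 2 ω(M) + 4`. Since `√-3 ∘ √-3 = -3`, this bounds `E_M(K) / 3 E_M(K)`, hence the rank once a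
descent by heights shows that `E_M(K)` is finitely generated. For the bound on `ω(M)`, the `i`-th
smallest prime factor of `M` exceeds `i`, so `(ω(M) + 1)! ≤ M`.
-/

open WeierstrassCurve Height

section AddSub
open Affine.Point
variable {F : Type*} [Field F] {W : Affine F}

lemma eval_addSubMap (W : Affine F) (s t u : F) :
    (fun i ↦ (addSubMap W i).eval ![s, t, u]) =
      ![s ^ 2 - W.b₄ * s * u - W.b₆ * t * u - W.b₈ * u ^ 2,
        2 * t * s + W.b₂ * s * u + W.b₄ * t * u + W.b₆ * u ^ 2, t ^ 2 - 4 * s * u] := by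
  ext i
  fin_cases i <;> simp [addSubMap]

lemma addX_add_addX_of_X_ne {x₁ x₂ y₁ y₂ : F} (h₁ : W.Equation x₁ y₁) (h₂ : W.Equation x₂ y₂)
    (hx : x₁ ≠ x₂) :
    (x₁ - x₂) ^ 2 * (W.addX x₁ x₂ ((y₁ - y₂) / (x₁ - x₂)) +
        W.addX x₁ x₂ ((y₁ - W.negY x₂ y₂) / (x₁ - x₂))) =
      2 * (x₁ + x₂) * (x₁ * x₂) + W.b₂ * (x₁ * x₂) + W.b₄ * (x₁ + x₂) + W.b₆ := by
  have hx' := sub_ne_zero.mpr hx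
  rw [Affine.equation_iff] at h₁ h₂
  simp only [Affine.addX, Affine.negY, b₂, b₄, b₆]
  field_simp
  linear_combination 2 * h₁ + 2 * h₂

lemma addX_mul_addX_of_X_ne {x₁ x₂ y₁ y₂ : F} (h₁ : W.Equation x₁ y₁) (h₂ : W.Equation x₂ y₂)
    (hx : x₁ ≠ x₂) :
    (x₁ - x₂) ^ 2 * (W.addX x₁ x₂ ((y₁ - y₂) / (x₁ - x₂)) *
        W.addX x₁ x₂ ((y₁ - W.negY x₂ y₂) / (x₁ - x₂))) =
      (x₁ * x₂) ^ 2 - W.b₄ * (x₁ * x₂) - W.b₆ * (x₁ + x₂) - W.b₈ := by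
  have hx' := sub_ne_zero.mpr hx
  rw [Affine.equation_iff] at h₁ h₂
  simp only [Affine.addX, Affine.negY, b₄, b₆, b₈]
  field_simp
  grind

lemma sq_mul_addX_self {x y : F} (h : W.Equation x y) (hy : y ≠ W.negY x y) :
    (y - W.negY x y) ^ 2 *
      W.addX x x ((3 * x ^ 2 + 2 * W.a₂ * x + W.a₄ - W.a₁ * y) / (y - W.negY x y)) =
      x ^ 4 - W.b₄ * x ^ 2 - 2 * W.b₆ * x - W.b₈ := by
  have hy' := sub_ne_zero.mpr hy
  rw [Affine.equation_iff] at h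
  simp only [Affine.addX, Affine.negY, b₄, b₆, b₈] at *
  field_simp
  grind

lemma sq_sub_negY {x y : F} (h : W.Equation x y) :
    (y - W.negY x y) ^ 2 = 4 * x ^ 3 + W.b₂ * x ^ 2 + 2 * W.b₄ * x + W.b₆ := by
  rw [Affine.equation_iff] at h
  simp only [Affine.negY, b₂, b₄, b₆]
  linear_combination 4 * h

variable [DecidableEq F]

lemma exists_addSubMap_sym2x_self [W.IsElliptic] (P : W.Point) :
    ∃ t : F, t ≠ 0 ∧ (fun i ↦ (addSubMap W i).eval (P.sym2x P)) = t • (P + P).sym2x 0 := by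
  match P with
  | 0 => exact ⟨1, one_ne_zero, by simp [eval_addSubMap]⟩
  | .some x y h =>
    have hdisc := sq_sub_negY h.1
    have heval : (fun i ↦ (addSubMap W i).eval ((Affine.Point.some x y h).sym2x (.some x y h))) =
        ![x ^ 4 - W.b₄ * x ^ 2 - 2 * W.b₆ * x - W.b₈, (y - W.negY x y) ^ 2, 0] := by
      rw [sym2x_some_some, eval_addSubMap, hdisc]
      exact Matrix.vec3_eq (by ring) (by ring) (by ring)
    by_cases hy : y = W.negY x y
    · have hne := addSubMap_ne_zero W (sym2x_ne_zero (.some x y h) (.some x y h))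
      rw [heval, ← hy, sub_self, zero_pow two_ne_zero] at hne
      rw [heval, ← hy, add_of_Y_eq rfl hy, sub_self, zero_pow two_ne_zero]
      exact ⟨x ^ 4 - W.b₄ * x ^ 2 - 2 * W.b₆ * x - W.b₈, fun h0 ↦ hne (by simp [h0]), by simp⟩
    · have hdbl := sq_mul_addX_self h.1 hy
      refine ⟨(y - W.negY x y) ^ 2, pow_ne_zero 2 (sub_ne_zero.mpr hy), ?_⟩
      rw [heval, add_of_Y_ne hy, sym2x_some_zero, Affine.slope_of_Y_ne rfl hy, Matrix.smul_vec3]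
      exact Matrix.vec3_eq hdbl.symm (mul_one _).symm (mul_zero _).symm

lemma exists_addSubMap_sym2x [W.IsElliptic] (P Q : W.Point) :
    ∃ t : F, t ≠ 0 ∧
      (fun i ↦ (addSubMap W i).eval (P.sym2x Q)) = t • (P + Q).sym2x (P - Q) := by
  match P, Q with
  | 0, 0 => simpa using exists_addSubMap_sym2x_self (0 : W.Point)
  | 0, .some x y h | .some x y h, 0 =>
    exact ⟨1, one_ne_zero, by simp [eval_addSubMap, sq, two_mul]⟩
  | .some x₁ y₁ h₁, .some x₂ y₂ h₂ =>
    by_cases hx : x₁ = x₂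
    · obtain hPQ | hPQ := (X_eq_iff (h₁ := h₁) (h₂ := h₂)).mp hx
      · rw [← hPQ, sub_self]
        exact exists_addSubMap_sym2x_self _
      · rw [← neg_eq_iff_eq_neg.mpr hPQ, sub_neg_eq_add, add_neg_cancel, sym2x_neg_right,
          sym2x_comm 0]
        exact exists_addSubMap_sym2x_self _
    · refine ⟨(x₁ - x₂) ^ 2, pow_ne_zero 2 (sub_ne_zero.mpr hx), ?_⟩
      have hsum := addX_add_addX_of_X_ne h₁.1 h₂.1 hx
      have hprod := addX_mul_addX_of_X_ne h₁.1 h₂.1 hx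
      rw [sub_eq_add_neg (Affine.Point.some x₁ y₁ h₁), neg_some, add_of_X_ne hx, add_of_X_ne hx,
        sym2x_some_some, sym2x_some_some, Affine.slope_of_X_ne hx, Affine.slope_of_X_ne hx,
        eval_addSubMap, Matrix.smul_vec3]
      refine Matrix.vec3_eq ?_ ?_ ?_ <;> rw [smul_eq_mul]
      · linear_combination -hprod
      · linear_combination -hsum
      · ring
end AddSub

section Descent
variable {G : Type*} [AddCommGroup G] {h : G → ℝ} {C : ℝ}

lemma exists_abs_height_nsmul_sub_le
    (hC : ∀ x y, |h (x + y) + h (x - y) - 2 * (h x + h y)| ≤ C) (n : ℕ) :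
    ∃ D : ℝ, ∀ x, |h (n • x) - n ^ 2 * h x| ≤ D := by
  induction n using Nat.twoStepInduction with
  | zero => exact ⟨|h 0|, fun x ↦ by simp⟩
  | one => exact ⟨0, fun x ↦ by simp⟩
  | more n ih₀ ih₁ =>
    obtain ⟨D₀, h₀⟩ := ih₀
    obtain ⟨D₁, h₁⟩ := ih₁
    refine ⟨C + 2 * D₁ + D₀, fun x ↦ ?_⟩
    have hadd : (n + 1) • x + x = (n + 2) • x := by module
    have hsub : (n + 1) • x - x = n • x := by module
    have hpar := hC ((n + 1) • x) x
    rw [hadd, hsub] at hpar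
    have := h₀ x
    have := h₁ x
    push_cast at *
    rw [abs_le] at *
    constructor <;> linarith

lemma addGroupFG_of_finiteIndex_of_parallelogram [Northcott h] (hnonneg : ∀ x, 0 ≤ h x)
    (hC : ∀ x y, |h (x + y) + h (x - y) - 2 * (h x + h y)| ≤ C) {n : ℕ} (hn : 2 ≤ n)
    (hindex : (nsmulAddMonoidHom (α := G) n).range.FiniteIndex) : AddGroup.FG G := by
  obtain ⟨D, hD⟩ := exists_abs_height_nsmul_sub_le hC n
  have hn' : (2 : ℝ) ≤ n := by exact_mod_cast hn
  refine AddCommGroup.fg_of_descent (n := n) (h := h) (a := 2) (b := n ^ 2)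
    (c := fun g ↦ 2 * h (-g) + C) (c₀ := D) (by norm_num) (by nlinarith) hindex
    (fun g x ↦ ?_) (fun x ↦ ?_)
  · have hpar := (abs_le.mp (hC (g + x) (-g))).2
    rw [add_neg_cancel_comm] at hpar
    linarith [hnonneg (g + x - -g)]
  · linarith [(abs_le.mp (hD x)).1]
end Descent

section Height
open Affine.Point
variable {F : Type*} [Field F] [AdmissibleAbsValues F] {W : Affine F}

/-- The naive height of a point `P` of a Weierstrass curve: the logarithmic height of `x(P)`, viewed
as a point of the projective line. -/
noncomputable def naiveHeight (P : W.Point) : ℝ := logHeight P.xRep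

lemma naiveHeight_nonneg (P : W.Point) : 0 ≤ naiveHeight P := logHeight_nonneg _

variable (W) in
lemma exists_abs_logHeight_sym2x_sub_le :
    ∃ C : ℝ, ∀ P Q : W.Point,
      |logHeight (P.sym2x Q) - (naiveHeight P + naiveHeight Q)| ≤ C := by
  obtain ⟨C, hC⟩ := abs_logHeight_sym2_sub_le F
  have heta (v : Fin 2 → F) : ![v 0, v 1] = v := by ext i; fin_cases i <;> rfl
  refine ⟨C, fun P Q ↦ ?_⟩
  have := hC (a := P.xRep 0) (b := P.xRep 1) (c := Q.xRep 0) (d := Q.xRep 1)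
    (by rw [heta]; exact xRep_ne_zero P) (by rw [heta]; exact xRep_ne_zero Q)
  rwa [heta, heta] at this

instance northcott_naiveHeight [Northcott (logHeight₁ (K := F))] :
    Northcott (naiveHeight (W := W)) where
  finite_le B := by
    have hx := (Northcott.finite_le (h := logHeight₁ (K := F)) B).image fun x ↦ ![x, 1]
    refine Set.Finite.of_finite_fibers xRep ((hx.insert ![1, 0]).subset ?_) ?_
    · rintro _ ⟨P, hP, rfl⟩
      match P with
      | 0 => simp
      | .some x y _ =>
        exact .inr ⟨x, by simpa [naiveHeight, logHeight₁_eq_logHeight] using hP, by simp⟩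
    · rintro _ ⟨P, -, rfl⟩
      refine (Set.toFinite {P, -P}).subset ?_
      rintro Q ⟨-, hQ⟩
      simpa using xRep_eq_xRep_iff.mp hQ

variable [DecidableEq F]

variable (W) in
lemma exists_abs_naiveHeight_parallelogram_le [W.IsElliptic] :
    ∃ C : ℝ, ∀ P Q : W.Point, |naiveHeight (P + Q) + naiveHeight (P - Q) -
      2 * (naiveHeight P + naiveHeight Q)| ≤ C := by
  obtain ⟨C₁, h₁⟩ := abs_logHeight_addSubMap_sub_two_mul_logHeight_le W
  obtain ⟨C₂, h₂⟩ := exists_abs_logHeight_sym2x_sub_le W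
  refine ⟨C₁ + 3 * C₂, fun P Q ↦ ?_⟩
  obtain ⟨t, ht, htPQ⟩ := exists_addSubMap_sym2x P Q
  have hmap := h₁ (P.sym2x Q)
  rw [htPQ, logHeight_smul_eq_logHeight _ ht] at hmap
  have hPQ := h₂ P Q
  have haddsub := h₂ (P + Q) (P - Q)
  rw [abs_le] at *
  constructor <;> linarith

theorem addGroupFG_point_of_finiteIndex [Northcott (logHeight₁ (K := F))] [W.IsElliptic] {n : ℕ}
    (hn : 2 ≤ n) (hindex : (nsmulAddMonoidHom (α := W.Point) n).range.FiniteIndex) :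
    AddGroup.FG W.Point := by
  obtain ⟨C, hC⟩ := exists_abs_naiveHeight_parallelogram_le W
  exact addGroupFG_of_finiteIndex_of_parallelogram naiveHeight_nonneg hC hn hindex
end Height

section Index
variable {A : Type*} [AddCommGroup A]

lemma pow_finrank_dvd_index_range_nsmul [Module.Finite ℤ A] (n : ℕ) :
    n ^ Module.finrank ℤ A ∣ (nsmulAddMonoidHom (α := A) n).range.index := by
  let T := Submodule.torsion ℤ A
  let π : A →+ A ⧸ T := T.mkQ.toAddMonoidHom
  have hπ : Function.Surjective π := T.mkQ_surjective
  have hmap : (nsmulAddMonoidHom n).range.map π = (nsmulAddMonoidHom (α := A ⧸ T) n).range :=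
    calc (nsmulAddMonoidHom n).range.map π = (π.comp (nsmulAddMonoidHom n)).range :=
          AddMonoidHom.map_range _ _
      _ = ((nsmulAddMonoidHom n).comp π).range := by congr 1
      _ = (nsmulAddMonoidHom (α := A ⧸ T) n).range := by
          rw [AddMonoidHom.range_comp, AddMonoidHom.range_eq_top.mpr hπ,
            ← AddMonoidHom.range_eq_map]
  have hindex : (nsmulAddMonoidHom (α := A ⧸ T) n).range.index = n ^ Module.finrank ℤ A := by
    rw [AddSubgroup.index_range_nsmul, finrank_quotient_eq_of_le_torsion le_rfl]
  rw [← hindex, ← hmap]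
  exact AddSubgroup.index_map_dvd _ hπ

lemma index_range_comp_self_dvd (θ : A →+ A) :
    (θ.comp θ).range.index ∣ θ.range.index ^ 2 := by
  rw [← AddMonoidHom.map_range, AddSubgroup.index_map, sq]
  exact mul_dvd_mul_right (AddSubgroup.index_dvd_of_le le_sup_left) _
end Index

section Secant
open Affine.Point (add_some neg_some)
variable {F : Type*} [Field F]

/-- The Mordell curve `y² = x³ + a`. -/
def mordellCurve (a : F) : Affine F where
  a₁ := 0
  a₂ := 0
  a₃ := 0
  a₄ := 0
  a₆ := a

/-- Division-free characterisation of the slope `l` of the line through the points `(x₁, y₁)` and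
`(x₂, y₂)` of a Mordell curve (the tangent if they coincide). The second equation is the first one
multiplied by `(y₁ + y₂) / (x₁ - x₂)`, so that it still determines `l` when `x₁ = x₂`. -/
def IsSecantSlope (x₁ y₁ x₂ y₂ l : F) : Prop :=
  y₁ - y₂ = l * (x₁ - x₂) ∧ x₁ ^ 2 + x₁ * x₂ + x₂ ^ 2 = l * (y₁ + y₂)

lemma IsSecantSlope.unique {x₁ y₁ x₂ y₂ l m : F} (hl : IsSecantSlope x₁ y₁ x₂ y₂ l)
    (h : ¬(x₁ = x₂ ∧ y₁ = -y₂)) (hm : IsSecantSlope x₁ y₁ x₂ y₂ m) : l = m := by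
  by_contra hlm
  have hlm' := sub_ne_zero.mpr hlm
  have hx : (l - m) * (x₁ - x₂) = 0 := by linear_combination hm.1 - hl.1
  have hy : (l - m) * (y₁ + y₂) = 0 := by linear_combination hm.2 - hl.2
  exact h ⟨by simpa [hlm', sub_eq_zero] using hx, by simpa [hlm', add_eq_zero_iff_eq_neg] using hy⟩

namespace mordellCurve
variable {a : F}

lemma equation_iff {x y : F} : (mordellCurve a).Equation x y ↔ y ^ 2 = x ^ 3 + a := by
  rw [Affine.equation_iff]
  simp [mordellCurve]

lemma nonsingular_iff {x y : F} :
    (mordellCurve a).Nonsingular x y ↔ y ^ 2 = x ^ 3 + a ∧ (3 * x ^ 2 ≠ 0 ∨ 2 * y ≠ 0) := by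
  rw [Affine.nonsingular_iff, equation_iff]
  simp [mordellCurve, eq_comm (a := (0 : F)), eq_neg_iff_add_eq_zero, two_mul]

lemma negY (x y : F) : (mordellCurve a).negY x y = -y := by
  simp [Affine.negY, mordellCurve]

lemma isElliptic (ha : 6 * a ≠ 0) : (mordellCurve a).IsElliptic := by
  refine ⟨IsUnit.mk0 _ ?_⟩
  have hΔ : (mordellCurve a).Δ = -12 * (6 * a) ^ 2 := by
    simp only [Δ, b₂, b₄, b₆, b₈, mordellCurve]
    ring
  have h12 : (12 : F) ≠ 0 := fun h ↦
    ha (pow_eq_zero_iff two_ne_zero |>.mp (by linear_combination 3 * a ^ 2 * h))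
  rw [hΔ]
  exact mul_ne_zero (neg_ne_zero.mpr h12) (pow_ne_zero 2 ha)

variable {x₁ y₁ x₂ y₂ l : F}

lemma not_neg_of_isSecantSlope (h : (mordellCurve a).Nonsingular x₁ y₁)
    (hl : IsSecantSlope x₁ y₁ x₂ y₂ l) : ¬(x₁ = x₂ ∧ y₁ = -y₂) := by
  rintro ⟨rfl, rfl⟩
  obtain ⟨-, hx | hy⟩ := nonsingular_iff.mp h
  · exact hx (by linear_combination hl.2)
  · exact hy (by linear_combination hl.1)

variable [DecidableEq F]

lemma isSecantSlope_slope (h₁ : (mordellCurve a).Equation x₁ y₁)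
    (h₂ : (mordellCurve a).Equation x₂ y₂) (h : ¬(x₁ = x₂ ∧ y₁ = -y₂)) :
    IsSecantSlope x₁ y₁ x₂ y₂ ((mordellCurve a).slope x₁ x₂ y₁ y₂) := by
  rw [equation_iff] at h₁ h₂
  by_cases hx : x₁ = x₂
  · subst hx
    have hy : y₁ + y₂ ≠ 0 := fun h0 ↦ h ⟨rfl, eq_neg_of_add_eq_zero_left h0⟩
    obtain rfl : y₁ = y₂ := sub_eq_zero.mp <|
      (mul_eq_zero.mp (by linear_combination h₁ - h₂)).resolve_right hy
    rw [Affine.slope_of_Y_ne rfl (by rw [negY]; exact fun h0 ↦ h ⟨rfl, h0⟩), negY, sub_neg_eq_add]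
    refine ⟨by ring, ?_⟩
    rw [div_mul_cancel₀ _ hy]
    simp only [mordellCurve]
    ring
  · have hx' := sub_ne_zero.mpr hx
    rw [Affine.slope_of_X_ne hx]
    refine ⟨by field_simp, ?_⟩
    field_simp
    linear_combination h₂ - h₁

lemma some_add_some (h₁ : (mordellCurve a).Nonsingular x₁ y₁)
    (h₂ : (mordellCurve a).Nonsingular x₂ y₂) (hl : IsSecantSlope x₁ y₁ x₂ y₂ l) :
    ∃ h₃ : (mordellCurve a).Nonsingular (l ^ 2 - x₁ - x₂) (-(l * (l ^ 2 - 2 * x₁ - x₂) + y₁)),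
      Affine.Point.some x₁ y₁ h₁ + .some x₂ y₂ h₂ = .some _ _ h₃ := by
  have hne := not_neg_of_isSecantSlope h₁ hl
  have hslope := (isSecantSlope_slope h₁.1 h₂.1 hne).unique hne hl
  rw [← negY (a := a) x₂ y₂] at hne
  have hX : (mordellCurve a).addX x₁ x₂ l = l ^ 2 - x₁ - x₂ := by
    simp [Affine.addX, mordellCurve]
  have hY : (mordellCurve a).addY x₁ x₂ y₁ l = -(l * (l ^ 2 - 2 * x₁ - x₂) + y₁) := by
    simp only [Affine.addY, Affine.negAddY, negY, hX]
    ring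
  have h₃ := Affine.nonsingular_add h₁ h₂ hne
  rw [hslope, hX, hY] at h₃
  exact ⟨h₃, by simp only [add_some hne, hslope, hX, hY]⟩

/-- A map from a Mordell curve to a commutative group which is odd and compatible with the chord
and tangent construction is a homomorphism. -/
def addMonoidHomOfSecant {G : Type*} [AddCommGroup G] (f : (mordellCurve a).Point → G)
    (zero : f 0 = 0) (neg : ∀ P, f (-P) = -f P)
    (secant : ∀ {x₁ y₁ x₂ y₂ l : F} (h₁ : (mordellCurve a).Nonsingular x₁ y₁)
      (h₂ : (mordellCurve a).Nonsingular x₂ y₂)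
      (h₃ : (mordellCurve a).Nonsingular (l ^ 2 - x₁ - x₂) (-(l * (l ^ 2 - 2 * x₁ - x₂) + y₁))),
      IsSecantSlope x₁ y₁ x₂ y₂ l →
      f (.some _ _ h₃) = f (.some x₁ y₁ h₁) + f (.some x₂ y₂ h₂)) :
    (mordellCurve a).Point →+ G where
  toFun := f
  map_zero' := zero
  map_add' P Q := by
    match P, Q with
    | 0, Q => rw [zero_add, zero, zero_add]
    | .some x y h, 0 => rw [add_zero, zero, add_zero]
    | .some x₁ y₁ h₁, .some x₂ y₂ h₂ =>
      by_cases hneg : x₁ = x₂ ∧ y₁ = -y₂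
      · obtain ⟨rfl, rfl⟩ := hneg
        have : Affine.Point.some x₁ (-y₂) h₁ = -.some x₁ y₂ h₂ := by
          simp only [neg_some, negY]
        rw [this, neg_add_cancel, zero, neg, neg_add_cancel]
      · have hl := isSecantSlope_slope h₁.1 h₂.1 hneg
        obtain ⟨h₃, hadd⟩ := some_add_some h₁ h₂ hl
        rw [hadd, secant h₁ h₂ h₃ hl]

end mordellCurve
end Secant

section Rotation
open Affine.Point (neg_some)
variable {F : Type*} [Field F]
namespace mordellCurve
variable {a ω : F}

lemma nonsingular_mul_left (hω : ω ^ 3 = 1) {x y : F} (h : (mordellCurve a).Nonsingular x y) :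
    (mordellCurve a).Nonsingular (ω * x) y := by
  have hω0 : ω ≠ 0 := by rintro rfl; simp at hω
  rw [nonsingular_iff] at h ⊢
  rw [mul_pow, mul_pow, hω, one_mul, mul_left_comm]
  exact h.imp_right (Or.imp_left (mul_ne_zero (pow_ne_zero 2 hω0)))

variable [DecidableEq F]

/-- The automorphism `(x, y) ↦ (ω x, y)` of a Mordell curve attached to a cube root of unity `ω`. -/
def rotation (a : F) (hω : ω ^ 3 = 1) :
    (mordellCurve a).Point →+ (mordellCurve a).Point :=
  addMonoidHomOfSecant
    (fun
      | .zero => .zero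
      | .some x y h => .some (ω * x) y (nonsingular_mul_left hω h))
    rfl
    (fun
      | .zero => rfl
      | .some x y h => by simp only [neg_some, negY])
    (fun {x₁ y₁ x₂ y₂ l} h₁ h₂ h₃ hl ↦ by
      have hl' : IsSecantSlope (ω * x₁) y₁ (ω * x₂) y₂ (ω ^ 2 * l) :=
        ⟨by linear_combination hl.1 - l * (x₁ - x₂) * hω, by linear_combination ω ^ 2 * hl.2⟩
      obtain ⟨_, hadd⟩ :=
        some_add_some (nonsingular_mul_left hω h₁) (nonsingular_mul_left hω h₂) hl'
      simp only [hadd, Affine.Point.some.injEq]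
      constructor
      · linear_combination (-ω * l ^ 2) * hω
      · linear_combination (l ^ 3 * (ω ^ 3 + 1) - l * (2 * x₁ + x₂)) * hω)

lemma rotation_some (hω : ω ^ 3 = 1) {x y : F} (h : (mordellCurve a).Nonsingular x y) :
    rotation a hω (.some x y h) = .some (ω * x) y (nonsingular_mul_left hω h) := rfl

lemma add_rotation_add_rotation_rotation (hω : ω ^ 3 = 1) (hω' : ω ^ 2 + ω + 1 = 0)
    (P : (mordellCurve a).Point) :
    P + rotation a hω P + rotation a hω (rotation a hω P) = 0 := by
  match P with
  | 0 => simp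
  | .some x y h =>
    have hl : IsSecantSlope x y (ω * x) y 0 := ⟨by ring, by linear_combination x ^ 2 * hω'⟩
    obtain ⟨_, hadd⟩ := some_add_some h (nonsingular_mul_left hω h) hl
    rw [rotation_some, rotation_some, hadd, add_eq_zero_iff_eq_neg, neg_some,
      Affine.Point.some.injEq, negY]
    exact ⟨by linear_combination -x * hω', by ring⟩

/-- The endomorphism `ω - ω²` of a Mordell curve, a square root of `-3` when `ω` is a primitive
cube root of unity. -/
def sqrtNegThree (a : F) (hω : ω ^ 3 = 1) : (mordellCurve a).Point →+ (mordellCurve a).Point :=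
  rotation a hω - (rotation a hω).comp (rotation a hω)

lemma sqrtNegThree_apply (hω : ω ^ 3 = 1) (P : (mordellCurve a).Point) :
    sqrtNegThree a hω P = rotation a hω P - rotation a hω (rotation a hω P) := rfl

lemma sqrtNegThree_sqrtNegThree (hω : ω ^ 3 = 1) (hω' : ω ^ 2 + ω + 1 = 0)
    (P : (mordellCurve a).Point) :
    sqrtNegThree a hω (sqrtNegThree a hω P) = -(3 • P) := by
  have hrot : rotation a hω (rotation a hω P) = -P - rotation a hω P := by
    rw [eq_sub_iff_add_eq, eq_neg_iff_add_eq_zero]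
    rw [← add_rotation_add_rotation_rotation hω hω' P]
    abel
  simp only [sqrtNegThree_apply, map_sub, hrot, map_neg]
  abel

lemma range_nsmul_three_eq (hω : ω ^ 3 = 1) (hω' : ω ^ 2 + ω + 1 = 0) :
    (nsmulAddMonoidHom (α := (mordellCurve a).Point) 3).range =
      ((sqrtNegThree a hω).comp (sqrtNegThree a hω)).range := by
  ext P
  constructor
  · rintro ⟨Q, rfl⟩
    exact ⟨-Q, by simp [sqrtNegThree_sqrtNegThree hω hω']⟩
  · rintro ⟨Q, rfl⟩
    exact ⟨-Q, by simp [sqrtNegThree_sqrtNegThree hω hω']⟩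

lemma mem_range_sqrtNegThree {c x y u v : F} (hω : ω ^ 3 = 1) (hω' : ω ^ 2 + ω + 1 = 0)
    (h : (mordellCurve (c ^ 2)).Nonsingular x y) (h6 : 6 * c ≠ 0)
    (hx : x = u * v) (hu : y - c = u ^ 3) (hv : y + c = v ^ 3) :
    .some x y h ∈ (sqrtNegThree (c ^ 2) hω).range := by
  have h2 : (2 : F) ≠ 0 := fun h0 ↦ h6 (by linear_combination 3 * c * h0)
  have h3 : (3 : F) ≠ 0 := fun h0 ↦ h6 (by linear_combination 2 * c * h0)
  obtain ⟨n, hn⟩ : ∃ n, n = u ^ 2 + u * v + v ^ 2 := ⟨_, rfl⟩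
  obtain ⟨t, ht⟩ : ∃ t, 2 * t = -((2 * ω + 1) * (u + v) * n) := ⟨_, mul_div_cancel₀ _ h2⟩
  have hc : 2 * c = (v - u) * n := by linear_combination hv - hu - (v - u) * hn
  have hn0 : n ≠ 0 := by
    rintro rfl
    exact h6 (by linear_combination 3 * hc)
  have hQ : (mordellCurve (c ^ 2)).Nonsingular (-n) t := by
    refine nonsingular_iff.mpr ⟨?_, .inl (mul_ne_zero h3 (pow_ne_zero 2 (neg_ne_zero.mpr hn0)))⟩
    refine mul_left_cancel₀ (mul_ne_zero h2 h2) ?_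
    linear_combination (2 * t - (2 * ω + 1) * (u + v) * n) * ht + 4 * (u + v) ^ 2 * n ^ 2 * hω' -
      (2 * c + (v - u) * n) * hc + 4 * n ^ 2 * hn
  have hl : IsSecantSlope (ω * -n) t (ω * (ω * -n)) ((mordellCurve (c ^ 2)).negY (ω * (ω * -n)) t)
      (u + v) := by
    rw [negY]
    exact ⟨by linear_combination ht - n * (u + v) * hω', by linear_combination ω ^ 2 * n ^ 2 * hω'⟩
  obtain ⟨_, hadd⟩ := some_add_some (nonsingular_mul_left hω hQ)
    ((Affine.nonsingular_neg _ _).mpr (nonsingular_mul_left hω (nonsingular_mul_left hω hQ))) hl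
  refine ⟨.some (-n) t hQ, ?_⟩
  rw [sqrtNegThree_apply, sub_eq_add_neg, rotation_some, rotation_some, neg_some, hadd,
    Affine.Point.some.injEq]
  refine ⟨by linear_combination n * hω' - hn - hx, mul_left_cancel₀ h2 ?_⟩
  linear_combination -ht - 2 * (u + v) * n * hω' + 3 * (u + v) * hn - hu - hv
end mordellCurve
end Rotation

section PowerClass
variable (F : Type*) [Field F] (n : ℕ)

/-- The group `Fˣ / (Fˣ)ⁿ`, written additively. -/
def PowerClassGroup : Type _ := Additive (Fˣ ⧸ (powMonoidHom n : Fˣ →* Fˣ).range)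

noncomputable instance : AddCommGroup (PowerClassGroup F n) :=
  inferInstanceAs (AddCommGroup (Additive (Fˣ ⧸ (powMonoidHom n : Fˣ →* Fˣ).range)))

variable {F}

open Classical in
/-- The class of `a` in `Fˣ / (Fˣ)ⁿ`, with the junk value `0` for `a = 0`. -/
noncomputable def powerClass (a : F) : PowerClassGroup F n :=
  if h : a = 0 then 0 else Additive.ofMul (QuotientGroup.mk (Units.mk0 a h))

variable {n} {a b : F}

lemma powerClass_of_ne_zero (ha : a ≠ 0) :
    powerClass n a = Additive.ofMul (QuotientGroup.mk (Units.mk0 a ha)) := dif_neg ha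

lemma powerClass_mul (ha : a ≠ 0) (hb : b ≠ 0) :
    powerClass n (a * b) = powerClass n a + powerClass n b := by
  rw [powerClass_of_ne_zero ha, powerClass_of_ne_zero hb, powerClass_of_ne_zero (mul_ne_zero ha hb),
    Units.mk0_mul]
  rfl

lemma powerClass_eq_zero_iff (ha : a ≠ 0) : powerClass n a = 0 ↔ ∃ u, u ^ n = a := by
  rw [powerClass_of_ne_zero ha]
  refine (QuotientGroup.eq_one_iff (Units.mk0 a ha)).trans ⟨?_, ?_⟩
  · rintro ⟨u, hu⟩
    exact ⟨u, by simpa using congrArg Units.val hu⟩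
  · rintro ⟨u, rfl⟩
    by_cases hu : u = 0
    · obtain rfl : n = 0 := by
        by_contra hn
        exact ha (by rw [hu, zero_pow hn])
      exact ⟨1, by ext; simp⟩
    · exact ⟨Units.mk0 u hu, by ext; simp⟩

lemma powerClass_pow (a : F) : powerClass n (a ^ n) = 0 := by
  by_cases h : a ^ n = 0
  · exact dif_pos h
  · exact (powerClass_eq_zero_iff h).mpr ⟨a, rfl⟩

end PowerClass

section Kummer
variable {F : Type*} [Field F] {c : F}
namespace mordellCurve

lemma secant_product {x₁ y₁ x₂ y₂ l d : F} (h₁ : (mordellCurve (c ^ 2)).Equation x₁ y₁)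
    (hl : IsSecantSlope x₁ y₁ x₂ y₂ l) (hd : d ^ 2 = c ^ 2) :
    (y₁ - d) * (y₂ - d) * (-(l * (l ^ 2 - 2 * x₁ - x₂) + y₁) + d) = (l * x₁ - y₁ + d) ^ 3 := by
  rw [equation_iff] at h₁
  obtain ⟨m, rfl⟩ : ∃ m, y₁ = l * x₁ + m := ⟨y₁ - l * x₁, by ring⟩
  obtain rfl : y₂ = l * x₂ + m := by linear_combination -hl.1
  have hsymm₂ : x₁ * x₂ + (x₁ + x₂) * (l ^ 2 - x₁ - x₂) = -2 * l * m := by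
    linear_combination -hl.2
  have hsymm₃ : x₁ * x₂ * (l ^ 2 - x₁ - x₂) = m ^ 2 - c ^ 2 := by
    linear_combination -h₁ + x₁ * hsymm₂
  linear_combination -l ^ 3 * hsymm₃ - l ^ 2 * (m - d) * hsymm₂ - l ^ 3 * hd

variable [DecidableEq F]

/-- The class of `y - c` in `Fˣ / (Fˣ)³` as a function on `y² = x³ + c²`. Since
`(y - c) * (y + c) = x³`, the class of `(y + c)⁻¹` replaces it at the point `(0, c)`. -/
noncomputable def kummerFun (c : F) : (mordellCurve (c ^ 2)).Point → PowerClassGroup F 3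
  | .zero => 0
  | .some _ y _ => if y = c then -powerClass 3 (2 * c) else powerClass 3 (y - c)

lemma kummerFun_of_ne {x y : F} (h : (mordellCurve (c ^ 2)).Nonsingular x y) (hy : y - c ≠ 0) :
    kummerFun c (.some x y h) = powerClass 3 (y - c) := if_neg (sub_ne_zero.mp hy)

lemma kummerFun_of_ne_neg {x y : F} (h : (mordellCurve (c ^ 2)).Nonsingular x y) (hy : y + c ≠ 0) :
    kummerFun c (.some x y h) = -powerClass 3 (y + c) := by
  by_cases hyc : y = c
  · rw [kummerFun, if_pos hyc, hyc, two_mul]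
  · have hy' := sub_ne_zero.mpr hyc
    rw [kummerFun_of_ne h hy', eq_neg_iff_add_eq_zero, ← powerClass_mul hy' hy,
      ← powerClass_pow (n := 3) x]
    congr 1
    linear_combination equation_iff.mp h.1

lemma kummerFun_neg (hc : 2 * c ≠ 0) (P : (mordellCurve (c ^ 2)).Point) :
    kummerFun c (-P) = -kummerFun c P := by
  have hcube {a : F} (ha : a ≠ 0) : powerClass 3 (-a) = powerClass 3 a := by
    rw [← one_mul (-a), ← neg_mul_comm, powerClass_mul (neg_ne_zero.mpr one_ne_zero) ha,
      add_eq_right, ← powerClass_pow (n := 3) (-1 : F)]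
    norm_num
  match P with
  | 0 => exact (neg_zero (G := PowerClassGroup F 3)).symm
  | .some x y h =>
    rw [Affine.Point.neg_some]
    by_cases hy : y + c = 0
    · have hyc : y - c ≠ 0 := fun h0 ↦ hc (by linear_combination hy - h0)
      have hyc' : (mordellCurve (c ^ 2)).negY x y + c ≠ 0 := by
        rw [negY]; contrapose! hyc; linear_combination -hyc
      rw [kummerFun_of_ne h hyc, kummerFun_of_ne_neg _ hyc', negY, ← hcube hyc]
      congr 2
      ring
    · have hy' : (mordellCurve (c ^ 2)).negY x y - c ≠ 0 := by
        rw [negY]; contrapose! hy; linear_combination -hy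
      rw [kummerFun_of_ne_neg h hy, neg_neg, kummerFun_of_ne _ hy', negY, ← hcube hy]
      congr 1
      ring

lemma kummerFun_secant (hc : 2 * c ≠ 0) {x₁ y₁ x₂ y₂ l : F}
    (h₁ : (mordellCurve (c ^ 2)).Nonsingular x₁ y₁) (h₂ : (mordellCurve (c ^ 2)).Nonsingular x₂ y₂)
    (h₃ : (mordellCurve (c ^ 2)).Nonsingular (l ^ 2 - x₁ - x₂)
      (-(l * (l ^ 2 - 2 * x₁ - x₂) + y₁)))
    (hl : IsSecantSlope x₁ y₁ x₂ y₂ l) :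
    kummerFun c (.some _ _ h₃) = kummerFun c (.some x₁ y₁ h₁) + kummerFun c (.some x₂ y₂ h₂) := by
  have hprod := secant_product h₁.1 hl rfl
  have hprod' := secant_product h₁.1 hl (neg_sq c)
  obtain ⟨y₃, hy₃⟩ : ∃ y₃, y₃ = -(l * (l ^ 2 - 2 * x₁ - x₂) + y₁) := ⟨_, rfl⟩
  simp only [← hy₃] at h₃ hprod hprod' ⊢
  simp only [sub_neg_eq_add, ← sub_eq_add_neg] at hprod'
  have hclass {a b d e : F} (ha : a ≠ 0) (hb : b ≠ 0) (hd : d ≠ 0) (h : a * b * d = e ^ 3) :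
      powerClass 3 a + powerClass 3 b + powerClass 3 d = 0 := by
    rw [← powerClass_mul ha hb, ← powerClass_mul (mul_ne_zero ha hb) hd, h, powerClass_pow]
  by_cases h0 : (y₁ - c) * (y₂ - c) * (y₃ + c) = 0
  · have h0' : (y₁ + c) * (y₂ + c) * (y₃ - c) ≠ 0 := by
      intro h0'
      rw [h0, eq_comm, pow_eq_zero_iff three_ne_zero] at hprod
      rw [h0', eq_comm, pow_eq_zero_iff three_ne_zero] at hprod'
      exact hc (by linear_combination hprod - hprod')
    obtain ⟨⟨hy₁, hy₂⟩, hy₃⟩ := mul_ne_zero_iff.mp h0' |>.imp_left mul_ne_zero_iff.mp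
    rw [kummerFun_of_ne_neg h₁ hy₁, kummerFun_of_ne_neg h₂ hy₂, kummerFun_of_ne h₃ hy₃,
      ← sub_eq_zero, ← hclass hy₁ hy₂ hy₃ hprod']
    abel
  · obtain ⟨⟨hy₁, hy₂⟩, hy₃⟩ := mul_ne_zero_iff.mp h0 |>.imp_left mul_ne_zero_iff.mp
    rw [kummerFun_of_ne h₁ hy₁, kummerFun_of_ne h₂ hy₂, kummerFun_of_ne_neg h₃ hy₃, eq_comm,
      eq_neg_iff_add_eq_zero, hclass hy₁ hy₂ hy₃ hprod]

/-- The Kummer map of the isogeny `√-3` on the curve `y² = x³ + c²`. -/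
noncomputable def kummer (hc : 2 * c ≠ 0) : (mordellCurve (c ^ 2)).Point →+ PowerClassGroup F 3 :=
  addMonoidHomOfSecant (kummerFun c) rfl (kummerFun_neg hc) (kummerFun_secant hc)

lemma kummer_some (hc : 2 * c ≠ 0) {x y : F} (h : (mordellCurve (c ^ 2)).Nonsingular x y) :
    kummer hc (.some x y h) = if y = c then -powerClass 3 (2 * c) else powerClass 3 (y - c) := rfl

lemma ker_kummer_le_range_sqrtNegThree {ω : F} (hω : ω ^ 3 = 1) (hω' : ω ^ 2 + ω + 1 = 0)
    (h3 : (3 : F) ≠ 0) (hc : 2 * c ≠ 0) : (kummer hc).ker ≤ (sqrtNegThree (c ^ 2) hω).range := by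
  have h6 : 6 * c ≠ 0 := by
    convert mul_ne_zero h3 hc using 1
    ring
  intro P hP
  match P with
  | 0 => exact zero_mem _
  | .some x y h =>
    have heq := equation_iff.mp h.1
    rw [AddMonoidHom.mem_ker, kummer_some] at hP
    split_ifs at hP with hy
    · subst hy
      obtain ⟨v, hv⟩ := (powerClass_eq_zero_iff hc).mp (neg_eq_zero.mp hP)
      have hx : x = 0 := by simpa using heq
      exact mem_range_sqrtNegThree hω hω' h h6 (u := 0) (v := v) (by simp [hx]) (by simp)
        (by rw [hv]; ring)
    · obtain ⟨u, hu⟩ := (powerClass_eq_zero_iff (sub_ne_zero.mpr hy)).mp hP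
      have hu0 : u ≠ 0 := by
        rintro rfl
        exact hy (by simpa [sub_eq_zero, eq_comm] using hu)
      refine mem_range_sqrtNegThree hω hω' h h6 (mul_div_cancel₀ x hu0).symm hu.symm ?_
      rw [div_pow, hu, eq_div_iff (sub_ne_zero.mpr hy)]
      linear_combination heq

end mordellCurve
end Kummer

section Selmer
open IsDedekindDomain
open scoped WithZero
variable {R : Type*} [CommRing R] [IsDedekindDomain R] {K : Type*} [Field K] [Algebra R K]
  [IsFractionRing R K] {n : ℕ}

lemma exists_pow_eq_of_dvd_count_normalizedFactors {I : Ideal R} (hI : I ≠ ⊥)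
    (h : ∀ P ∈ UniqueFactorizationMonoid.normalizedFactors I,
      n ∣ (UniqueFactorizationMonoid.normalizedFactors I).count P) :
    ∃ J : Ideal R, J ^ n = I := by
  obtain ⟨s, hs⟩ := Multiset.exists_smul_of_dvd_count _ h
  refine ⟨s.prod, ?_⟩
  rw [← Multiset.prod_nsmul, ← hs, Ideal.prod_normalizedFactors_eq_self hI]

lemma exists_eq_unit_mul_pow_of_intValuation [IsPrincipalIdealRing R] (hn : n ≠ 0) {m : R}
    (hm : m ≠ 0) (h : ∀ v : HeightOneSpectrum R, ∃ t : ℤᵐ⁰, v.intValuation m = t ^ n) :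
    ∃ (u : Rˣ) (b : R), m = u * b ^ n := by
  classical
  have hI : Ideal.span {m} ≠ (⊥ : Ideal R) := by simpa using hm
  obtain ⟨J, hJ⟩ := exists_pow_eq_of_dvd_count_normalizedFactors (n := n) hI fun P hP ↦ by
    have hprime := UniqueFactorizationMonoid.prime_of_normalized_factor P hP
    have hP' := Ideal.isPrime_of_prime hprime
    obtain ⟨t, ht⟩ := h ⟨P, hP', hprime.ne_zero⟩
    rw [HeightOneSpectrum.intValuation_if_neg _ hm,
      Ideal.count_associates_factors_eq hI hP' hprime.ne_zero] at ht
    have ht0 : t ≠ 0 := by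
      rintro rfl
      simp [hn] at ht
    rw [← WithZero.exp_log ht0, ← WithZero.exp_nsmul, WithZero.exp_inj, nsmul_eq_mul] at ht
    exact Int.natCast_dvd_natCast.mp ⟨-WithZero.log t, by linear_combination -ht⟩
  obtain ⟨b, rfl⟩ := (IsPrincipalIdealRing.principal J).principal
  rw [Ideal.submodule_span_eq, Ideal.span_singleton_pow,
    Ideal.span_singleton_eq_span_singleton] at hJ
  obtain ⟨u, hu⟩ := hJ
  exact ⟨u, b, by rw [← hu, mul_comm]⟩

lemma valuationOfNeZeroMod_mk_eq_one_iff (hn : n ≠ 0) (v : HeightOneSpectrum R) (a : Kˣ) :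
    v.valuationOfNeZeroMod n (QuotientGroup.mk a : Kˣ ⧸ (powMonoidHom n : Kˣ →* Kˣ).range) = 1 ↔
      ∃ t : ℤᵐ⁰, v.valuation K (a : K) = t ^ n := by
  change Multiplicative.ofAdd (Int.quotientZMultiplesNatEquivZMod n
    (QuotientAddGroup.mk (v.valuationOfNeZero a).toAdd)) = 1 ↔ _
  rw [ofAdd_eq_one, AddEquiv.map_eq_zero_iff, QuotientAddGroup.eq_zero_iff,
    Int.mem_zmultiples_iff, ← HeightOneSpectrum.valuationOfNeZero_eq]
  constructor
  · rintro ⟨k, hk⟩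
    refine ⟨(Multiplicative.ofAdd k : Multiplicative ℤ), ?_⟩
    rw [← WithZero.coe_pow, ← ofAdd_nsmul, nsmul_eq_mul, ← hk, ofAdd_toAdd]
  · rintro ⟨t, ht⟩
    have ht0 : t ≠ 0 := by
      rintro rfl
      simp [hn] at ht
    obtain ⟨t, rfl⟩ := WithZero.ne_zero_iff_exists.mp ht0
    rw [← WithZero.coe_pow, WithZero.coe_inj] at ht
    exact ⟨t.toAdd, by rw [ht, toAdd_pow, nsmul_eq_mul]⟩

lemma fromUnit_surjective [IsPrincipalIdealRing R] (hn : n ≠ 0) :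
    Function.Surjective (selmerGroup.fromUnit (R := R) (K := K) (n := n)) := by
  rintro ⟨x, hx⟩
  obtain ⟨a, rfl⟩ := QuotientGroup.mk_surjective x
  obtain ⟨r, d, hd, hrd⟩ := IsFractionRing.div_surjective (A := R) (a : K)
  have hd0 : algebraMap R K d ≠ 0 := by simpa using nonZeroDivisors.ne_zero hd
  have hprod : algebraMap R K (r * d ^ (n - 1)) = a * algebraMap R K d ^ n := by
    rw [← hrd, map_mul, map_pow, ← mul_pow_sub_one hn]
    field_simp
  have hm : r * d ^ (n - 1) ≠ 0 := by
    intro h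
    rw [h, map_zero, eq_comm] at hprod
    exact mul_ne_zero a.ne_zero (pow_ne_zero n hd0) hprod
  obtain ⟨u, b, hub⟩ := exists_eq_unit_mul_pow_of_intValuation hn hm fun v ↦ by
    obtain ⟨t, ht⟩ := (valuationOfNeZeroMod_mk_eq_one_iff hn v a).mp (hx v (Set.notMem_empty v))
    refine ⟨t * v.valuation K (algebraMap R K d), ?_⟩
    calc v.intValuation (r * d ^ (n - 1)) = v.valuation K (algebraMap R K (r * d ^ (n - 1))) :=
          (v.valuation_of_algebraMap _).symm
      _ = (t * v.valuation K (algebraMap R K d)) ^ n := by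
          rw [hprod, map_mul, map_pow, ht, mul_pow]
  rw [hub, map_mul, map_pow] at hprod
  have hb0 : algebraMap R K b ≠ 0 := by
    intro h
    rw [h, zero_pow hn, mul_zero, eq_comm] at hprod
    exact mul_ne_zero a.ne_zero (pow_ne_zero n hd0) hprod
  refine ⟨u, Subtype.ext (QuotientGroup.eq.mpr ⟨Units.mk0 _ (div_ne_zero hb0 hd0), ?_⟩)⟩
  rw [eq_inv_mul_iff_mul_eq]
  ext
  simp only [powMonoidHom_apply, Units.val_mul, Units.val_pow_eq_pow_val, Units.val_mk0, div_pow]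
  rw [← mul_div_assoc, div_eq_iff (pow_ne_zero n hd0), ← hprod]
  rfl

lemma natCard_selmerGroup_dvd [IsPrincipalIdealRing R] (hn : n ≠ 0)
    {S : Set (HeightOneSpectrum R)} (hS : S.Finite) :
    Nat.card (selmerGroup (K := K) (S := S) (n := n)) ∣ Nat.card Rˣ * n ^ S.ncard := by
  have := hS.to_subtype
  let val := selmerGroup.valuation (R := R) (K := K) (S := S) (n := n)
  have hker : Nat.card val.ker ∣ Nat.card Rˣ := by
    rw [selmerGroup.valuation_ker_eq]
    exact (Subgroup.card_comap_dvd_of_injective _ _ (Subgroup.subtype_injective _)).trans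
      (Subgroup.card_dvd_of_surjective _ (fromUnit_surjective hn))
  have hindex : val.ker.index ∣ n ^ S.ncard := by
    rw [Subgroup.index_ker]
    convert Subgroup.card_subgroup_dvd_card val.range
    rw [Nat.card_fun, Nat.card_coe_set_eq, Nat.card_congr Multiplicative.toAdd, Nat.card_zmod]
  rw [← val.ker.card_mul_index]
  exact mul_dvd_mul hker hindex

lemma exists_valuation_eq_pow_three {Γ : Type*} [LinearOrderedCommGroupWithZero Γ]
    (v : Valuation K Γ) {a b x : K} (ha : a ≠ 0) (hab : a * b = x ^ 3) (hv : v (b - a) = 1) :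
    ∃ t, v a = t ^ 3 := by
  have ha' : v a ≠ 0 := v.ne_zero_iff.mpr ha
  have hmul : v a * v b = v x ^ 3 := by rw [← map_mul, hab, map_pow]
  rcases lt_trichotomy (v a) 1 with hlt | heq | hgt
  · have hb : v b = 1 := by
      rw [← add_sub_cancel a b, v.map_add_eq_of_lt_right (by rwa [hv]), hv]
    exact ⟨v x, by rw [← hmul, hb, mul_one]⟩
  · exact ⟨1, by rw [heq, one_pow]⟩
  · have hb : v b = v a := by
      rw [← add_sub_cancel a b, v.map_add_eq_of_lt_left (by rwa [hv])]
    rw [hb] at hmul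
    refine ⟨v a / v x, ?_⟩
    rw [div_pow, ← hmul, pow_succ, sq, mul_div_cancel_left₀ _ (mul_ne_zero ha' ha')]
end Selmer

section KummerImage
open IsDedekindDomain
variable {R : Type*} [CommRing R] [IsDedekindDomain R] {K : Type*} [Field K] [Algebra R K]
  [IsFractionRing R K] {n : ℕ} {c : K} {S : Set (HeightOneSpectrum R)}

variable (K n S) in
/-- The Selmer group `K⟮S, n⟯`, written additively. -/
noncomputable def selmerAddGroup : AddSubgroup (PowerClassGroup K n) :=
  Subgroup.toAddSubgroup (selmerGroup (R := R) (K := K) (S := S) (n := n))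

lemma powerClass_mem_selmerAddGroup (hn : n ≠ 0) {a : K} (ha : a ≠ 0)
    (h : ∀ v ∉ S, ∃ t, v.valuation K a = t ^ n) : powerClass n a ∈ selmerAddGroup K n S := by
  rw [powerClass_of_ne_zero ha]
  exact fun v hv ↦ (valuationOfNeZeroMod_mk_eq_one_iff hn v _).mpr (h v hv)

namespace mordellCurve
variable [DecidableEq K]

lemma kummer_mem_selmerAddGroup (hc : 2 * c ≠ 0) (hS : ∀ v ∉ S, v.valuation K (2 * c) = 1)
    (P : (mordellCurve (c ^ 2)).Point) : kummer hc P ∈ selmerAddGroup K 3 S := by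
  match P with
  | 0 => exact zero_mem _
  | .some x y h =>
    rw [kummer_some]
    split_ifs with hy
    · refine neg_mem (powerClass_mem_selmerAddGroup three_ne_zero hc fun v hv ↦ ⟨1, ?_⟩)
      rw [hS v hv, one_pow]
    · have hy' := sub_ne_zero.mpr hy
      refine powerClass_mem_selmerAddGroup three_ne_zero hy' fun v hv ↦ ?_
      refine exists_valuation_eq_pow_three (b := y + c) (x := x) _ hy' ?_ ?_
      · linear_combination equation_iff.mp h.1
      · rw [← hS v hv]
        congr 1
        ring

lemma index_ker_kummer_dvd [IsPrincipalIdealRing R] (hc : 2 * c ≠ 0) (hSfin : S.Finite)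
    (hS : ∀ v ∉ S, v.valuation K (2 * c) = 1) :
    (kummer hc).ker.index ∣ Nat.card Rˣ * 3 ^ S.ncard := by
  rw [AddSubgroup.index_ker]
  have hle : (kummer hc).range ≤ selmerAddGroup K 3 S := by
    rintro _ ⟨P, rfl⟩
    exact kummer_mem_selmerAddGroup hc hS P
  exact (AddSubgroup.card_dvd_of_le hle).trans (natCard_selmerGroup_dvd three_ne_zero hSfin)

lemma index_range_nsmul_three_dvd [IsPrincipalIdealRing R] {ω : K} (hω : ω ^ 3 = 1)
    (hω' : ω ^ 2 + ω + 1 = 0) (h3 : (3 : K) ≠ 0) (hc : 2 * c ≠ 0) (hSfin : S.Finite)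
    (hS : ∀ v ∉ S, v.valuation K (2 * c) = 1) :
    (nsmulAddMonoidHom (α := (mordellCurve (c ^ 2)).Point) 3).range.index ∣
      (Nat.card Rˣ * 3 ^ S.ncard) ^ 2 := by
  rw [range_nsmul_three_eq hω hω']
  refine (index_range_comp_self_dvd _).trans (pow_dvd_pow_of_dvd ?_ 2)
  exact (AddSubgroup.index_dvd_of_le (ker_kummer_le_range_sqrtNegThree hω hω' h3 hc)).trans
    (index_ker_kummer_dvd hc hSfin hS)
end mordellCurve
end KummerImage

section Primes
open IsDedekindDomain NumberField

lemma finite_setOf_mem_asIdeal {R : Type*} [CommRing R] [IsDedekindDomain R] {x : R} (hx : x ≠ 0) :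
    {v : HeightOneSpectrum R | x ∈ v.asIdeal}.Finite := by
  simpa only [Ideal.dvd_span_singleton] using
    Ideal.finite_factors (Ideal.span_singleton_eq_bot.not.mpr hx)

variable (K : Type*) [Field K] [NumberField K]

lemma ncard_setOf_prime_mem_asIdeal_le [IsGalois ℚ K] {p : ℕ} (hp : p.Prime) :
    {v : HeightOneSpectrum (𝓞 K) | (p : 𝓞 K) ∈ v.asIdeal}.ncard ≤ Module.finrank ℚ K := by
  have hmax : (Ideal.span {(p : ℤ)}).IsMaximal :=
    PrincipalIdealRing.isMaximal_of_irreducible (Nat.prime_iff_prime_int.mp hp).irreducible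
  have hcard := Ideal.ncard_primesOver_mul_ramificationIdxIn_mul_inertiaDegIn
    (Ideal.span {(p : ℤ)}) (𝓞 K) Gal(K/ℚ)
  rw [IsGalois.card_aut_eq_finrank] at hcard
  have hfin : ((Ideal.span {(p : ℤ)}).primesOver (𝓞 K)).Finite :=
    Set.finite_of_ncard_ne_zero (left_ne_zero_of_mul (hcard ▸ Module.finrank_pos.ne'))
  have hmaps : ∀ v ∈ {v : HeightOneSpectrum (𝓞 K) | (p : 𝓞 K) ∈ v.asIdeal},
      v.asIdeal ∈ (Ideal.span {(p : ℤ)}).primesOver (𝓞 K) := by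
    refine fun v hv ↦ ⟨v.isPrime, ⟨hmax.eq_of_le (Ideal.IsPrime.under ℤ v.asIdeal).ne_top ?_⟩⟩
    rw [Ideal.span_singleton_le_iff_mem, Ideal.mem_comap]
    simpa using hv
  exact (Set.ncard_le_ncard_of_injOn _ hmaps (fun v _ w _ h ↦ HeightOneSpectrum.ext h) hfin).trans
    (Nat.le_of_dvd Module.finrank_pos (Dvd.intro _ hcard))

lemma exists_mem_primeFactors_natCast_mem {R : Type*} [CommSemiring R] {I : Ideal R}
    (hI : I.IsPrime) {m : ℕ} (hm : m ≠ 0) (h : (m : R) ∈ I) :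
    ∃ p ∈ m.primeFactors, (p : R) ∈ I := by
  rw [← Nat.prod_primeFactorsList hm, Nat.cast_list_prod, ← Multiset.prod_coe,
    hI.multiset_prod_mem_iff_exists_mem] at h
  obtain ⟨_, hq, hqI⟩ := h
  obtain ⟨p, hp, rfl⟩ := List.mem_map.mp (Multiset.mem_coe.mp hq)
  exact ⟨p, List.mem_toFinset.mpr hp, hqI⟩

lemma ncard_setOf_natCast_mem_asIdeal_le [IsGalois ℚ K] {m : ℕ} (hm : m ≠ 0) :
    {v : HeightOneSpectrum (𝓞 K) | (m : 𝓞 K) ∈ v.asIdeal}.ncard ≤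
      m.primeFactors.card * Module.finrank ℚ K := by
  let V (p : ℕ) := {v : HeightOneSpectrum (𝓞 K) | (p : 𝓞 K) ∈ v.asIdeal}
  have hsub : V m ⊆ ⋃ p ∈ m.primeFactors, V p := fun v hv ↦ by
    simpa only [V, Set.mem_iUnion, exists_prop, Set.mem_ofPred_eq] using
      exists_mem_primeFactors_natCast_mem v.isPrime hm hv
  have hfin : (⋃ p ∈ m.primeFactors, V p).Finite :=
    m.primeFactors.finite_toSet.biUnion fun p hp ↦
      finite_setOf_mem_asIdeal (Nat.cast_ne_zero.mpr (Nat.prime_of_mem_primeFactors hp).ne_zero)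
  calc (V m).ncard ≤ (⋃ p ∈ m.primeFactors, V p).ncard := Set.ncard_le_ncard hsub hfin
    _ ≤ ∑ p ∈ m.primeFactors, (V p).ncard := Finset.set_ncard_biUnion_le _ _
    _ ≤ m.primeFactors.card * Module.finrank ℚ K :=
        Finset.sum_le_card_nsmul _ _ _ fun p hp ↦
          ncard_setOf_prime_mem_asIdeal_le K (Nat.prime_of_mem_primeFactors hp)

lemma valuation_natCast_eq_one {R : Type*} [CommRing R] [IsDedekindDomain R] (L : Type*) [Field L]
    [Algebra R L] [IsFractionRing R L] (v : HeightOneSpectrum R) {m : ℕ}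
    (hm : (m : R) ∉ v.asIdeal) :
    v.valuation L (m : L) = 1 := by
  rw [← map_natCast (algebraMap R L)]
  exact le_antisymm (v.valuation_le_one _) (not_lt.mp fun h ↦
    hm ((v.valuation_lt_one_iff_mem _).mp h))

lemma finite_units_ringOfIntegers_and_card_le [IsCyclotomicExtension {3} ℚ K] :
    Finite (𝓞 K)ˣ ∧ Nat.card (𝓞 K)ˣ ≤ 6 := by
  have hζ := IsCyclotomicExtension.zeta_spec 3 ℚ K
  obtain ⟨η, hη⟩ : ∃ η : (𝓞 K)ˣ, ∀ u, u ∈ [1, -1, η, -η, η ^ 2, -η ^ 2] :=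
    ⟨_, fun u ↦ IsCyclotomicExtension.Rat.Three.Units.mem hζ u⟩
  have hsurj : Function.Surjective [1, -1, η, -η, η ^ 2, -η ^ 2].get :=
    fun u ↦ List.mem_iff_get.mp (hη u)
  exact ⟨.of_surjective _ hsurj, (Nat.card_le_card_of_surjective _ hsurj).trans (by simp)⟩
end Primes

section BaseChange
variable {F : Type*} [Field F] [DecidableEq F] {L : Type*} [Field L] [DecidableEq L] [Algebra F L]

lemma finite_point_and_finrank_le_of_baseChange_eq {W : Affine F} {V : Affine L}
    (h : W.baseChange L = V) [Module.Finite ℤ V.Point] :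
    Module.Finite ℤ W.Point ∧ Module.finrank ℤ W.Point ≤ Module.finrank ℤ V.Point := by
  subst h
  let f : W.Point →+ (W.baseChange L).toAffine.Point :=
    Affine.Point.baseChange (W' := W) F L
  have hf : Function.Injective f.toIntLinearMap := Affine.Point.map_injective (W' := W) _
  exact ⟨.of_injective _ hf, LinearMap.finrank_le_finrank_of_injective hf⟩
end BaseChange

section Rank
open IsDedekindDomain NumberField

namespace mordellCurve

lemma finite_point_and_pow_finrank_dvd {R : Type*} [CommRing R] [IsDedekindDomain R]
    [IsPrincipalIdealRing R] [Finite Rˣ] {K : Type*} [Field K] [Algebra R K] [IsFractionRing R K]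
    [DecidableEq K] [AdmissibleAbsValues K] [Northcott (logHeight₁ (K := K))] {ω c : K}
    (hω : ω ^ 2 + ω + 1 = 0) (h6 : 6 * c ≠ 0) {S : Set (HeightOneSpectrum R)} (hSfin : S.Finite)
    (hS : ∀ v ∉ S, v.valuation K (2 * c) = 1) :
    Module.Finite ℤ (mordellCurve (c ^ 2)).Point ∧
      3 ^ Module.finrank ℤ (mordellCurve (c ^ 2)).Point ∣ (Nat.card Rˣ * 3 ^ S.ncard) ^ 2 := by
  have hω3 : ω ^ 3 = 1 := by linear_combination (ω - 1) * hω
  have h3 : (3 : K) ≠ 0 := fun h ↦ h6 (by linear_combination 2 * c * h)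
  have hc : 2 * c ≠ 0 := fun h ↦ h6 (by linear_combination 3 * h)
  have hell : (mordellCurve (c ^ 2)).IsElliptic := by
    refine isElliptic fun h ↦ h6 (pow_eq_zero_iff two_ne_zero |>.mp ?_)
    linear_combination 6 * h
  have hdvd := index_range_nsmul_three_dvd hω3 hω h3 hc hSfin hS
  have hindex : (nsmulAddMonoidHom (α := (mordellCurve (c ^ 2)).Point) 3).range.FiniteIndex :=
    ⟨ne_zero_of_dvd_ne_zero (pow_ne_zero 2 (mul_ne_zero Nat.card_pos.ne' (by positivity))) hdvd⟩
  have hfin : Module.Finite ℤ (mordellCurve (c ^ 2)).Point :=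
    Module.Finite.iff_addGroup_fg.mpr (addGroupFG_point_of_finiteIndex (by norm_num) hindex)
  exact ⟨hfin, (pow_finrank_dvd_index_range_nsmul 3).trans hdvd⟩

end mordellCurve

lemma card_primeFactors_twelve_mul_sq_le (M : ℕ) :
    (12 * M ^ 2).primeFactors.card ≤ M.primeFactors.card + 2 := by
  obtain rfl | hM := eq_or_ne M 0
  · simp
  have h12 : (12 : ℕ).primeFactors = {2, 3} := by
    rw [show 12 = 2 ^ 2 * 3 by rfl, Nat.primeFactors_mul (by norm_num) (by norm_num),
      Nat.primeFactors_prime_pow two_ne_zero Nat.prime_two, Nat.prime_three.primeFactors]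
    rfl
  rw [Nat.primeFactors_mul (by norm_num) (pow_ne_zero 2 hM), Nat.primeFactors_pow M two_ne_zero,
    h12, add_comm]
  exact Finset.card_union_le _ _

lemma le_of_three_pow_dvd {r s u : ℕ} (hu₀ : u ≠ 0) (hu : u ≤ 6)
    (h : 3 ^ r ∣ (u * 3 ^ s) ^ 2) : r ≤ 2 * s + 3 := by
  refine Nat.lt_succ_iff.mp ((Nat.pow_lt_pow_iff_right (a := 3) (by norm_num)).mp ?_)
  calc 3 ^ r ≤ (u * 3 ^ s) ^ 2 := Nat.le_of_dvd (by positivity) h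
    _ ≤ (6 * 3 ^ s) ^ 2 := by gcongr
    _ < 3 ^ (2 * s + 4) := by
      rw [mul_pow, ← pow_mul, mul_comm s, pow_add, mul_comm]
      gcongr
      norm_num

lemma exists_sq_add_self_add_one_eq_zero (F L : Type*) [Field F] [Field L] [Algebra F L]
    [IsCyclotomicExtension {3} F L] [NeZero ((3 : ℕ) : L)] : ∃ ω : L, ω ^ 2 + ω + 1 = 0 :=
  ⟨IsCyclotomicExtension.zeta 3 F L, by
    simpa using (IsCyclotomicExtension.zeta_spec 3 F L).isRoot_cyclotomic (by decide)⟩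

lemma ncard_setOf_twelve_mul_sq_mem_asIdeal_le (K : Type*) [Field K] [NumberField K]
    [IsCyclotomicExtension {3} ℚ K] {M : ℕ} (hM : M ≠ 0) :
    {v : HeightOneSpectrum (𝓞 K) | ((12 * M ^ 2 : ℕ) : 𝓞 K) ∈ v.asIdeal}.ncard ≤
      2 * (M.primeFactors.card + 2) := by
  have hgal := IsCyclotomicExtension.isGalois {3} ℚ K
  have hdeg : Module.finrank ℚ K = 2 :=
    IsCyclotomicExtension.finrank K (Polynomial.cyclotomic.irreducible_rat three_pos)
  rw [mul_comm 2]
  nth_rw 3 [← hdeg]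
  exact (ncard_setOf_natCast_mem_asIdeal_le K (by positivity)).trans
    (Nat.mul_le_mul_right _ (card_primeFactors_twelve_mul_sq_le M))

lemma finite_point_and_finrank_le_of_sq_eq {K : Type*} [Field K] [NumberField K]
    [IsCyclotomicExtension {3} ℚ K] [DecidableEq K] {M : ℕ} (hM : M ≠ 0) {c : K}
    (hc : c ^ 2 = -3 * M ^ 2) :
    Module.Finite ℤ (mordellCurve (c ^ 2)).Point ∧
      Module.finrank ℤ (mordellCurve (c ^ 2)).Point ≤ 4 * M.primeFactors.card + 11 := by
  have h6 : 6 * c ≠ 0 := by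
    refine mul_ne_zero (by norm_num) fun h ↦ ?_
    rw [h, zero_pow two_ne_zero, eq_comm] at hc
    exact mul_ne_zero (by norm_num) (pow_ne_zero 2 (Nat.cast_ne_zero.mpr hM)) hc
  let S := {v : HeightOneSpectrum (𝓞 K) | ((12 * M ^ 2 : ℕ) : 𝓞 K) ∈ v.asIdeal}
  have hSfin : S.Finite := finite_setOf_mem_asIdeal (Nat.cast_ne_zero.mpr (by positivity))
  have hval : ∀ v ∉ S, v.valuation K (2 * c) = 1 := by
    intro v hv
    refine (pow_eq_one_iff_of_nonneg zero_le two_ne_zero).mp ?_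
    rw [← map_pow, ← valuation_natCast_eq_one K v hv, ← Valuation.map_neg]
    congr 1
    push_cast
    linear_combination -4 * hc
  have hpid := IsCyclotomicExtension.Rat.three_pid K
  obtain ⟨ω, hω⟩ := exists_sq_add_self_add_one_eq_zero ℚ K
  obtain ⟨hunits, hcard⟩ := finite_units_ringOfIntegers_and_card_le K
  obtain ⟨hfin, hdvd⟩ := mordellCurve.finite_point_and_pow_finrank_dvd hω h6 hSfin hval
  have hrank := le_of_three_pow_dvd Nat.card_pos.ne' hcard hdvd
  have hS : S.ncard ≤ 2 * (M.primeFactors.card + 2) :=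
    ncard_setOf_twelve_mul_sq_mem_asIdeal_le K hM
  exact ⟨hfin, by omega⟩

lemma baseChange_EM (M : ℕ) (L : Type*) [Field L] [Algebra ℚ L] :
    (EM M).baseChange L = mordellCurve (-3 * M ^ 2 : L) := by
  ext <;> simp [-eq_ratCast, EM, mordellCurve, map_ofNat]

lemma finite_point_EM_and_finrank_le {M : ℕ} (hM : M ≠ 0) :
    Module.Finite ℤ (EM M).Point ∧
      Module.finrank ℤ (EM M).Point ≤ 4 * M.primeFactors.card + 11 := by
  let K := CyclotomicField 3 ℚ
  have : DecidableEq K := Classical.decEq K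
  -- `K` is a `ℚ`-algebra both as a cyclotomic field and as a field of characteristic zero; the two
  -- structures agree only propositionally.
  have hcycl : IsCyclotomicExtension {3} ℚ K := by
    convert CyclotomicField.isCyclotomicExtension 3 ℚ
    exacts [rfl, Subsingleton.elim _ _]
  obtain ⟨ω, hω⟩ := exists_sq_add_self_add_one_eq_zero ℚ K
  have hc : (M * (2 * ω + 1)) ^ 2 = -3 * (M : K) ^ 2 := by
    linear_combination 4 * (M : K) ^ 2 * hω
  have hbase : (EM M).baseChange K = mordellCurve ((M * (2 * ω + 1)) ^ 2) := by
    rw [hc, baseChange_EM]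
  obtain ⟨hfin, hrank⟩ := finite_point_and_finrank_le_of_sq_eq hM hc
  exact (finite_point_and_finrank_le_of_baseChange_eq hbase).imp_right fun h ↦ h.trans hrank
end Rank

section LogBounds
lemma factorial_card_add_one_le_prod (s : Finset ℕ) (hs : ∀ n ∈ s, 2 ≤ n) :
    (s.card + 1).factorial ≤ ∏ n ∈ s, n := by
  induction s using Finset.induction_on_max with
  | empty => simp
  | insert a s hlt ih =>
    have ha : a ∉ s := fun h ↦ lt_irrefl _ (hlt a h)
    have hs' : ∀ n ∈ s, 2 ≤ n := fun n hn ↦ hs n (Finset.mem_insert_of_mem hn)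
    have hcard : s.card ≤ a - 2 := by
      simpa using Finset.card_le_card fun n hn ↦ Finset.mem_Ico.mpr ⟨hs' n hn, hlt n hn⟩
    have h2 : 2 ≤ a := hs a (Finset.mem_insert_self a s)
    rw [Finset.prod_insert ha, Finset.card_insert_of_notMem ha, Nat.factorial_succ]
    exact Nat.mul_le_mul (by lia) (ih hs')

lemma factorial_card_primeFactors_add_one_le {M : ℕ} (hM : M ≠ 0) :
    (M.primeFactors.card + 1).factorial ≤ M :=
  (factorial_card_add_one_le_prod _ fun _ hp ↦ (Nat.prime_of_mem_primeFactors hp).two_le).trans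
    (Nat.le_of_dvd (Nat.pos_of_ne_zero hM) (Nat.prod_primeFactors_dvd M))

lemma mul_log_le_log_factorial_add (n : ℕ) :
    n * Real.log n ≤ Real.log n.factorial + n := by
  rcases eq_or_ne n 0 with rfl | hn
  · simp
  have h := Real.log_le_log (by positivity) (Real.pow_div_factorial_le_exp n n.cast_nonneg n)
  rw [Real.log_exp, Real.log_div (by positivity) (by positivity), Real.log_pow] at h
  linarith

lemma two_pow_le_two_mul_factorial : ∀ n : ℕ, 2 ^ n ≤ 2 * n.factorial
  | 0 => one_le_two
  | n + 1 => by
    rw [pow_succ', add_comm n]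
    exact Nat.mul_le_mul_left 2 (by simpa using Nat.factorial_mul_pow_le_factorial (m := 1))

lemma mul_log_two_le_log_two_add_log_factorial (n : ℕ) :
    n * Real.log 2 ≤ Real.log 2 + Real.log n.factorial := by
  have h : (2 : ℝ) ^ n ≤ 2 * n.factorial := by exact_mod_cast two_pow_le_two_mul_factorial n
  simpa [Real.log_mul, n.factorial_ne_zero] using Real.log_le_log (by positivity) h

lemma log_le_two_mul_sqrt {x : ℝ} (hx : 0 ≤ x) : Real.log x ≤ 2 * √x := by
  have h := Real.log_le_self (Real.sqrt_nonneg x)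
  rw [Real.log_sqrt hx] at h
  linarith

lemma mul_log_le_of_log_factorial_le {n : ℕ} {x : ℝ} (hx : 1 ≤ x)
    (hn : Real.log n.factorial ≤ x) : n * Real.log x ≤ 12 * x := by
  by_cases hnx : (n : ℝ) ^ 2 ≤ x
  · calc n * Real.log x ≤ √x * (2 * √x) :=
        mul_le_mul (Real.le_sqrt_of_sq_le hnx) (log_le_two_mul_sqrt (by linarith))
          (Real.log_nonneg hx) (Real.sqrt_nonneg x)
      _ = 2 * x := by rw [mul_left_comm, Real.mul_self_sqrt (by linarith)]
      _ ≤ 12 * x := by linarith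
  · have hlog : Real.log x ≤ 2 * Real.log n := by
      simpa using Real.log_le_log (by linarith) (not_le.mp hnx).le
    have hn3 : (n : ℝ) ≤ 3 * x := by
      nlinarith [mul_log_two_le_log_two_add_log_factorial n, Real.log_two_gt_d9]
    calc n * Real.log x ≤ n * (2 * Real.log n) := by gcongr
      _ = 2 * (n * Real.log n) := by ring
      _ ≤ 2 * (x + 3 * x) := by linarith [mul_log_le_log_factorial_add n]
      _ ≤ 12 * x := by linarith

lemma one_lt_log_three_mul {x : ℝ} (hx : 1 ≤ x) : 1 < Real.log (3 * x) := by
  rw [Real.lt_log_iff_exp_lt (by positivity)]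
  linarith [Real.exp_one_lt_three]

lemma card_primeFactors_add_one_le {M : ℕ} (hM : M ≠ 0) :
    (M.primeFactors.card : ℝ) + 1 ≤ 12 * Real.log (3 * M) / Real.log (Real.log (3 * M)) := by
  have hM1 : (1 : ℝ) ≤ M := by exact_mod_cast Nat.one_le_iff_ne_zero.mpr hM
  have hlog := one_lt_log_three_mul hM1
  have hfac : ((M.primeFactors.card + 1).factorial : ℝ) ≤ 3 * M := by
    linarith [Nat.cast_le (α := ℝ) |>.mpr (factorial_card_primeFactors_add_one_le hM)]
  rw [le_div_iff₀ (Real.log_pos hlog)]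
  exact_mod_cast mul_log_le_of_log_factorial_le hlog.le
    (Real.log_le_log (by positivity) hfac)
end LogBounds

theorem rank_EM_bound_general {M : ℕ} (hM : 0 < M) :
    Module.rank ℤ (EM M).Point < Cardinal.aleph0 ∧
      (Module.finrank ℤ (EM M).Point : ℝ) ≤ 12 * (M.primeFactors.card + 1) ∧
      ((M.primeFactors.card : ℝ) + 1) ≤ 12 * Real.log (3 * M) / Real.log (Real.log (3 * M)) ∧
      (Module.finrank ℤ (EM M).Point : ℝ) ≤
        12 ^ 2 * Real.log (3 * M) / Real.log (Real.log (3 * M)) := by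
  obtain ⟨_, hrank⟩ := finite_point_EM_and_finrank_le hM.ne'
  have hω := card_primeFactors_add_one_le hM.ne'
  have hlin : (Module.finrank ℤ (EM M).Point : ℝ) ≤ 12 * (M.primeFactors.card + 1) := by
    exact_mod_cast (by lia : Module.finrank ℤ (EM M).Point ≤ 12 * (M.primeFactors.card + 1))
  refine ⟨Module.rank_lt_aleph0 ℤ _, hlin, hω, ?_⟩
  calc (Module.finrank ℤ (EM M).Point : ℝ)
      ≤ 12 * (12 * Real.log (3 * M) / Real.log (Real.log (3 * M))) := hlin.trans (by gcongr)
    _ = 12 ^ 2 * Real.log (3 * M) / Real.log (Real.log (3 * M)) := by ring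

/-- There is an absolute constant `C` such that for every cube-free positive integer `M`, the
Mordell–Weil group `E_M(ℚ)` of `E_M : Y² = X³ - 3M²` has finite rank `r(M)` with
`r(M) ≤ C(ω(M) + 1)`, and moreover `ω(M) + 1 ≤ C log(3M)/log log(3M)`; in particular
`r(M) ≤ C² log(3M)/log log(3M)`. Here `ω(M)` is the number of distinct prime factors of `M`. -/
theorem rank_EM_bound :
    ∃ C : ℝ, 0 < C ∧ ∀ M : ℕ, 0 < M → (∀ p : ℕ, p.Prime → ¬ p ^ 3 ∣ M) →
      Module.rank ℤ (EM M).Point < Cardinal.aleph0 ∧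
      (Module.finrank ℤ (EM M).Point : ℝ) ≤ C * (M.primeFactors.card + 1) ∧
      ((M.primeFactors.card : ℝ) + 1) ≤ C * Real.log (3 * M) / Real.log (Real.log (3 * M)) ∧
      (Module.finrank ℤ (EM M).Point : ℝ) ≤
        C ^ 2 * Real.log (3 * M) / Real.log (Real.log (3 * M)) :=
  ⟨12, by norm_num, fun _ hM _ ↦ rank_EM_bound_general hM⟩
end
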